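/- arXiv:1902.04945 — 3 statements merged into one kernel-verified Lean document; each statement's English description precedes it below -/
import Mathlib

section
/- Let d ≥ 1 be an integer, σ1, σ2 ∈ ℝ, 0 < q_i ≤ ∞ and 0 < p_i ≤ u_i < ∞ for i = 1, 2. Assume that (p1/u1)(1/p1 − 1/p2) > max{0, 1/u1 − 1/u2} and (p1/u1)(1/p1 − 1/p2) < (σ1 − σ2)/d ≤ 1/p1 − 1/p2. Set α = (u1/(u1 − p1)) · ((σ1 − σ2)/d − (p1/u1)(1/p1 − 1/p2)). Then there exists c > 0 such that e_k(id : ñ^{σ1}_{u1,p1,q1}(Q) → ñ^{σ2}_{u2,p2,q2}(Q)) ≥ c · k^{−α} for all k ∈ ℕ, and for every ε > 0 there exists c_ε > 0 such that e_k(id : ñ^{σ1}_{u1,p1,q1}(Q) → ñ^{σ2}_{u2,p2,q2}(Q)) ≤ c_ε · k^{−α+ε} for all k ∈ ℕ. -/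
open scoped ENNReal NNReal

noncomputable section

/-- `Q_{j,m} ⊆ Q = [0,1)^d` iff `0 ≤ m i < 2^j` for every coordinate `i`. -/
def inUnitCube (d j : ℕ) (m : Fin d → ℤ) : Prop :=
  ∀ i, 0 ≤ m i ∧ m i < 2 ^ j

/-- For `ν ≤ j`: `Q_{j,m} ⊆ Q_{ν,k}`. -/
def cubeSub (d j ν : ℕ) (m k : Fin d → ℤ) : Prop :=
  ∀ i, k i * 2 ^ (j - ν) ≤ m i ∧ m i < (k i + 1) * 2 ^ (j - ν)

/-- The finite-dimensional Morrey quasi-norm `‖· | m^{2^{jd}}_{u,p}‖` (`ℝ≥0∞`-valued),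
on coefficients indexed by the `m ∈ ℤ^d` with `Q_{j,m} ⊆ Q` (other coordinates are ignored). -/
def mNorm (d : ℕ) (u p : ℝ) (j : ℕ) (lam : (Fin d → ℤ) → ℂ) : ℝ≥0∞ :=
  ⨆ νk : {νk : ℕ × (Fin d → ℤ) // νk.1 ≤ j ∧ inUnitCube d νk.1 νk.2},
    (2 : ℝ≥0∞) ^ ((d : ℝ) * ((j : ℝ) - (νk.1.1 : ℝ)) * (1 / u - 1 / p)) *
      (∑' m : {m : Fin d → ℤ // cubeSub d j νk.1.1 m νk.1.2},
        ((‖lam m.1‖₊ : ℝ≥0∞)) ^ p) ^ (1 / p)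

/-- The `ℓ_q^{2^{jd}}` quasi-norm (`0 < q < ∞`) on level-`j` coefficients. -/
def lqNorm (d : ℕ) (q : ℝ) (j : ℕ) (lam : (Fin d → ℤ) → ℂ) : ℝ≥0∞ :=
  (∑' m : {m : Fin d → ℤ // inUnitCube d j m}, ((‖lam m.1‖₊ : ℝ≥0∞)) ^ q) ^ (1 / q)

/-- The quasi-norm of the sequence space `ñ^σ_{u,p,q}(Q)`, `q ∈ (0,∞]`. -/
def nNorm (d : ℕ) (σ u p : ℝ) (q : ℝ≥0∞) (lam : ℕ → (Fin d → ℤ) → ℂ) : ℝ≥0∞ :=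
  if q = ∞ then
    ⨆ j : ℕ, (2 : ℝ≥0∞) ^ ((j : ℝ) * (σ - d / u)) * mNorm d u p j (lam j)
  else
    (∑' j : ℕ, ((2 : ℝ≥0∞) ^ ((j : ℝ) * (σ - d / u)) * mNorm d u p j (lam j)) ^ q.toReal) ^
      (1 / q.toReal)

/-- `k`-th entropy number of the identity map between two quasi-norms on one ambient group:
the infimum of all `ε > 0` such that the `N₁`-unit ball is covered by `2^(k-1)` `N₂`-balls of
radius `ε`. -/
def entropyNumber {Λ : Type*} [AddCommGroup Λ] (N₁ N₂ : Λ → ℝ≥0∞) (k : ℕ) : ℝ≥0∞ :=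
  sInf {ε : ℝ≥0∞ | 0 < ε ∧ ∃ c : Fin (2 ^ (k - 1)) → Λ,
    ∀ x : Λ, N₁ x ≤ 1 → ∃ i, N₂ (x - c i) ≤ ε}

/-- Operator quasi-norm of the identity map between two quasi-norms on one ambient space:
the smallest `C` with `N₂ x ≤ C · N₁ x` for all `x`. -/
def opNorm {Λ : Type*} (N₁ N₂ : Λ → ℝ≥0∞) : ℝ≥0∞ :=
  sInf {C : ℝ≥0∞ | ∀ x, N₂ x ≤ C * N₁ x}

end

namespace Morrey

lemma two_rpow_ne_zero (x : ℝ) : (2 : ℝ≥0∞) ^ x ≠ 0 := by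
  simp [ENNReal.rpow_eq_zero_iff]

lemma two_rpow_ne_top (x : ℝ) : (2 : ℝ≥0∞) ^ x ≠ ⊤ := by
  simp [ENNReal.rpow_eq_top_iff]

lemma two_rpow_mul (x y : ℝ) : (2 : ℝ≥0∞) ^ x * (2 : ℝ≥0∞) ^ y = (2 : ℝ≥0∞) ^ (x + y) := by
  rw [ENNReal.rpow_add _ _ (by norm_num) (by norm_num)]

lemma two_rpow_cancel (x : ℝ) : (2 : ℝ≥0∞) ^ (-x) * (2 : ℝ≥0∞) ^ x = 1 := by
  rw [two_rpow_mul]; simp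

lemma le_of_two_mul_le {x : ℝ} {a b : ℝ≥0∞} (h : (2 : ℝ≥0∞) ^ x * a ≤ b) :
    a ≤ (2 : ℝ≥0∞) ^ (-x) * b := by
  calc a = (2 : ℝ≥0∞) ^ (-x) * ((2 : ℝ≥0∞) ^ x * a) := by
        rw [← mul_assoc, two_rpow_cancel, one_mul]
    _ ≤ _ := by gcongr

lemma two_rpow_mono {x y : ℝ} (h : x ≤ y) : (2 : ℝ≥0∞) ^ x ≤ (2 : ℝ≥0∞) ^ y :=
  ENNReal.rpow_le_rpow_of_exponent_le (by norm_num) h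

lemma two_rpow_ofReal (x : ℝ) : (2 : ℝ≥0∞) ^ x = ENNReal.ofReal ((2 : ℝ) ^ x) := by
  rw [← ENNReal.ofReal_rpow_of_pos (by norm_num)]; simp

/-- bound over one cube -/
lemma cube_sum_le {d : ℕ} {u p : ℝ} (hp : 0 < p) {j : ℕ} {lam : (Fin d → ℤ) → ℂ} {A : ℝ≥0∞}
    (h : mNorm d u p j lam ≤ A) (ν : ℕ) (k : Fin d → ℤ) (hν : ν ≤ j) (hk : inUnitCube d ν k) :
    (∑' m : {m : Fin d → ℤ // cubeSub d j ν m k}, ((‖lam m.1‖₊ : ℝ≥0∞)) ^ p) ≤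
      A ^ p * (2 : ℝ≥0∞) ^ ((d : ℝ) * ((j : ℝ) - (ν : ℝ)) * (1 - p / u)) := by
  have h1 := (iSup_le_iff.1 h) ⟨(ν, k), hν, hk⟩
  have h2 := le_of_two_mul_le h1
  have h3 := ENNReal.rpow_le_rpow h2 hp.le
  rw [← ENNReal.rpow_mul, one_div_mul_cancel hp.ne', ENNReal.rpow_one,
    ENNReal.mul_rpow_of_nonneg _ _ hp.le, ← ENNReal.rpow_mul, mul_comm] at h3
  refine h3.trans (le_of_eq ?_)
  congr 2
  field_simp
  ring

lemma level_bound {d j : ℕ} {u1 p1 u2 p2 : ℝ} (hp1 : 0 < p1) (hp12 : p1 ≤ p2)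
    (hu : 0 ≤ 1 / u2 - p1 / (u1 * p2)) {lam r : (Fin d → ℤ) → ℂ} {A B : ℝ≥0∞}
    (h : mNorm d u1 p1 j lam ≤ A)
    (hr : ∀ m, inUnitCube d j m → ‖r m‖₊ ≤ ‖lam m‖₊ ∧ (‖r m‖₊ : ℝ≥0∞) ≤ B) :
    mNorm d u2 p2 j r ≤ B ^ ((p2 - p1) / p2) * A ^ (p1 / p2) *
      (2 : ℝ≥0∞) ^ ((d : ℝ) * j * (1 / u2 - p1 / (u1 * p2))) := by
  have hp2 : 0 < p2 := hp1.trans_le hp12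
  refine iSup_le ?_
  rintro ⟨⟨ν, k⟩, hν, hk⟩
  simp only at hν hk ⊢
  have h1 := cube_sum_le hp1 h ν k hν hk
  have h2 : (∑' m : {m : Fin d → ℤ // cubeSub d j ν m k}, ((‖r m.1‖₊ : ℝ≥0∞)) ^ p2) ≤
      B ^ (p2 - p1) * (A ^ p1 * (2 : ℝ≥0∞) ^ ((d : ℝ) * ((j : ℝ) - (ν : ℝ)) * (1 - p1 / u1))) := by
    refine le_trans ?_ (mul_le_mul_right h1 _)
    rw [← ENNReal.tsum_mul_left]
    refine ENNReal.tsum_le_tsum ?_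
    rintro ⟨m, hm⟩
    have hmc : inUnitCube d j m := by
      intro i
      have ⟨ha, hb⟩ := hm i
      have ⟨hc, hd⟩ := hk i
      have h2j : (2 : ℤ) ^ j = 2 ^ ν * 2 ^ (j - ν) := by rw [← pow_add]; congr 1; omega
      have hpos : (0 : ℤ) < 2 ^ (j - ν) := by positivity
      constructor
      · exact le_trans (by positivity) ha
      · refine lt_of_lt_of_le hb ?_
        rw [h2j]
        exact mul_le_mul_of_nonneg_right (by omega) hpos.le
    have ⟨hr1, hr2⟩ := hr m hmc
    have : p2 = (p2 - p1) + p1 := by ring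
    conv_lhs => rw [this]
    rw [ENNReal.rpow_add_of_nonneg _ _ (by linarith) hp1.le]
    have : (‖r m‖₊ : ℝ≥0∞) ≤ ‖lam m‖₊ := by exact_mod_cast hr1
    gcongr
  have h3 := ENNReal.rpow_le_rpow h2 (show 0 ≤ 1 / p2 by positivity)
  have hp2' : 0 ≤ 1 / p2 := by positivity
  calc _ ≤ (2 : ℝ≥0∞) ^ ((d : ℝ) * ((j : ℝ) - ν) * (1 / u2 - 1 / p2)) * _ :=
        mul_le_mul_right h3 _
    _ = B ^ ((p2 - p1) / p2) * A ^ (p1 / p2) *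
      (2 : ℝ≥0∞) ^ ((d : ℝ) * ((j : ℝ) - ν) * (1 / u2 - p1 / (u1 * p2))) := by
        rw [ENNReal.mul_rpow_of_nonneg _ _ hp2', ENNReal.mul_rpow_of_nonneg _ _ hp2',
          ← ENNReal.rpow_mul, ← ENNReal.rpow_mul, ← ENNReal.rpow_mul]
        have : (2 : ℝ≥0∞) ^ ((d : ℝ) * ((j : ℝ) - ν) * (1 / u2 - p1 / (u1 * p2))) =
          (2 : ℝ≥0∞) ^ ((d : ℝ) * ((j : ℝ) - ν) * (1 / u2 - 1 / p2)) *
          (2 : ℝ≥0∞) ^ ((d : ℝ) * ((j : ℝ) - (ν : ℝ)) * (1 - p1 / u1) * (1 / p2)) := by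
          rw [two_rpow_mul]; congr 1
          rw [show p1 / (u1 * p2) = p1 / u1 * (1 / p2) by rw [← div_div]; ring]
          ring
        rw [this, mul_one_div, mul_one_div]
        ring
    _ ≤ _ := by
        refine mul_le_mul_right (two_rpow_mono ?_) _
        refine mul_le_mul_of_nonneg_right ?_ hu
        refine mul_le_mul_of_nonneg_left ?_ (by positivity)
        have : (0 : ℝ) ≤ ν := by positivity
        linarith

lemma level_le_nNorm {d : ℕ} {σ u p : ℝ} {q : ℝ≥0∞} (hq : 0 < q) (lam : ℕ → (Fin d → ℤ) → ℂ)
    (j : ℕ) : (2 : ℝ≥0∞) ^ ((j : ℝ) * (σ - d / u)) * mNorm d u p j (lam j) ≤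
      nNorm d σ u p q lam := by
  unfold nNorm
  split_ifs with h
  · exact le_iSup (fun j : ℕ => (2 : ℝ≥0∞) ^ ((j : ℝ) * (σ - d / u)) * mNorm d u p j (lam j)) j
  · have hq' : 0 < q.toReal := ENNReal.toReal_pos hq.ne' h
    rw [one_div, ENNReal.le_rpow_inv_iff hq']
    exact ENNReal.le_tsum
      (f := fun j : ℕ => ((2 : ℝ≥0∞) ^ ((j : ℝ) * (σ - d / u)) * mNorm d u p j (lam j)) ^ q.toReal) j

lemma nNorm_le {d : ℕ} {δ : ℝ} (hδ : 0 < δ) {q : ℝ≥0∞} (hq : 0 < q) :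
    ∃ C : ℝ, 0 < C ∧ ∀ (σ u p : ℝ) (lam : ℕ → (Fin d → ℤ) → ℂ) (X : ℝ≥0∞),
      (∀ j : ℕ, (2 : ℝ≥0∞) ^ ((j : ℝ) * (σ - d / u)) * mNorm d u p j (lam j) ≤
        X * (2 : ℝ≥0∞) ^ (-(δ * j))) → nNorm d σ u p q lam ≤ ENNReal.ofReal C * X := by
  by_cases h : q = ⊤
  · refine ⟨1, one_pos, fun σ u p lam X hX => ?_⟩
    simp only [nNorm, h, if_true, ENNReal.ofReal_one, one_mul]
    refine iSup_le fun j => (hX j).trans ?_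
    have : (2 : ℝ≥0∞) ^ (-(δ * j)) ≤ 1 := by
      rw [← ENNReal.rpow_zero (x := 2)]
      exact two_rpow_mono (by have : 0 ≤ δ * j := by positivity
                              linarith)
    calc _ ≤ X * 1 := by gcongr
      _ = X := mul_one X
  · have hq' : 0 < q.toReal := ENNReal.toReal_pos hq.ne' h
    set s : ℝ := q.toReal
    have hgeo : ∀ j : ℕ, ((2 : ℝ≥0∞) ^ (-(δ * j))) ^ s = ((2 : ℝ≥0∞) ^ (-(δ * s))) ^ j := by
      intro j
      rw [← ENNReal.rpow_mul, ← ENNReal.rpow_natCast, ← ENNReal.rpow_mul]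
      congr 1; ring
    have hsum : (∑' j : ℕ, ((2 : ℝ≥0∞) ^ (-(δ * j))) ^ s) ≠ ⊤ := by
      simp_rw [hgeo, ENNReal.tsum_geometric]
      rw [ne_eq, ENNReal.inv_eq_top, tsub_eq_zero_iff_le, not_le]
      apply ENNReal.rpow_lt_one_of_one_lt_of_neg (by norm_num)
      have := mul_pos hδ hq'
      linarith
    set G := (∑' j : ℕ, ((2 : ℝ≥0∞) ^ (-(δ * j))) ^ s) ^ (1 / s) with hG
    have hGt : G ≠ ⊤ := ENNReal.rpow_ne_top_of_nonneg (by positivity) hsum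
    refine ⟨G.toReal + 1, by positivity, fun σ u p lam X hX => ?_⟩
    simp only [nNorm, h, if_false]
    have hGC : G ≤ ENNReal.ofReal (G.toReal + 1) := by
      rw [ENNReal.le_ofReal_iff_toReal_le hGt (by positivity)]; linarith
    calc _ ≤ (∑' j : ℕ, (X * (2 : ℝ≥0∞) ^ (-(δ * j))) ^ s) ^ (1 / s) := by
          refine ENNReal.rpow_le_rpow (ENNReal.tsum_le_tsum fun j => ?_) (by positivity)
          exact ENNReal.rpow_le_rpow (hX j) hq'.le
      _ = X * G := by
          simp_rw [ENNReal.mul_rpow_of_nonneg _ _ hq'.le, ENNReal.tsum_mul_left]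
          rw [ENNReal.mul_rpow_of_nonneg _ _ (by positivity), ← ENNReal.rpow_mul,
            mul_one_div_cancel hq'.ne', ENNReal.rpow_one]
      _ ≤ _ := by rw [mul_comm]; gcongr

end Morrey

namespace Morrey

/-! ### a Cantor type set -/

noncomputable def cset (θ : ℝ) : ℕ → Finset ℤ
  | 0 => {0}
  | (j + 1) => if ⌊θ * ((j + 1 : ℕ) : ℝ)⌋₊ = ⌊θ * (j : ℝ)⌋₊ then cset θ j
      else cset θ j ∪ (cset θ j).map (addRightEmbedding ((2 : ℤ) ^ j))

lemma cset_mem {θ : ℝ} : ∀ {j : ℕ} {x : ℤ}, x ∈ cset θ j → 0 ≤ x ∧ x < 2 ^ j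
  | 0, x, h => by simp [cset] at h; simp [h]
  | j + 1, x, h => by
    have h2 : (2 : ℤ) ^ (j + 1) = 2 * 2 ^ j := by ring
    have hpos : (0 : ℤ) < 2 ^ j := by positivity
    unfold cset at h
    split_ifs at h
    · have := cset_mem h; omega
    · rw [Finset.mem_union, Finset.mem_map] at h
      rcases h with h | ⟨y, hy, rfl⟩
      · have := cset_mem h; omega
      · have := cset_mem hy
        simp only [addRightEmbedding_apply]; omega

lemma cset_card {θ : ℝ} (h0 : 0 ≤ θ) (h1 : θ ≤ 1) : ∀ j : ℕ,
    (cset θ j).card = 2 ^ ⌊θ * (j : ℝ)⌋₊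
  | 0 => by simp [cset]
  | j + 1 => by
    unfold cset
    have ih := cset_card h0 h1 j
    split_ifs with h
    · rw [ih, h]
    · rw [Finset.card_union_of_disjoint, Finset.card_map, ih]
      · have hle : ⌊θ * (j : ℝ)⌋₊ ≤ ⌊θ * ((j + 1 : ℕ) : ℝ)⌋₊ :=
          Nat.floor_mono (by push_cast; nlinarith)
        have hle2 : ⌊θ * ((j + 1 : ℕ) : ℝ)⌋₊ ≤ ⌊θ * (j : ℝ)⌋₊ + 1 := by
          rw [← Nat.floor_add_one (by positivity)]
          exact Nat.floor_mono (by push_cast; nlinarith)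
        have : ⌊θ * ((j + 1 : ℕ) : ℝ)⌋₊ = ⌊θ * (j : ℝ)⌋₊ + 1 := by omega
        rw [this]; ring
      · rw [Finset.disjoint_left]
        intro x hx hx'
        rw [Finset.mem_map] at hx'
        obtain ⟨y, hy, rfl⟩ := hx'
        have := cset_mem hx
        have := cset_mem hy
        simp only [addRightEmbedding_apply] at *
        omega

lemma cset_interval {θ : ℝ} (h0 : 0 ≤ θ) (h1 : θ ≤ 1) (l n : ℕ) : ∀ k : ℤ,
    ((cset θ (l + n)).filter (fun x => k * 2 ^ l ≤ x ∧ x < (k + 1) * 2 ^ l)).card ≤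
      2 ^ ⌊θ * (l : ℝ)⌋₊ := by
  induction n with
  | zero =>
    intro k
    rw [← cset_card h0 h1 l]
    exact Finset.card_filter_le _ _
  | succ n ih =>
    intro k
    rw [← add_assoc]
    unfold cset
    split_ifs with h
    · exact ih k
    · rw [Finset.filter_union]
      have hl : (0 : ℤ) < 2 ^ l := by positivity
      have hn : (0 : ℤ) < 2 ^ n := by positivity
      have hln : (2 : ℤ) ^ (l + n) = 2 ^ n * 2 ^ l := by ring
      by_cases hk : k < 2 ^ n
      · have hle : (k + 1) * 2 ^ l ≤ (2 : ℤ) ^ (l + n) := by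
          rw [hln]; exact mul_le_mul_of_nonneg_right (by omega) hl.le
        rw [(Finset.filter_eq_empty_iff (s := Finset.map _ _)).2, Finset.union_empty]
        · exact ih k
        · intro x hx
          rw [Finset.mem_map] at hx
          obtain ⟨y, hy, rfl⟩ := hx
          have := cset_mem hy
          simp only [addRightEmbedding_apply]
          omega
      · push Not at hk
        have hle : (2 : ℤ) ^ (l + n) ≤ k * 2 ^ l := by
          rw [hln]; exact mul_le_mul_of_nonneg_right hk hl.le
        rw [(Finset.filter_eq_empty_iff (s := cset θ (l + n))).2, Finset.empty_union,
          Finset.filter_map, Finset.card_map]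
        · refine le_trans (Finset.card_le_card ?_) (ih (k - 2 ^ n))
          intro x hx
          rw [Finset.mem_filter] at hx ⊢
          refine ⟨hx.1, ?_⟩
          have h2 := hx.2
          simp only [Function.comp, addRightEmbedding_apply, hln] at h2
          constructor <;> nlinarith
        · intro x hx
          have := cset_mem hx
          omega

lemma hamming_cover {β : Type*} [DecidableEq β] (S : Finset β) {K : ℕ} (c : Fin K → Finset β)
    (hc : ∀ i, c i ⊆ S)
    (h : ∀ b ⊆ S, ∃ i, ((symmDiff b (c i)).card : ℝ) ≤ (S.card : ℝ) / 16) :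
    (2 : ℝ) ^ S.card ≤ K * ((4 : ℝ) ^ ((S.card : ℝ) / 16) * (5 / 4) ^ S.card) := by
  have : Nonempty (Fin K) := let ⟨i, _⟩ := h ∅ (Finset.empty_subset _); ⟨i⟩
  choose! f hf using h
  have key : ∀ i, ((S.powerset.filter (fun b => f b = i)).card : ℝ) ≤
      (4 : ℝ) ^ ((S.card : ℝ) / 16) * (5 / 4) ^ S.card := by
    intro i
    set F := S.powerset.filter (fun b => f b = i)
    have hinj : ((F.image (fun b => symmDiff b (c i))).card) = F.card :=
      Finset.card_image_of_injective _ (symmDiff_left_injective (c i))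
    rw [← hinj]
    set G := F.image (fun b => symmDiff b (c i))
    have hG : ∀ t ∈ G, t ⊆ S ∧ (t.card : ℝ) ≤ (S.card : ℝ) / 16 := by
      intro t ht
      obtain ⟨b, hb, rfl⟩ := Finset.mem_image.1 ht
      obtain ⟨hb1, hb2⟩ := Finset.mem_filter.1 hb
      rw [Finset.mem_powerset] at hb1
      refine ⟨?_, hb2 ▸ hf b hb1⟩
      intro x hx
      rcases Finset.mem_symmDiff.1 hx with h | h
      · exact hb1 h.1
      · exact hc i h.1
    have h1 : ∑ t ∈ G, (1 : ℝ) ≤ ∑ t ∈ G, (4 : ℝ) ^ ((S.card : ℝ) / 16) * (1 / 4) ^ t.card := by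
      refine Finset.sum_le_sum fun t ht => ?_
      have : (4 : ℝ) ^ (t.card : ℝ) ≤ (4 : ℝ) ^ ((S.card : ℝ) / 16) :=
        Real.rpow_le_rpow_of_exponent_le (by norm_num) (hG t ht).2
      rw [Real.rpow_natCast] at this
      rw [one_div, inv_pow, ← div_eq_mul_inv, le_div_iff₀ (by positivity), one_mul]
      exact this
    have h2 : ∑ t ∈ G, ((1 : ℝ) / 4) ^ t.card ≤ (5 / 4) ^ S.card := by
      calc _ ≤ ∑ t ∈ S.powerset, ((1 : ℝ) / 4) ^ t.card :=
            Finset.sum_le_sum_of_subset_of_nonneg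
              (fun t ht => Finset.mem_powerset.2 (hG t ht).1) (fun _ _ _ => by positivity)
        _ = ∑ t ∈ S.powerset, ((1 : ℝ) / 4) ^ t.card * 1 ^ (S.card - t.card) := by simp
        _ = _ := by rw [Finset.sum_pow_mul_eq_add_pow]; norm_num
    rw [← Finset.mul_sum] at h1
    simp only [Finset.sum_const, nsmul_eq_mul, mul_one] at h1
    exact h1.trans (by gcongr)
  have hsum : S.powerset.card = ∑ i, (S.powerset.filter (fun b => f b = i)).card :=
    Finset.card_eq_sum_card_fiberwise (fun _ _ => Finset.mem_coe.2 (Finset.mem_univ _))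
  rw [Finset.card_powerset] at hsum
  have : (2 : ℝ) ^ S.card = ∑ i, ((S.powerset.filter (fun b => f b = i)).card : ℝ) := by
    exact_mod_cast hsum
  rw [this]
  refine (Finset.sum_le_sum fun i _ => key i).trans ?_
  simp

lemma no_cover (M k : ℕ) (hk : 0 < k) (hM : 2 * k ≤ M) :
    ¬ ((2 : ℝ) ^ M ≤ ((2 ^ (k - 1) : ℕ) : ℝ) * ((4 : ℝ) ^ ((M : ℝ) / 16) * (5 / 4) ^ M)) := by
  rw [not_le]
  have h4 : (4 : ℝ) ^ ((M : ℝ) / 16) = ((2 : ℝ) ^ ((1 : ℝ) / 8)) ^ M := by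
    rw [← Real.rpow_natCast, ← Real.rpow_mul (by norm_num), show (4 : ℝ) = 2 ^ (2 : ℝ) by norm_num,
      ← Real.rpow_mul (by norm_num)]
    congr 1; ring
  have h2 : ((2 ^ (k - 1) : ℕ) : ℝ) ≤ ((2 : ℝ) ^ ((1 : ℝ) / 2)) ^ M := by
    push_cast
    rw [← Real.rpow_natCast, ← Real.rpow_natCast, ← Real.rpow_mul (by norm_num)]
    refine Real.rpow_le_rpow_of_exponent_le (by norm_num) ?_
    have : ((k - 1 : ℕ) : ℝ) ≤ k := by exact_mod_cast Nat.sub_le _ _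
    have : (2 : ℝ) * k ≤ M := by exact_mod_cast hM
    linarith
  have h5 : (2 : ℝ) ^ ((1 : ℝ) / 2) * ((2 : ℝ) ^ ((1 : ℝ) / 8) * (5 / 4)) < 2 := by
    rw [← mul_assoc, ← Real.rpow_add (by norm_num)]
    have : (2 : ℝ) ^ ((1 : ℝ) / 2 + 1 / 8) < 8 / 5 := by
      refine lt_of_pow_lt_pow_left₀ 8 (by norm_num) ?_
      rw [← Real.rpow_natCast, ← Real.rpow_mul (by norm_num)]
      norm_num
    linarith
  calc _ ≤ ((2 : ℝ) ^ ((1 : ℝ) / 2)) ^ M * (((2 : ℝ) ^ ((1 : ℝ) / 8)) ^ M * (5 / 4) ^ M) := by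
        rw [h4]; gcongr
    _ = ((2 : ℝ) ^ ((1 : ℝ) / 2) * ((2 : ℝ) ^ ((1 : ℝ) / 8) * (5 / 4))) ^ M := by
        rw [mul_pow, mul_pow]
    _ < 2 ^ M := pow_lt_pow_left₀ h5 (by positivity) (by omega)

end Morrey

namespace Morrey

lemma coe_nnnorm_eq (z : ℂ) : (‖z‖₊ : ℝ≥0∞) = ENNReal.ofReal ‖z‖ := by
  rw [ofReal_norm, enorm_eq_nnnorm]

lemma nnnorm_two_rpow (x : ℝ) : (‖(((2 : ℝ) ^ x : ℝ) : ℂ)‖₊ : ℝ≥0∞) = (2 : ℝ≥0∞) ^ x := by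
  rw [coe_nnnorm_eq, two_rpow_ofReal, Complex.norm_real, Real.norm_of_nonneg (by positivity)]

lemma mNorm_zero {d : ℕ} {u p : ℝ} (hp : 0 < p) (j : ℕ) :
    mNorm d u p j 0 = 0 := by
  simp [mNorm, hp]

lemma nNorm_single {d : ℕ} {σ u p : ℝ} {q : ℝ≥0∞} (hq : 0 < q) (hp : 0 < p)
    (lam : ℕ → (Fin d → ℤ) → ℂ) (j : ℕ) (h : ∀ i, i ≠ j → lam i = 0) :
    nNorm d σ u p q lam ≤ (2 : ℝ≥0∞) ^ ((j : ℝ) * (σ - d / u)) * mNorm d u p j (lam j) := by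
  unfold nNorm
  split_ifs with hq'
  · refine iSup_le fun i => ?_
    by_cases hi : i = j
    · rw [hi]
    · rw [h i hi, mNorm_zero hp, mul_zero]; exact zero_le
  · have hq0 : 0 < q.toReal := ENNReal.toReal_pos hq.ne' hq'
    rw [tsum_eq_single j, ← ENNReal.rpow_mul, mul_one_div_cancel hq0.ne', ENNReal.rpow_one]
    intro i hi
    rw [h i hi, mNorm_zero hp, mul_zero, ENNReal.zero_rpow_of_pos hq0]

lemma piset_card {d : ℕ} {θ : ℝ} (h0 : 0 ≤ θ) (h1 : θ ≤ 1) (j : ℕ) :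
    (Fintype.piFinset (fun _ : Fin d => cset θ j)).card = (2 ^ ⌊θ * (j : ℝ)⌋₊) ^ d := by
  rw [Fintype.card_piFinset]; simp [cset_card h0 h1]

open scoped Classical in
lemma piset_cube {d : ℕ} {θ : ℝ} (h0 : 0 ≤ θ) (h1 : θ ≤ 1) (j ν : ℕ) (hν : ν ≤ j)
    (k : Fin d → ℤ) :
    ((Fintype.piFinset (fun _ : Fin d => cset θ j)).filter
      (fun m => cubeSub d j ν m k)).card ≤ (2 ^ ⌊θ * ((j - ν : ℕ) : ℝ)⌋₊) ^ d := by
  have hsub : (Fintype.piFinset (fun _ : Fin d => cset θ j)).filter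
      (fun m => cubeSub d j ν m k) ⊆ Fintype.piFinset (fun i : Fin d =>
        (cset θ j).filter (fun x => k i * 2 ^ (j - ν) ≤ x ∧ x < (k i + 1) * 2 ^ (j - ν))) := by
    intro m hm
    rw [Finset.mem_filter, Fintype.mem_piFinset] at hm
    rw [Fintype.mem_piFinset]
    intro i
    exact Finset.mem_filter.2 ⟨hm.1 i, hm.2 i⟩
  refine (Finset.card_le_card hsub).trans ?_
  rw [Fintype.card_piFinset]
  calc _ ≤ ∏ _i : Fin d, 2 ^ ⌊θ * ((j - ν : ℕ) : ℝ)⌋₊ := by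
        refine Finset.prod_le_prod' fun i _ => ?_
        have := cset_interval h0 h1 (j - ν) ν (k i)
        rwa [Nat.sub_add_cancel hν] at this
    _ = _ := by simp

open scoped Classical in
lemma xb_norm {d : ℕ} {σ u p : ℝ} {q : ℝ≥0∞} (hq : 0 < q) (hp : 0 < p) (hpu : p ≤ u) (j : ℕ)
    (b : Finset (Fin d → ℤ))
    (hb : b ⊆ Fintype.piFinset (fun _ : Fin d => cset (1 - p / u) j)) :
    nNorm d σ u p q (fun i m => if i = j ∧ m ∈ b then
      (((2 : ℝ) ^ (-((j : ℝ) * (σ - d / u))) : ℝ) : ℂ) else 0) ≤ 1 := by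
  have hu : 0 < u := hp.trans_le hpu
  have h0 : 0 ≤ 1 - p / u := by
    have : p / u ≤ 1 := by rw [div_le_one hu]; exact hpu
    linarith
  have h1 : 1 - p / u ≤ 1 := by
    have : 0 ≤ p / u := by positivity
    linarith
  refine (nNorm_single hq hp _ j ?_).trans ?_
  · intro i hi; funext m; simp [hi]
  set w := (j : ℝ) * (σ - d / u) with hw
  suffices h : mNorm d u p j (fun m => if j = j ∧ m ∈ b then
      (((2 : ℝ) ^ (-w) : ℝ) : ℂ) else 0) ≤ (2 : ℝ≥0∞) ^ (-w) by
    refine (mul_le_mul_right h _).trans ?_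
    rw [two_rpow_mul]; simp
  refine iSup_le ?_
  rintro ⟨⟨ν, k⟩, hν, hk⟩
  simp only [true_and] at hν hk ⊢
  set F := (Fintype.piFinset (fun _ : Fin d => cset (1 - p / u) j)).filter
      (fun m => cubeSub d j ν m k) with hF
  have hcard := piset_cube h0 h1 j ν hν k
  rw [← hF] at hcard
  have hcard' : (F.card : ℝ≥0∞) ≤ (2 : ℝ≥0∞) ^ ((d : ℝ) * (j - ν) * (1 - p / u)) := by
    calc (F.card : ℝ≥0∞) ≤ ((2 ^ ⌊(1 - p / u) * ((j - ν : ℕ) : ℝ)⌋₊) ^ d : ℕ) := by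
          exact_mod_cast hcard
      _ = (2 : ℝ≥0∞) ^ ((⌊(1 - p / u) * ((j - ν : ℕ) : ℝ)⌋₊ : ℝ) * d) := by
          push_cast
          rw [ENNReal.rpow_mul, ENNReal.rpow_natCast, ENNReal.rpow_natCast]
      _ ≤ _ := by
          refine two_rpow_mono ?_
          have := Nat.floor_le (show 0 ≤ (1 - p / u) * ((j - ν : ℕ) : ℝ) by positivity)
          rw [Nat.cast_sub hν] at this
          rw [Nat.cast_sub hν]
          calc _ ≤ (1 - p / u) * ((j : ℝ) - ν) * d := by gcongr
            _ = _ := by ring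
  have hsum : (∑' m : {m : Fin d → ℤ // cubeSub d j ν m k},
      ((‖(if m.1 ∈ b then (((2 : ℝ) ^ (-w) : ℝ) : ℂ) else 0)‖₊ : ℝ≥0∞)) ^ p) ≤
      (2 : ℝ≥0∞) ^ ((d : ℝ) * (j - ν) * (1 - p / u)) * ((2 : ℝ≥0∞) ^ (-w)) ^ p := by
    have e1 := tsum_subtype {m : Fin d → ℤ | cubeSub d j ν m k} (fun m =>
      ((‖(if m ∈ b then (((2 : ℝ) ^ (-w) : ℝ) : ℂ) else 0)‖₊ : ℝ≥0∞)) ^ p)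
    refine (le_of_eq e1).trans ?_
    rw [tsum_eq_sum (s := F)]
    · calc _ ≤ ∑ m ∈ F, ((2 : ℝ≥0∞) ^ (-w)) ^ p := by
            refine Finset.sum_le_sum fun m _ => ?_
            refine (Set.indicator_le_self' (fun _ _ => zero_le) m).trans ?_
            split_ifs
            · rw [nnnorm_two_rpow]
            · simp [hp]
        _ = F.card * ((2 : ℝ≥0∞) ^ (-w)) ^ p := by simp
        _ ≤ _ := by gcongr
    · intro m hm
      by_cases hc : cubeSub d j ν m k
      · have : m ∉ b := fun h => hm (Finset.mem_filter.2 ⟨hb h, hc⟩)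
        simp [this, hp]
      · exact Set.indicator_of_notMem hc _
  refine (mul_le_mul_right (ENNReal.rpow_le_rpow hsum (by positivity)) _).trans (le_of_eq ?_)
  rw [← ENNReal.rpow_mul, two_rpow_mul, ← ENNReal.rpow_mul, two_rpow_mul]
  congr 1
  field_simp
  ring

open scoped Classical in
lemma lower_level {d : ℕ} {σ1 σ2 u1 p1 u2 p2 : ℝ} {q1 q2 : ℝ≥0∞}
    (hq1 : 0 < q1) (hq2 : 0 < q2) (hp1 : 0 < p1) (hp1u1 : p1 ≤ u1) (hp2 : 0 < p2)
    (j k M : ℕ) (hk : 0 < k) (hM : M = (2 ^ ⌊(1 - p1 / u1) * (j : ℝ)⌋₊) ^ d) (hkM : 2 * k ≤ M) :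
    (2 : ℝ≥0∞) ^ ((j : ℝ) * (σ2 - d / p2) - (j : ℝ) * (σ1 - d / u1) - 1) *
      (ENNReal.ofReal ((M : ℝ) / 16)) ^ (1 / p2) ≤
    entropyNumber (nNorm d σ1 u1 p1 q1) (nNorm d σ2 u2 p2 q2) k := by
  have hu : 0 < u1 := hp1.trans_le hp1u1
  have h0 : 0 ≤ 1 - p1 / u1 := by
    have : p1 / u1 ≤ 1 := by rw [div_le_one hu]; exact hp1u1
    linarith
  have h1 : 1 - p1 / u1 ≤ 1 := by
    have : 0 ≤ p1 / u1 := by positivity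
    linarith
  set S := Fintype.piFinset (fun _ : Fin d => cset (1 - p1 / u1) j) with hS
  have hSM : S.card = M := by rw [hM]; exact piset_card h0 h1 j
  refine le_sInf ?_
  rintro ε ⟨hε, c, hc⟩
  by_contra! hlt
  set w := (j : ℝ) * (σ1 - d / u1) with hw
  set a : ℂ := (((2 : ℝ) ^ (-w) : ℝ) : ℂ) with ha
  have hcov := hamming_cover S
    (fun i => S.filter (fun m => ‖a - c i j m‖ < ‖a‖ / 2)) (fun i => Finset.filter_subset _ _) ?_
  · rw [hSM] at hcov
    exact no_cover M k hk hkM hcov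
  intro b hb
  obtain ⟨i, hi⟩ := hc _ (xb_norm (σ := σ1) hq1 hp1 hp1u1 j b hb)
  refine ⟨i, ?_⟩
  set T := symmDiff b (S.filter (fun m => ‖a - c i j m‖ < ‖a‖ / 2)) with hT
  have hTS : T ⊆ S := by
    intro m hm
    rcases Finset.mem_symmDiff.1 hm with h | h
    · exact hb h.1
    · exact (Finset.mem_filter.1 h.1).1
  have hval : ∀ m ∈ T, (2 : ℝ≥0∞) ^ (-w - 1) ≤ (‖(if j = j ∧ m ∈ b then a else 0) - c i j m‖₊ : ℝ≥0∞) := by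
    intro m hm
    have hreal : ‖a‖ / 2 ≤ ‖(if j = j ∧ m ∈ b then a else 0) - c i j m‖ := by
      rcases Finset.mem_symmDiff.1 hm with h | h
      · have h2 := h.2
        rw [Finset.mem_filter] at h2
        push Not at h2
        simpa [h.1] using h2 (hb h.1)
      · have h2 := (Finset.mem_filter.1 h.1).2
        simp only [h.2, and_false, if_false, zero_sub, norm_neg]
        have := norm_sub_norm_le a (c i j m)
        linarith
    rw [coe_nnnorm_eq]
    refine le_trans (le_of_eq ?_) (ENNReal.ofReal_le_ofReal hreal)
    rw [two_rpow_ofReal, ha, Complex.norm_real, Real.norm_of_nonneg (by positivity),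
      Real.rpow_sub_one (by norm_num)]
  have hlev := (level_le_nNorm hq2 _ j).trans hi
  have hm0 : (2 : ℝ≥0∞) ^ ((d : ℝ) * j * (1 / u2 - 1 / p2)) *
      ((T.card : ℝ≥0∞) * ((2 : ℝ≥0∞) ^ (-w - 1)) ^ p2) ^ (1 / p2) ≤
      mNorm d u2 p2 j (((fun i m => if i = j ∧ m ∈ b then a else 0) - c i) j) := by
    have hcube0 : inUnitCube d 0 0 := fun i => by simp
    refine le_trans ?_ (le_iSup _ ⟨(0, 0), Nat.zero_le j, hcube0⟩)
    simp only [Nat.cast_zero, sub_zero]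
    refine mul_le_mul_right (ENNReal.rpow_le_rpow ?_ (by positivity)) _
    have e1 := tsum_subtype {m : Fin d → ℤ | cubeSub d j 0 m 0} (fun m =>
      ((‖((fun i m => if i = j ∧ m ∈ b then a else 0) - c i) j m‖₊ : ℝ≥0∞)) ^ p2)
    refine le_trans ?_ (le_of_eq e1.symm)
    refine le_trans ?_ (ENNReal.sum_le_tsum T)
    calc _ = ∑ m ∈ T, ((2 : ℝ≥0∞) ^ (-w - 1)) ^ p2 := by simp
      _ ≤ _ := by
        refine Finset.sum_le_sum fun m hm => ?_
        rw [Set.indicator_of_mem]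
        · exact ENNReal.rpow_le_rpow (hval m hm) hp2.le
        · intro i
          have := cset_mem (Fintype.mem_piFinset.1 (hTS hm) i)
          simpa using this
  have hfin := ((mul_le_mul_right hm0 ((2 : ℝ≥0∞) ^ ((j : ℝ) * (σ2 - d / u2)))).trans hlev).trans hlt.le
  rw [ENNReal.mul_rpow_of_nonneg _ _ (by positivity), ← ENNReal.rpow_mul, mul_one_div_cancel hp2.ne',
    ENNReal.rpow_one] at hfin
  have e2 : (2 : ℝ≥0∞) ^ ((j : ℝ) * (σ2 - d / u2)) * ((2 : ℝ≥0∞) ^ ((d : ℝ) * j * (1 / u2 - 1 / p2)) *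
      ((T.card : ℝ≥0∞) ^ (1 / p2) * (2 : ℝ≥0∞) ^ (-w - 1))) =
      (2 : ℝ≥0∞) ^ ((j : ℝ) * (σ2 - d / p2) - w - 1) * (T.card : ℝ≥0∞) ^ (1 / p2) := by
    have : (2 : ℝ≥0∞) ^ ((j : ℝ) * (σ2 - d / p2) - w - 1) = (2 : ℝ≥0∞) ^ ((j : ℝ) * (σ2 - d / u2)) *
      (2 : ℝ≥0∞) ^ ((d : ℝ) * j * (1 / u2 - 1 / p2)) * (2 : ℝ≥0∞) ^ (-w - 1) := by
      rw [two_rpow_mul, two_rpow_mul]; congr 1; ring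
    rw [this]; ring
  rw [e2] at hfin
  have h5 := le_of_two_mul_le hfin
  rw [← mul_assoc, two_rpow_cancel, one_mul] at h5
  rw [ENNReal.rpow_le_rpow_iff (by positivity)] at h5
  rw [hSM]
  rw [← ENNReal.ofReal_natCast, ENNReal.ofReal_le_ofReal_iff (by positivity)] at h5
  exact h5

end Morrey

namespace Morrey

lemma lower_final {d : ℕ} (hd : 1 ≤ d) {σ1 σ2 u1 p1 u2 p2 : ℝ} {q1 q2 : ℝ≥0∞}
    (hq1 : 0 < q1) (hq2 : 0 < q2) (hp1 : 0 < p1) (hp1u1 : p1 < u1) (hp2 : 0 < p2)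
    (α : ℝ) (hα0 : 0 ≤ α)
    (hα : d * (1 - p1 / u1) * α = σ1 - σ2 + d / p2 - d / u1 - d * (1 - p1 / u1) / p2) :
    ∃ c : ℝ, 0 < c ∧ ∀ k : ℕ, 0 < k →
      ENNReal.ofReal (c * (k : ℝ) ^ (-α)) ≤
        entropyNumber (nNorm d σ1 u1 p1 q1) (nNorm d σ2 u2 p2 q2) k := by
  have hu : 0 < u1 := hp1.trans hp1u1
  set θ := 1 - p1 / u1 with hθ
  have h0 : 0 < θ := by
    have : p1 / u1 < 1 := by rw [div_lt_one hu]; exact hp1u1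
    linarith
  have hd0 : (0 : ℝ) < d := by exact_mod_cast hd
  have hdθ : 0 < d * θ := by positivity
  refine ⟨2 ^ (-1 - (d + 4) / p2 - α * (d * θ + d + 1)), by positivity, fun k hk => ?_⟩
  have hk0 : (0 : ℝ) < k := by exact_mod_cast hk
  set L := Real.logb 2 k with hL
  have hL0 : 0 ≤ L := Real.logb_nonneg (by norm_num) (by exact_mod_cast hk)
  have hkL : (k : ℝ) = 2 ^ L := (Real.rpow_logb (by norm_num) (by norm_num) hk0).symm
  set j := ⌈(L + d + 1) / (d * θ)⌉₊ with hj
  have hj1 : L + d + 1 ≤ j * (d * θ) := by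
    rw [← div_le_iff₀ hdθ]; exact Nat.le_ceil _
  have hj2 : j * (d * θ) ≤ L + d + 1 + d * θ := by
    have := (Nat.ceil_lt_add_one (show 0 ≤ (L + d + 1) / (d * θ) by positivity)).le
    rw [← hj] at this
    calc _ ≤ ((L + d + 1) / (d * θ) + 1) * (d * θ) := by gcongr
      _ = _ := by field_simp
  set M := (2 ^ ⌊θ * (j : ℝ)⌋₊) ^ d with hM
  have hM1 : (2 : ℝ) ^ (j * (d * θ) - d) ≤ (M : ℝ) := by
    rw [hM]; push_cast
    rw [← pow_mul, ← Real.rpow_natCast]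
    refine Real.rpow_le_rpow_of_exponent_le (by norm_num) ?_
    push_cast
    have := (Nat.lt_floor_add_one (θ * (j : ℝ))).le
    calc (j : ℝ) * (d * θ) - d = (θ * j - 1) * d := by ring
      _ ≤ _ := by gcongr; linarith
  have hkM : 2 * k ≤ M := by
    have : (2 : ℝ) * k ≤ M := by
      refine le_trans ?_ hM1
      rw [hkL]
      calc (2 : ℝ) * 2 ^ L = 2 ^ (L + 1) := by rw [Real.rpow_add_one (by norm_num)]; ring
        _ ≤ _ := Real.rpow_le_rpow_of_exponent_le (by norm_num) (by linarith)
    exact_mod_cast this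
  refine le_trans ?_ (lower_level hq1 hq2 hp1 hp1u1.le hp2 j k M hk hM hkM)
  rw [two_rpow_ofReal, ENNReal.ofReal_rpow_of_nonneg (by positivity) (by positivity),
    ← ENNReal.ofReal_mul (by positivity)]
  refine ENNReal.ofReal_le_ofReal ?_
  have h16 : (2 : ℝ) ^ ((j * (d * θ) - d - 4) / p2) ≤ ((M : ℝ) / 16) ^ (1 / p2) := by
    have : (2 : ℝ) ^ (j * (d * θ) - d - 4) ≤ (M : ℝ) / 16 := by
      rw [Real.rpow_sub (by norm_num) _ 4]
      norm_num
      linarith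
    calc _ = ((2 : ℝ) ^ (j * (d * θ) - d - 4)) ^ (1 / p2) := by
          rw [← Real.rpow_mul (by norm_num)]; congr 1; ring
      _ ≤ _ := by gcongr
  refine le_trans ?_ (mul_le_mul_of_nonneg_left h16 (by positivity))
  rw [hkL, ← Real.rpow_mul (by norm_num), ← Real.rpow_add (by norm_num),
    ← Real.rpow_add (by norm_num)]
  refine Real.rpow_le_rpow_of_exponent_le (by norm_num) ?_
  have h7 : (j : ℝ) * (d * θ * α) = j * (σ1 - σ2 + d / p2 - d / u1 - d * θ / p2) := by rw [hα]
  have h8 : α * (j * (d * θ)) ≤ α * (L + d + 1 + d * θ) := by gcongr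
  have h9 : (j * (d * θ) - d - 4) / p2 = j * (d * θ / p2) - (d + 4) / p2 := by ring
  rw [h9]
  nlinarith

lemma exists_cover_fun {β : Type*} [Nonempty β] (S : Finset β) (n : ℕ) (h : S.card ≤ n) :
    ∃ f : Fin n → β, ∀ s ∈ S, ∃ i, f i = s := by
  classical
  refine ⟨fun i => if hi : i.1 < S.card then (S.equivFin.symm ⟨i, hi⟩ : β)
    else Classical.arbitrary β, fun s hs => ?_⟩
  have hlt := (S.equivFin ⟨s, hs⟩).2
  refine ⟨⟨(S.equivFin ⟨s, hs⟩).1, hlt.trans_le h⟩, ?_⟩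
  simp

/-- truncation towards zero -/
noncomputable def trunc (x t : ℝ) : ℤ := if 0 ≤ x then ⌊x / t⌋ else ⌈x / t⌉

lemma trunc_spec (x : ℝ) {t : ℝ} (ht : 0 < t) :
    |x - t * trunc x t| ≤ |x| ∧ |x - t * trunc x t| ≤ t ∧ t * |(trunc x t : ℝ)| ≤ |x| := by
  unfold trunc
  have hx : x = t * (x / t) := by field_simp
  split_ifs with h
  · have h1 := Int.floor_le (x / t)
    have h2 := Int.lt_floor_add_one (x / t)
    have h3 : (0 : ℝ) ≤ ⌊x / t⌋ := by exact_mod_cast Int.floor_nonneg.2 (by positivity)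
    have h4 : t * ⌊x / t⌋ ≤ x := by
      calc _ ≤ t * (x / t) := by gcongr
        _ = x := hx.symm
    have h5 : x ≤ t * ⌊x / t⌋ + t := by
      calc x = t * (x / t) := hx
        _ ≤ t * (⌊x / t⌋ + 1) := by gcongr
        _ = _ := by ring
    have h6 : 0 ≤ t * (⌊x / t⌋ : ℝ) := by positivity
    rw [abs_of_nonneg h, abs_of_nonneg h3, abs_of_nonneg (by linarith)]
    refine ⟨by linarith, by linarith, h4⟩
  · push Not at h
    have h1 := Int.le_ceil (x / t)
    have h2 := Int.ceil_lt_add_one (x / t)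
    have h3 : (⌈x / t⌉ : ℝ) ≤ 0 := by
      have : ⌈x / t⌉ ≤ 0 := Int.ceil_le.2 (by simpa using (div_neg_of_neg_of_pos h ht).le)
      exact_mod_cast this
    have h4 : x ≤ t * ⌈x / t⌉ := by
      calc x = t * (x / t) := hx
        _ ≤ _ := by gcongr
    have h5 : t * ⌈x / t⌉ ≤ x + t := by
      calc _ ≤ t * (x / t + 1) := by gcongr
        _ = _ := by rw [mul_add, ← hx, mul_one]
    have h6 : t * (⌈x / t⌉ : ℝ) ≤ 0 := mul_nonpos_of_nonneg_of_nonpos ht.le h3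
    rw [abs_of_neg h, abs_of_nonpos h3, abs_of_nonpos (by linarith)]
    refine ⟨by linarith, by linarith, by linarith⟩

noncomputable def gval (t : ℝ) (a b : ℤ) : ℂ := ⟨t * a, t * b⟩

noncomputable def rnd (z : ℂ) (t : ℝ) : ℂ := gval t (trunc z.re t) (trunc z.im t)

lemma rnd_err_norm (z : ℂ) {t : ℝ} (ht : 0 < t) : ‖z - rnd z t‖ ≤ ‖z‖ := by
  have h1 := (trunc_spec z.re ht).1
  have h2 := (trunc_spec z.im ht).1
  rw [Complex.norm_def, Complex.norm_def]
  apply Real.sqrt_le_sqrt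
  simp only [Complex.normSq_apply, rnd, gval, Complex.sub_re, Complex.sub_im]
  have h1' := mul_self_le_mul_self (abs_nonneg _) h1
  have h2' := mul_self_le_mul_self (abs_nonneg _) h2
  rw [abs_mul_abs_self, abs_mul_abs_self] at h1' h2'
  linarith

lemma rnd_err_t (z : ℂ) {t : ℝ} (ht : 0 < t) : ‖z - rnd z t‖ ≤ 2 * t := by
  have h1 := (trunc_spec z.re ht).2.1
  have h2 := (trunc_spec z.im ht).2.1
  refine (Complex.norm_le_abs_re_add_abs_im _).trans ?_
  simp only [rnd, gval, Complex.sub_re, Complex.sub_im]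
  linarith

lemma rnd_ne_zero {z : ℂ} {t : ℝ} (ht : 0 < t) (h : rnd z t ≠ 0) : t ≤ ‖z‖ := by
  by_contra! hlt
  apply h
  have key : ∀ x : ℝ, |x| ≤ ‖z‖ → trunc x t = 0 := by
    intro x hx
    have h1 := (trunc_spec x ht).2.2
    by_contra hne
    have h2 : (1 : ℝ) ≤ |(trunc x t : ℝ)| := by exact_mod_cast Int.one_le_abs hne
    nlinarith
  simp only [rnd, gval, key _ (Complex.abs_re_le_norm z), key _ (Complex.abs_im_le_norm z)]
  simp [Complex.ext_iff]

lemma trunc_abs_le {x t R : ℝ} (ht : 0 < t) (h : |x| ≤ t * R) : |(trunc x t : ℝ)| ≤ R := by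
  have := (trunc_spec x ht).2.2.trans h
  exact le_of_mul_le_mul_left this ht

lemma exists_fin_code {R : ℕ} {v : ℤ} (h : |(v : ℝ)| ≤ R) :
    ∃ f : Fin (2 * R + 1), ((f : ℕ) : ℤ) - R = v := by
  have h' : |v| ≤ (R : ℤ) := by exact_mod_cast h
  rw [abs_le] at h'
  refine ⟨⟨(v + R).toNat, by omega⟩, ?_⟩
  simp only
  omega

abbrev Code (d J n R : ℕ) : Type :=
  Fin J → Fin n → (Fin d → Fin (2 ^ J)) × (Fin (2 * R + 1) × Fin (2 * R + 1))

open scoped Classical in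
noncomputable def decode {d J n R : ℕ} (t : ℕ → ℝ) (e : Code d J n R) :
    ℕ → (Fin d → ℤ) → ℂ := fun j m =>
  if h : j < J then
    if h2 : ∃ i, (fun a => (((e ⟨j, h⟩ i).1 a : ℕ) : ℤ)) = m then
      gval (t j) (((e ⟨j, h⟩ h2.choose).2.1 : ℕ) - R) (((e ⟨j, h⟩ h2.choose).2.2 : ℕ) - R)
    else 0
  else 0

open scoped Classical in
lemma exists_code {d J n R : ℕ} (t : ℕ → ℝ) (ht : ∀ j, 0 < t j) (x : ℕ → (Fin d → ℤ) → ℂ)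
    (hR : ∀ j < J, ∀ m, inUnitCube d j m → ‖x j m‖ ≤ t j * R)
    (hn : ∀ j < J, (Finset.univ.filter (fun p : Fin d → Fin (2 ^ J) =>
      inUnitCube d j (fun a => ((p a : ℕ) : ℤ)) ∧
        rnd (x j (fun a => ((p a : ℕ) : ℤ))) (t j) ≠ 0)).card ≤ n) :
    ∃ e : Code d J n R, (∀ j < J, ∀ m, inUnitCube d j m → decode t e j m = rnd (x j m) (t j)) ∧
      ∀ j, J ≤ j → decode t e j = 0 := by
  have hval : ∀ (j : Fin J) (m : Fin d → ℤ), ∃ v : Fin (2 * R + 1) × Fin (2 * R + 1),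
      inUnitCube d j m → gval (t j) ((v.1 : ℕ) - R) ((v.2 : ℕ) - R) = rnd (x j m) (t j) := by
    intro j m
    by_cases hm : inUnitCube d j m
    · have hb := hR j j.2 m hm
      obtain ⟨f, hf⟩ := exists_fin_code
        (trunc_abs_le (ht j) ((Complex.abs_re_le_norm (x j m)).trans hb))
      obtain ⟨g, hg⟩ := exists_fin_code
        (trunc_abs_le (ht j) ((Complex.abs_im_le_norm (x j m)).trans hb))
      exact ⟨(f, g), fun _ => by simp only [hf, hg, rnd]⟩
    · exact ⟨(0, 0), fun h => absurd h hm⟩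
  choose V hV using hval
  have hpos : ∀ j : Fin J, ∃ f : Fin n → (Fin d → Fin (2 ^ J)), ∀ s ∈
      (Finset.univ.filter (fun p : Fin d → Fin (2 ^ J) =>
      inUnitCube d j (fun a => ((p a : ℕ) : ℤ)) ∧
        rnd (x j (fun a => ((p a : ℕ) : ℤ))) (t j) ≠ 0)), ∃ i, f i = s := by
    intro j
    have : Nonempty (Fin d → Fin (2 ^ J)) := ⟨fun _ => ⟨0, by positivity⟩⟩
    exact exists_cover_fun _ n (hn j j.2)
  choose f hf using hpos
  refine ⟨fun j i => (f j i, V j (fun a => ((f j i a : ℕ) : ℤ))), ?_, ?_⟩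
  · intro j hj m hm
    unfold decode
    rw [dif_pos hj]
    split_ifs with h2
    · have hc := h2.choose_spec
      simp only at hc ⊢
      rw [hc]
      exact hV ⟨j, hj⟩ m hm
    · by_contra hne
      apply h2
      have hpow : (2 : ℤ) ^ j ≤ 2 ^ J := pow_le_pow_right₀ (by norm_num) hj.le
      have hp : ∃ p : Fin d → Fin (2 ^ J), (fun a => ((p a : ℕ) : ℤ)) = m := by
        refine ⟨fun a => ⟨(m a).toNat, ?_⟩, ?_⟩
        · have h := hm a
          zify
          rw [Int.toNat_of_nonneg h.1]
          omega
        · funext a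
          simp only
          exact Int.toNat_of_nonneg (hm a).1
      obtain ⟨p, rfl⟩ := hp
      obtain ⟨i, hi⟩ := hf ⟨j, hj⟩ p (Finset.mem_filter.2 ⟨Finset.mem_univ _, hm, fun h => hne h.symm⟩)
      exact ⟨i, by simp only [hi]⟩
  · intro j hj
    funext m
    simp [decode, not_lt.2 hj]

end Morrey

namespace Morrey

lemma norm_le_of_mNorm {d : ℕ} {u p : ℝ} (hp : 0 < p) {j : ℕ} {lam : (Fin d → ℤ) → ℂ} {A : ℝ≥0∞}
    (h : mNorm d u p j lam ≤ A) (m : Fin d → ℤ) (hm : inUnitCube d j m) :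
    (‖lam m‖₊ : ℝ≥0∞) ≤ A := by
  have h1 := cube_sum_le hp h j m le_rfl hm
  have hmm : cubeSub d j j m m := by intro i; simp
  have h2 := (ENNReal.le_tsum (f := fun m' : {m' : Fin d → ℤ // cubeSub d j j m' m} =>
    ((‖lam m'.1‖₊ : ℝ≥0∞)) ^ p) ⟨m, hmm⟩).trans h1
  simp only [sub_self, mul_zero, zero_mul, ENNReal.rpow_zero, mul_one] at h2
  rwa [ENNReal.rpow_le_rpow_iff hp] at h2

open scoped Classical in
lemma count_le {d : ℕ} {u p : ℝ} (hp : 0 < p) {j J : ℕ} {lam : (Fin d → ℤ) → ℂ} {A : ℝ≥0∞}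
    (h : mNorm d u p j lam ≤ A) {t : ℝ} (ht : 0 < t) :
    ((Finset.univ.filter (fun q : Fin d → Fin (2 ^ J) =>
      inUnitCube d j (fun a => ((q a : ℕ) : ℤ)) ∧
        rnd (lam (fun a => ((q a : ℕ) : ℤ))) t ≠ 0)).card : ℝ≥0∞) * (ENNReal.ofReal t) ^ p ≤
      A ^ p * (2 : ℝ≥0∞) ^ ((d : ℝ) * j * (1 - p / u)) := by
  have hcube0 : inUnitCube d 0 0 := fun i => by simp
  have h1 := cube_sum_le hp h 0 0 (Nat.zero_le _) hcube0
  simp only [Nat.cast_zero, sub_zero] at h1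
  refine le_trans ?_ h1
  set F := Finset.univ.filter (fun q : Fin d → Fin (2 ^ J) =>
      inUnitCube d j (fun a => ((q a : ℕ) : ℤ)) ∧
        rnd (lam (fun a => ((q a : ℕ) : ℤ))) t ≠ 0) with hF
  have e1 := tsum_subtype {m : Fin d → ℤ | cubeSub d j 0 m 0} (fun m =>
      ((‖lam m‖₊ : ℝ≥0∞)) ^ p)
  refine le_trans ?_ (le_of_eq e1.symm)
  have hinj : Function.Injective (fun (q : Fin d → Fin (2 ^ J)) (a : Fin d) => ((q a : ℕ) : ℤ)) := by
    intro q q' hq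
    funext a
    have := congrFun hq a
    simp only [Nat.cast_inj] at this
    exact Fin.ext this
  refine le_trans ?_ (ENNReal.sum_le_tsum (F.map ⟨_, hinj⟩))
  rw [Finset.sum_map]
  calc _ = ∑ m ∈ F, (ENNReal.ofReal t) ^ p := by simp
    _ ≤ _ := by
      refine Finset.sum_le_sum fun q hq => ?_
      obtain ⟨-, hq1, hq2⟩ := Finset.mem_filter.1 hq
      simp only [Function.Embedding.coeFn_mk]
      rw [Set.indicator_of_mem]
      · refine ENNReal.rpow_le_rpow ?_ hp.le
        rw [coe_nnnorm_eq]
        exact ENNReal.ofReal_le_ofReal (rnd_ne_zero ht hq2)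
      · intro i
        simpa using hq1 i

lemma code_card (d J n R : ℕ) : Fintype.card (Code d J n R) =
    (((2 ^ J) ^ d * ((2 * R + 1) * (2 * R + 1))) ^ n) ^ J := by
  simp [Code]

lemma entropy_le_of_code {Λ C : Type*} [AddCommGroup Λ] [Fintype C] [Nonempty C]
    (N₁ N₂ : Λ → ℝ≥0∞) (k : ℕ) (hcard : Fintype.card C ≤ 2 ^ (k - 1)) (D : C → Λ) (ε : ℝ≥0∞)
    (hε : 0 < ε) (h : ∀ x, N₁ x ≤ 1 → ∃ e, N₂ (x - D e) ≤ ε) : entropyNumber N₁ N₂ k ≤ ε := by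
  refine sInf_le ⟨hε, ?_⟩
  obtain ⟨g⟩ : Nonempty (C ↪ Fin (2 ^ (k - 1))) :=
    Function.Embedding.nonempty_of_card_le (by simpa using hcard)
  refine ⟨fun i => D (Function.invFun g i), fun x hx => ?_⟩
  obtain ⟨e, he⟩ := h x hx
  exact ⟨g e, by simpa only [Function.leftInverse_invFun g.injective e] using he⟩

lemma upper_level {d : ℕ} {σ1 σ2 u1 p1 u2 p2 : ℝ} {q1 q2 : ℝ≥0∞}
    (hq1 : 0 < q1) (hp1 : 0 < p1) (hp1u1 : p1 ≤ u1) (hp12 : p1 ≤ p2)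
    (hu : 0 ≤ 1 / u2 - p1 / (u1 * p2)) (D δ : ℝ) (hδ : 0 < δ) (hδD : δ ≤ D)
    (hD : D = σ1 - σ2 - d / u1 + d * (p1 / (u1 * p2)))
    (hDE : D ≤ d * (1 - p1 / u1) * (1 / p1 - 1 / p2))
    (C : ℝ) (hC : 0 < C) (hCN : ∀ (σ u p : ℝ) (lam : ℕ → (Fin d → ℤ) → ℂ) (X : ℝ≥0∞),
      (∀ j : ℕ, (2 : ℝ≥0∞) ^ ((j : ℝ) * (σ - d / u)) * mNorm d u p j (lam j) ≤
        X * (2 : ℝ≥0∞) ^ (-(δ * j))) → nNorm d σ u p q2 lam ≤ ENNReal.ofReal C * X)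
    (B : ℕ) (hB : d * (1 - p1 / u1) / p1 ≤ B) (J k : ℕ)
    (hk : (J * d + 2 * (J * B + 2)) * ⌊(2 : ℝ) ^ (J * (d * (1 - p1 / u1)))⌋₊ * J ≤ k - 1) :
    entropyNumber (nNorm d σ1 u1 p1 q1) (nNorm d σ2 u2 p2 q2) k ≤
      ENNReal.ofReal C * (2 : ℝ≥0∞) ^ (1 - (D - δ) * J) := by
  classical
  have hu1 : 0 < u1 := hp1.trans_le hp1u1
  have hp2 : 0 < p2 := hp1.trans_le hp12
  set θ := 1 - p1 / u1 with hθ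
  have h0 : 0 ≤ θ := by
    have : p1 / u1 ≤ 1 := by rw [div_le_one hu1]; exact hp1u1
    linarith
  set n := ⌊(2 : ℝ) ^ (J * (d * θ))⌋₊ with hn
  set R := 2 ^ (J * B) with hR
  have hcard : Fintype.card (Code d J n R) ≤ 2 ^ (k - 1) := by
    rw [code_card]
    have hR1 : 2 * R + 1 ≤ 2 ^ (J * B + 2) := by
      have : 1 ≤ R := Nat.one_le_two_pow
      rw [pow_add, ← hR]; omega
    calc (((2 ^ J) ^ d * ((2 * R + 1) * (2 * R + 1))) ^ n) ^ J
        ≤ (((2 ^ J) ^ d * (2 ^ (J * B + 2) * 2 ^ (J * B + 2))) ^ n) ^ J := by gcongr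
      _ = 2 ^ ((J * d + 2 * (J * B + 2)) * n * J) := by
          rw [← pow_mul, ← pow_mul, ← pow_add, ← pow_add, ← pow_mul]
          congr 1; ring
      _ ≤ 2 ^ (k - 1) := Nat.pow_le_pow_right (by norm_num) hk
  have hne : Nonempty (Code d J n R) := ⟨fun _ _ => (fun _ => ⟨0, by positivity⟩, (0, 0))⟩
  set w : ℕ → ℝ := fun j => (j : ℝ) * (σ1 - d / u1) with hw
  set t : ℕ → ℝ := fun j => 2 ^ (-(w j) - ((J : ℝ) - j) * (d * θ / p1)) with ht
  have htpos : ∀ j, 0 < t j := fun j => by positivity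
  refine entropy_le_of_code _ _ k hcard (decode t) _ ?_ ?_
  · refine ENNReal.mul_pos ?_ (two_rpow_ne_zero _)
    simpa using hC
  intro x hx
  have hA : ∀ j, mNorm d u1 p1 j (x j) ≤ (2 : ℝ≥0∞) ^ (-(w j)) := by
    intro j
    have := le_of_two_mul_le ((level_le_nNorm hq1 x j).trans hx)
    rwa [mul_one] at this
  have hxn : ∀ j m, inUnitCube d j m → ‖x j m‖ ≤ 2 ^ (-(w j)) := by
    intro j m hm
    have := norm_le_of_mNorm hp1 (hA j) m hm
    rwa [coe_nnnorm_eq, two_rpow_ofReal, ENNReal.ofReal_le_ofReal_iff (by positivity)] at this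
  have hg1 : ∀ j < J, ∀ m, inUnitCube d j m → ‖x j m‖ ≤ t j * (R : ℕ) := by
    intro j hj m hm
    refine (hxn j m hm).trans ?_
    have hjJ : (j : ℝ) ≤ J := by exact_mod_cast hj.le
    have hj0 : (0 : ℝ) ≤ j := by positivity
    have e1 : ((J : ℝ) - j) * (d * θ / p1) ≤ J * B := by
      refine mul_le_mul (by linarith) hB (by positivity) (by positivity)
    rw [hR]; push_cast
    rw [← Real.rpow_natCast, ← Real.rpow_add (by norm_num)]
    refine Real.rpow_le_rpow_of_exponent_le (by norm_num) ?_
    push_cast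
    linarith
  have hg2 : ∀ j < J, (Finset.univ.filter (fun p : Fin d → Fin (2 ^ J) =>
      inUnitCube d j (fun a => ((p a : ℕ) : ℤ)) ∧
        rnd (x j (fun a => ((p a : ℕ) : ℤ))) (t j) ≠ 0)).card ≤ n := by
    intro j hj
    have h1 := count_le (J := J) hp1 (hA j) (htpos j)
    set N := (Finset.univ.filter (fun q : Fin d → Fin (2 ^ J) =>
      inUnitCube d j (fun a => ((q a : ℕ) : ℤ)) ∧
        rnd (x j (fun a => ((q a : ℕ) : ℤ))) (t j) ≠ 0)).card with hN
    rw [← two_rpow_ofReal, ← ENNReal.rpow_mul, ← ENNReal.rpow_mul, two_rpow_mul, mul_comm] at h1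
    have h2 := le_of_two_mul_le h1
    rw [two_rpow_mul] at h2
    have h3 : (N : ℝ≥0∞) ≤ (2 : ℝ≥0∞) ^ (J * (d * θ)) := by
      refine h2.trans (le_of_eq ?_)
      congr 1
      rw [← hθ]
      field_simp
      ring
    rw [two_rpow_ofReal, ← ENNReal.ofReal_natCast, ENNReal.ofReal_le_ofReal_iff (by positivity)] at h3
    exact Nat.le_floor h3
  obtain ⟨e, he1, he2⟩ := exists_code (J := J) (n := n) (R := R) t htpos x hg1 hg2
  refine ⟨e, hCN _ _ _ _ _ fun j => ?_⟩
  rw [two_rpow_mul]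
  have hp21 : 0 ≤ (p2 - p1) / p2 := div_nonneg (by linarith) hp2.le
  have hp21' : (p2 - p1) / p2 ≤ 1 := by rw [div_le_one hp2]; linarith
  have hsplit : p1 / p2 = 1 - (p2 - p1) / p2 := by field_simp; ring
  have hj0 : (0 : ℝ) ≤ j := by positivity
  have hJ0 : (0 : ℝ) ≤ J := by positivity
  have hDj : (j : ℝ) * (σ2 - d / u2) - w j + d * j * (1 / u2 - p1 / (u1 * p2)) = - (j * D) := by
    rw [hD]; simp only [hw]; ring
  by_cases hj : j < J
  · have hjJ : (j : ℝ) ≤ J := by exact_mod_cast hj.le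
    have hlev := level_bound (u2 := u2) (r := (x - decode t e) j)
      (B := (2 : ℝ≥0∞) ^ (1 + (-(w j) - ((J : ℝ) - j) * (d * θ / p1)))) hp1 hp12 hu (hA j) ?_
    · refine (mul_le_mul_right hlev _).trans ?_
      rw [← ENNReal.rpow_mul, ← ENNReal.rpow_mul, two_rpow_mul, two_rpow_mul, two_rpow_mul]
      refine two_rpow_mono ?_
      rw [hsplit]
      have e1 : d * θ / p1 * ((p2 - p1) / p2) = d * θ * (1 / p1 - 1 / p2) := by
        field_simp
      have e2 : ((J : ℝ) - j) * D ≤ (J - j) * (d * θ * (1 / p1 - 1 / p2)) :=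
        mul_le_mul_of_nonneg_left hDE (by linarith)
      have e3 : δ * j ≤ δ * J := by gcongr
      have e4 : (1 + (-(w j) - ((J : ℝ) - j) * (d * θ / p1))) * ((p2 - p1) / p2) =
        (p2 - p1) / p2 - w j * ((p2 - p1) / p2) -
          (J - j) * (d * θ * (1 / p1 - 1 / p2)) := by
        rw [← e1]; ring
      rw [e4]
      linarith
    · intro m hm
      simp only [Pi.sub_apply]
      rw [he1 j hj m hm]
      refine ⟨rnd_err_norm _ (htpos j), ?_⟩
      rw [coe_nnnorm_eq, two_rpow_ofReal]
      refine ENNReal.ofReal_le_ofReal ((rnd_err_t _ (htpos j)).trans (le_of_eq ?_))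
      rw [Real.rpow_add (by norm_num), Real.rpow_one]
  · push Not at hj
    have hjJ : (J : ℝ) ≤ j := by exact_mod_cast hj
    have hlev := level_bound (u2 := u2) (r := (x - decode t e) j)
      (B := (2 : ℝ≥0∞) ^ (-(w j))) hp1 hp12 hu (hA j) ?_
    · refine (mul_le_mul_right hlev _).trans ?_
      rw [← ENNReal.rpow_mul, ← ENNReal.rpow_mul, two_rpow_mul, two_rpow_mul, two_rpow_mul]
      refine two_rpow_mono ?_
      rw [hsplit]
      have e5 : (D - δ) * J ≤ (D - δ) * j := mul_le_mul_of_nonneg_left hjJ (by linarith)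
      linarith
    · intro m hm
      simp only [Pi.sub_apply, he2 j hj, Pi.zero_apply, sub_zero]
      exact ⟨le_rfl, norm_le_of_mNorm hp1 (hA j) m hm⟩

lemma sq_le_exp {δ : ℝ} (hδ : 0 < δ) : ∃ C : ℝ, 0 < C ∧ ∀ J : ℕ,
    (J : ℝ) ^ 2 ≤ C * (2 : ℝ) ^ (J * δ) := by
  have hl : 0 < Real.log 2 := Real.log_pos (by norm_num)
  refine ⟨(2 / (δ * Real.log 2)) ^ 2, by positivity, fun J => ?_⟩
  have h1 : (J : ℝ) ≤ 2 / (δ * Real.log 2) * (2 : ℝ) ^ (J * δ / 2) := by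
    rw [Real.rpow_def_of_pos (by norm_num)]
    have := Real.add_one_le_exp (Real.log 2 * (J * δ / 2))
    rw [div_mul_eq_mul_div, le_div_iff₀ (by positivity)]
    nlinarith
  calc (J : ℝ) ^ 2 ≤ (2 / (δ * Real.log 2) * (2 : ℝ) ^ (J * δ / 2)) ^ 2 := by gcongr
    _ = _ := by
      rw [mul_pow, ← Real.rpow_natCast (2 ^ _), ← Real.rpow_mul (by norm_num)]
      congr 2; push_cast; ring

lemma upper_final {d : ℕ} (hd : 1 ≤ d) {σ1 σ2 u1 p1 u2 p2 : ℝ} {q1 q2 : ℝ≥0∞}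
    (hq1 : 0 < q1) (hq2 : 0 < q2) (hp1 : 0 < p1) (hp1u1 : p1 < u1) (hp12 : p1 ≤ p2)
    (hu : 0 ≤ 1 / u2 - p1 / (u1 * p2)) (D : ℝ) (hD0 : 0 < D)
    (hD : D = σ1 - σ2 - d / u1 + d * (p1 / (u1 * p2)))
    (hDE : D ≤ d * (1 - p1 / u1) * (1 / p1 - 1 / p2)) (α : ℝ)
    (hα : d * (1 - p1 / u1) * α = D) (ε : ℝ) (hε : 0 < ε) :
    ∃ cε : ℝ, 0 < cε ∧ ∀ k : ℕ, 0 < k →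
      entropyNumber (nNorm d σ1 u1 p1 q1) (nNorm d σ2 u2 p2 q2) k ≤
        ENNReal.ofReal (cε * (k : ℝ) ^ (-α + ε)) := by
  have hu1 : 0 < u1 := hp1.trans hp1u1
  have h0 : 0 < 1 - p1 / u1 := by
    have : p1 / u1 < 1 := by rw [div_lt_one hu1]; exact hp1u1
    linarith
  have hd0 : (0 : ℝ) < d := by exact_mod_cast hd
  set T := d * (1 - p1 / u1) with hT
  have hT0 : 0 < T := by positivity
  have hα0 : 0 < α := by
    by_contra! h
    nlinarith
  set δ := min D (ε * T / (1 + α)) with hδ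
  have hδ0 : 0 < δ := lt_min hD0 (by positivity)
  have hδD : δ ≤ D := min_le_left _ _
  have hδε : δ * (1 + α) ≤ ε * T := by
    rw [← le_div_iff₀ (by positivity)]; exact min_le_right _ _
  obtain ⟨C, hC, hCN⟩ := nNorm_le (d := d) hδ0 hq2
  obtain ⟨C2, hC2, hsq⟩ := sq_le_exp hδ0
  set B := ⌈T / p1⌉₊ with hB
  set C3 : ℝ := (d + 2 * B + 4) * C2 + 1 with hC3
  have hC3pos : 0 < C3 := by positivity
  set κ := T + δ with hκ
  have hκ0 : 0 < κ := by positivity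
  set ρ := D - δ with hρ
  have hρ0 : 0 ≤ ρ := by linarith
  have hrate : -(ρ / κ) ≤ -α + ε := by
    have : α - ε ≤ ρ / κ := by
      rw [le_div_iff₀ hκ0]
      nlinarith
    linarith
  refine ⟨C * (2 * 2 ^ ρ * C3 ^ (ρ / κ)), by positivity, fun k hk => ?_⟩
  have hk0 : (0 : ℝ) < k := by exact_mod_cast hk
  have hk1 : (1 : ℝ) ≤ k := by exact_mod_cast hk
  set L := Real.logb 2 (k / C3) with hL
  have hkL : (k : ℝ) / C3 = 2 ^ L :=
    (Real.rpow_logb (by norm_num) (by norm_num) (by positivity)).symm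
  set J := ⌊L / κ⌋₊ with hJ
  have hbits : (J * d + 2 * (J * B + 2)) * ⌊(2 : ℝ) ^ (J * T)⌋₊ * J ≤ k - 1 := by
    by_cases hJ0 : J = 0
    · rw [hJ0]; simp
    · have hJ1 : 1 ≤ J := Nat.one_le_iff_ne_zero.2 hJ0
      have hJ1' : (1 : ℝ) ≤ J := by exact_mod_cast hJ1
      have hLκ : (J : ℝ) ≤ L / κ := (Nat.le_floor_iff' hJ0).1 le_rfl
      rw [le_div_iff₀ hκ0] at hLκ
      have hpow : (2 : ℝ) ^ (J * κ) ≤ k / C3 := by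
        rw [hkL]; exact Real.rpow_le_rpow_of_exponent_le (by norm_num) hLκ
      rw [le_div_iff₀ hC3pos] at hpow
      have hone : (1 : ℝ) ≤ 2 ^ (J * κ) := Real.one_le_rpow (by norm_num) (by positivity)
      suffices hs : (((J * d + 2 * (J * B + 2)) * ⌊(2 : ℝ) ^ (J * T)⌋₊ * J : ℕ) : ℝ) + 1 ≤ k by
        have : (J * d + 2 * (J * B + 2)) * ⌊(2 : ℝ) ^ (J * T)⌋₊ * J + 1 ≤ k := by exact_mod_cast hs
        omega
      push_cast
      have hfl : ((⌊(2 : ℝ) ^ (J * T)⌋₊ : ℕ) : ℝ) ≤ 2 ^ (J * T) := Nat.floor_le (by positivity)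
      calc ((J : ℝ) * d + 2 * (J * B + 2)) * (⌊(2 : ℝ) ^ (J * T)⌋₊ : ℕ) * J + 1
          ≤ (J * (d + 2 * B + 4)) * 2 ^ (J * T) * J + 1 := by
            gcongr
            nlinarith
        _ = (d + 2 * B + 4) * (J : ℝ) ^ 2 * 2 ^ (J * T) + 1 := by ring
        _ ≤ (d + 2 * B + 4) * (C2 * 2 ^ (J * δ)) * 2 ^ (J * T) + 1 := by
            gcongr; exact hsq J
        _ = (d + 2 * B + 4) * C2 * 2 ^ (J * κ) + 1 := by
            rw [show (J : ℝ) * κ = J * δ + J * T by rw [hκ]; ring, Real.rpow_add (by norm_num)]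
            ring
        _ ≤ 2 ^ (J * κ) * C3 := by rw [hC3]; linarith
        _ ≤ k := hpow
  refine (upper_level hq1 hp1 hp1u1.le hp12 hu D δ hδ0 hδD hD hDE C hC hCN B
    (Nat.le_ceil _) J k hbits).trans ?_
  rw [two_rpow_ofReal, ← ENNReal.ofReal_mul hC.le]
  refine ENNReal.ofReal_le_ofReal ?_
  rw [mul_assoc]
  refine mul_le_mul_of_nonneg_left ?_ hC.le
  have hJ2 : L / κ ≤ J + 1 := (Nat.lt_floor_add_one _).le
  calc (2 : ℝ) ^ (1 - ρ * J) ≤ 2 ^ (1 + ρ + -(ρ / κ) * L) := by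
        refine Real.rpow_le_rpow_of_exponent_le (by norm_num) ?_
        have : ρ * (L / κ) ≤ ρ * (J + 1) := by gcongr
        have e : ρ / κ * L = ρ * (L / κ) := by ring
        nlinarith
    _ = 2 * 2 ^ ρ * (k / C3) ^ (-(ρ / κ)) := by
        rw [hkL, ← Real.rpow_mul (by norm_num), Real.rpow_add (by norm_num),
          Real.rpow_add (by norm_num), Real.rpow_one, mul_comm L]
    _ = 2 * 2 ^ ρ * C3 ^ (ρ / κ) * (k : ℝ) ^ (-(ρ / κ)) := by
        rw [Real.div_rpow hk0.le hC3pos.le, Real.rpow_neg hC3pos.le, div_inv_eq_mul]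
        ring
    _ ≤ 2 * 2 ^ ρ * C3 ^ (ρ / κ) * (k : ℝ) ^ (-α + ε) := by
        gcongr

end Morrey

theorem stmt3 (d : ℕ) (hd : 1 ≤ d) (σ1 σ2 u1 p1 u2 p2 : ℝ) (q1 q2 : ℝ≥0∞)
    (hq1 : 0 < q1) (hq2 : 0 < q2)
    (hp1 : 0 < p1) (hp1u1 : p1 ≤ u1) (hp2 : 0 < p2) (hp2u2 : p2 ≤ u2)
    (h1 : p1 / u1 * (1 / p1 - 1 / p2) > max 0 (1 / u1 - 1 / u2))
    (h2 : p1 / u1 * (1 / p1 - 1 / p2) < (σ1 - σ2) / d)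
    (h3 : (σ1 - σ2) / d ≤ 1 / p1 - 1 / p2)
    (α : ℝ) (hα : α = u1 / (u1 - p1) * ((σ1 - σ2) / d - p1 / u1 * (1 / p1 - 1 / p2))) :
    (∃ c : ℝ, 0 < c ∧ ∀ k : ℕ, 0 < k →
      ENNReal.ofReal (c * (k : ℝ) ^ (-α)) ≤
        entropyNumber (nNorm d σ1 u1 p1 q1) (nNorm d σ2 u2 p2 q2) k) ∧
    (∀ ε : ℝ, 0 < ε → ∃ cε : ℝ, 0 < cε ∧ ∀ k : ℕ, 0 < k →
      entropyNumber (nNorm d σ1 u1 p1 q1) (nNorm d σ2 u2 p2 q2) k ≤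
        ENNReal.ofReal (cε * (k : ℝ) ^ (-α + ε))) := by
  have hu1 : 0 < u1 := hp1.trans_le hp1u1
  have hu2 : 0 < u2 := hp2.trans_le hp2u2
  have hd0 : (0 : ℝ) < d := by exact_mod_cast hd
  have ht : 0 < 1 / p1 - 1 / p2 := by
    have h := lt_of_le_of_lt (le_max_left _ _) h1
    exact (pos_iff_pos_of_mul_pos h).1 (by positivity)
  have hp12 : p1 ≤ p2 := by
    have : 1 / p2 < 1 / p1 := by linarith
    exact ((one_div_lt_one_div hp2 hp1).1 this).le
  have hlt : p1 < u1 := by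
    have h := h2.trans_le h3
    have : p1 / u1 < 1 := by
      by_contra! hh
      nlinarith
    rwa [div_lt_one hu1] at this
  have hrew : p1 / u1 * (1 / p1 - 1 / p2) = 1 / u1 - p1 / (u1 * p2) := by
    field_simp
  have hu : 0 ≤ 1 / u2 - p1 / (u1 * p2) := by
    have h := lt_of_le_of_lt (le_max_right _ _) h1
    rw [hrew] at h
    linarith
  set D := σ1 - σ2 - d / u1 + d * (p1 / (u1 * p2)) with hD
  have hDs : D = d * ((σ1 - σ2) / d - p1 / u1 * (1 / p1 - 1 / p2)) := by
    rw [hD, hrew]; field_simp; ring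
  have hD0 : 0 < D := by
    rw [hDs]; exact mul_pos hd0 (by linarith)
  have hαD : d * (1 - p1 / u1) * α = D := by
    have : u1 - p1 ≠ 0 := by linarith
    rw [hα, hDs]
    rw [show (1 : ℝ) - p1 / u1 = (u1 - p1) / u1 by field_simp]
    field_simp
  have h0 : 0 < 1 - p1 / u1 := by
    have : p1 / u1 < 1 := by rw [div_lt_one hu1]; exact hlt
    linarith
  have hα0 : 0 ≤ α := by
    by_contra! h
    have : 0 < d * (1 - p1 / u1) := by positivity
    nlinarith
  have hDE : D ≤ d * (1 - p1 / u1) * (1 / p1 - 1 / p2) := by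
    rw [hDs, mul_assoc]
    refine mul_le_mul_of_nonneg_left ?_ hd0.le
    linarith
  refine ⟨Morrey.lower_final hd hq1 hq2 hp1 hlt hp2 α hα0 ?_, fun ε hε =>
    Morrey.upper_final hd hq1 hq2 hp1 hlt hp12 hu D hD0 hD hDE α hαD ε hε⟩
  rw [hαD, hD]
  field_simp
  ring
end

section
/- Let d ≥ 1 be an integer, σ1, σ2 ∈ ℝ, 0 < q_i ≤ ∞ and 0 < p_i ≤ u_i < ∞ for i = 1, 2. Assume p1 ≤ u2 and (σ1 − σ2)/d > 1/p1 − 1/u2. Then there exists c > 0 such that for all k ∈ ℕ, e_k(id : ñ^{σ1}_{u1,p1,q1}(Q) → ñ^{σ2}_{u2,p2,q2}(Q)) ≤ c · k^{−(σ1−σ2)/d}. -/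
open scoped ENNReal NNReal

/-- rounding toward zero -/
theorem exists_round : ∃ tr : ℝ → ℤ, ∀ x, |(tr x : ℝ)| ≤ |x| ∧ |x - tr x| ≤ |x| ∧ |x - tr x| ≤ 1 := by
  have h : ∀ x : ℝ, ∃ a : ℤ, |(a : ℝ)| ≤ |x| ∧ |x - a| ≤ |x| ∧ |x - a| ≤ 1 := by
    intro x
    rcases le_total 0 x with hx | hx
    · have h1 := Int.floor_le x
      have h2 := Int.lt_floor_add_one x
      have h3 : (0:ℝ) ≤ (⌊x⌋ : ℝ) := by exact_mod_cast Int.floor_nonneg.mpr hx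
      refine ⟨⌊x⌋, ?_, ?_, ?_⟩
      · rw [abs_of_nonneg h3, abs_of_nonneg hx]; exact h1
      · rw [abs_of_nonneg hx, abs_of_nonneg (by linarith)]; linarith
      · rw [abs_of_nonneg (by linarith)]; linarith
    · have h1 := Int.le_ceil x
      have h2 := Int.ceil_lt_add_one x
      have h3 : (⌈x⌉ : ℝ) ≤ 0 := by
        have : ⌈x⌉ ≤ 0 := Int.ceil_le.mpr (by simpa using hx)
        exact_mod_cast this
      refine ⟨⌈x⌉, ?_, ?_, ?_⟩
      · rw [abs_of_nonpos h3, abs_of_nonpos hx]; linarith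
      · rw [abs_of_nonpos hx, abs_of_nonpos (by linarith)]; linarith
      · rw [abs_of_nonpos (by linarith)]; linarith
  choose tr htr using h
  exact ⟨tr, htr⟩

theorem sum_geom_abs (κ : ℝ) (hκ : 0 < κ) : ∃ C : ℝ, 0 < C ∧ ∀ n : ℝ, ∀ s : Finset ℕ,
    ∑ j ∈ s, (2:ℝ) ^ (-(κ * |(j:ℝ) - n|)) ≤ C := by
  set ρ : ℝ := (2:ℝ) ^ (-κ) with hρ
  have hρ0 : 0 < ρ := by positivity
  have hρ1 : ρ < 1 := Real.rpow_lt_one_of_one_lt_of_neg (by norm_num) (by linarith)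
  have hs : Summable (fun l : ℤ => ρ ^ l.natAbs) := by
    apply Summable.of_nat_of_neg
    · simpa using summable_geometric_of_lt_one hρ0.le hρ1
    · simpa using summable_geometric_of_lt_one hρ0.le hρ1
  refine ⟨2 ^ κ * ∑' l : ℤ, ρ ^ l.natAbs, ?_, ?_⟩
  · have : 0 < ∑' l : ℤ, ρ ^ l.natAbs := hs.tsum_pos (fun _ => by positivity) 0 (by simp)
    positivity
  · intro n s
    set m : ℤ := ⌊n⌋ 
    have key : ∀ j ∈ s, (2:ℝ) ^ (-(κ * |(j:ℝ) - n|)) ≤ 2 ^ κ * ρ ^ ((j:ℤ) - m).natAbs := by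
      intro j _
      rw [hρ, ← Real.rpow_natCast, ← Real.rpow_mul (by norm_num), ← Real.rpow_add (by norm_num)]
      apply Real.rpow_le_rpow_of_exponent_le (by norm_num)
      have h1 := Int.floor_le n
      have h2 := Int.lt_floor_add_one n
      have : (((j:ℤ) - m).natAbs : ℝ) = |(j:ℝ) - m| := by
        rw [Nat.cast_natAbs]; push_cast; rfl
      rw [this]
      have h3 : |(j:ℝ) - m| ≤ |(j:ℝ) - n| + 1 := by
        have : |(j:ℝ) - m| ≤ |(j:ℝ) - n| + |n - m| := abs_sub_le _ _ _
        have h4 : |n - m| ≤ 1 := by rw [abs_of_nonneg (by linarith)]; linarith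
        linarith
      nlinarith
    refine (Finset.sum_le_sum key).trans ?_
    rw [← Finset.mul_sum]
    refine mul_le_mul_of_nonneg_left ?_ (by positivity)
    let e : ℕ ↪ ℤ := ⟨fun j => (j:ℤ) - m, fun a b h => by simpa using h⟩
    have : ∑ j ∈ s, ρ ^ ((j:ℤ) - m).natAbs = ∑ l ∈ s.map e, ρ ^ l.natAbs := by
      rw [Finset.sum_map]; rfl
    rw [this]
    exact hs.sum_le_tsum _ (fun _ _ => by positivity)

theorem lin_le_exp (κ A B : ℝ) (hκ : 0 < κ) (hA : 0 ≤ A) (hB : 0 ≤ B) : ∃ C : ℝ, 0 < C ∧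
    ∀ h : ℝ, 0 ≤ h → A + B * h ≤ C * 2 ^ (κ * h) := by
  have hl : 0 < Real.log 2 := Real.log_pos (by norm_num)
  refine ⟨A + B / (κ * Real.log 2) + 1, by positivity, fun h hh => ?_⟩
  have h1 : (2:ℝ) ^ (κ * h) = Real.exp (Real.log 2 * (κ * h)) := Real.rpow_def_of_pos (by norm_num) _
  have h2 := Real.add_one_le_exp (Real.log 2 * (κ * h))
  rw [← h1] at h2
  have h3 : B * h = B / (κ * Real.log 2) * (Real.log 2 * (κ * h)) := by field_simp
  have h4 : 0 ≤ Real.log 2 * (κ * h) := by positivity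
  have h5 : 0 ≤ B / (κ * Real.log 2) := by positivity
  rw [h3]
  set y := Real.log 2 * (κ * h)
  set b := B / (κ * Real.log 2)
  calc A + b * y ≤ (A + b + 1) * (y + 1) := by nlinarith [mul_nonneg hA h4]
    _ ≤ _ := by gcongr

theorem sum_int_weight (β : ℝ) (hβ : 2 ≤ β) (T : Finset ℤ) :
    ∑ l ∈ T, Real.exp (-(β * Real.log (1 + |(l:ℝ)|))) ≤ 1 + 8 * 2 ^ (-β) := by
  set g : ℤ → ℝ := fun l => Real.exp (-(β * Real.log (1 + |(l:ℝ)|))) with hg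
  have hb : ∀ K : ℕ, g (K+1) ≤ 4 * 2 ^ (-β) * (1 / ((K:ℝ)+1) - 1 / ((K:ℝ) + 2)) := by
    intro K
    have hK : (0:ℝ) ≤ K := Nat.cast_nonneg K
    have h0 : g (K+1) = ((K:ℝ)+2) ^ (-β) := by
      simp only [hg]
      push_cast
      rw [abs_of_nonneg (by positivity), Real.rpow_def_of_pos (by positivity)]
      congr 1
      rw [show (1 + ((K:ℝ)+1)) = (K:ℝ) + 2 by ring]; ring
    rw [h0, show -β = -(β-2) + (-2:ℝ) by ring, Real.rpow_add (by positivity),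
      Real.rpow_add (by positivity)]
    have h1 : ((K:ℝ)+2) ^ (-(β-2)) ≤ 2 ^ (-(β-2)) :=
      Real.rpow_le_rpow_of_nonpos (by norm_num) (by linarith) (by linarith)
    have h2 : ((K:ℝ)+2) ^ (-2:ℝ) ≤ 1 / ((K:ℝ)+1) - 1 / ((K:ℝ) + 2) := by
      rw [Real.rpow_neg (by positivity), Real.rpow_two, div_sub_div _ _ (by positivity) (by positivity), inv_eq_one_div]
      rw [div_le_div_iff₀ (by positivity) (by positivity)]
      nlinarith
    have h3 : (2:ℝ) ^ (-2:ℝ) = 1/4 := by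
      rw [Real.rpow_neg (by positivity), Real.rpow_two]; norm_num
    rw [h3]
    calc _ ≤ 2 ^ (-(β-2)) * (1 / ((K:ℝ)+1) - 1 / ((K:ℝ) + 2)) := by gcongr
      _ = _ := by ring
  have hsym : ∀ l, g (-l) = g l := by intro l; simp [hg]
  have hI : ∀ K : ℕ, ∑ l ∈ Finset.Icc (-(K:ℤ)) K, g l ≤ 1 + 8 * 2 ^ (-β) * (1 - 1 / ((K:ℝ)+1)) := by
    intro K
    induction K with
    | zero => simp [hg]
    | succ K ih =>
      have : Finset.Icc (-((K+1:ℕ):ℤ)) ((K+1:ℕ):ℤ) = insert (-((K:ℤ)+1)) (insert ((K:ℤ)+1) (Finset.Icc (-(K:ℤ)) K)) := by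
        ext l; simp only [Finset.mem_Icc, Finset.mem_insert]; push_cast; omega
      rw [this, Finset.sum_insert, Finset.sum_insert, hsym]
      · have := hb K
        push_cast
        rw [show (K:ℝ) + 1 + 1 = K + 2 by ring]
        linarith
      · simp
      · simp; omega
  have hsub : T ⊆ Finset.Icc (-((∑ l ∈ T, l.natAbs : ℕ):ℤ)) ((∑ l ∈ T, l.natAbs : ℕ):ℤ) := by
    intro l hl
    have := Finset.single_le_sum (f := fun l : ℤ => l.natAbs) (fun _ _ => Nat.zero_le _) hl
    rw [Finset.mem_Icc]; omega
  refine (Finset.sum_le_sum_of_subset_of_nonneg hsub (fun _ _ _ => (Real.exp_pos _).le)).trans ?_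
  refine (hI _).trans ?_
  have : (0:ℝ) ≤ 1 / (((∑ l ∈ T, l.natAbs : ℕ):ℝ)+1) := by positivity
  have h2 : (0:ℝ) < 2 ^ (-β) := by positivity
  nlinarith

theorem count_fin {ι : Type*} [Fintype ι] [DecidableEq ι] (β : ι → ℝ) (hβ : ∀ i, 2 ≤ β i) (R : ℝ)
    (G : Finset (ι → ℤ)) (hG : ∀ a ∈ G, ∑ i, β i * Real.log (1 + |(a i : ℝ)|) ≤ R) :
    (G.card : ℝ) ≤ Real.exp (R + 8 * ∑ i, (2:ℝ) ^ (-(β i))) := by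
  set w : ι → ℤ → ℝ := fun i l => Real.exp (-(β i * Real.log (1 + |(l:ℝ)|))) with hw
  have h1 : (G.card : ℝ) * Real.exp (-R) ≤ ∑ a ∈ G, ∏ i, w i (a i) := by
    rw [← nsmul_eq_mul]
    apply Finset.card_nsmul_le_sum
    intro a ha
    simp only [hw]
    rw [← Real.exp_sum, Finset.sum_neg_distrib]
    exact Real.exp_le_exp.mpr (neg_le_neg (hG a ha))
  have h2 : ∑ a ∈ G, ∏ i, w i (a i) ≤ ∏ i, ∑ l ∈ G.image (fun a => a i), w i l := by
    rw [Finset.prod_univ_sum]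
    apply Finset.sum_le_sum_of_subset_of_nonneg
    · intro a ha
      rw [Fintype.mem_piFinset]
      intro i
      exact Finset.mem_image_of_mem (fun a : ι → ℤ => a i) ha
    · intro a _ _
      exact Finset.prod_nonneg (fun i _ => (Real.exp_pos _).le)
  have h3 : ∏ i, ∑ l ∈ G.image (fun a => a i), w i l ≤ ∏ i, Real.exp (8 * 2 ^ (-(β i))) := by
    apply Finset.prod_le_prod
    · intro i _; exact Finset.sum_nonneg (fun _ _ => (Real.exp_pos _).le)
    · intro i _
      refine (sum_int_weight (β i) (hβ i) _).trans ?_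
      linarith [Real.add_one_le_exp (8 * (2:ℝ) ^ (-(β i)))]
  rw [← Real.exp_sum, ← Finset.mul_sum] at h3
  have h4 := h1.trans (h2.trans h3)
  rw [Real.exp_add]
  rw [Real.exp_neg] at h4
  have := Real.exp_pos R
  calc (G.card:ℝ) = Real.exp R * (G.card * (Real.exp R)⁻¹) := by field_simp
    _ ≤ _ := by gcongr

theorem count_supp {I : Type*} (F : Finset I) (β : I → ℝ) (hβ : ∀ i, 2 ≤ β i) (R : ℝ)
    (G : Finset (I → ℤ)) (hG0 : ∀ a ∈ G, ∀ i, i ∉ F → a i = 0)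
    (hG : ∀ a ∈ G, ∑ i ∈ F, β i * Real.log (1 + |(a i : ℝ)|) ≤ R) :
    (G.card : ℝ) ≤ Real.exp (R + 8 * ∑ i ∈ F, (2:ℝ) ^ (-(β i))) := by
  classical
  have hinj : Set.InjOn (fun (a : I → ℤ) (i : F) => a i) G := by
    intro a ha b hb hab
    ext i
    by_cases hi : i ∈ F
    · exact congrFun hab ⟨i, hi⟩
    · rw [hG0 a ha i hi, hG0 b hb i hi]
  rw [← Finset.card_image_of_injOn hinj]
  have := count_fin (fun i : F => β i) (fun i => hβ i) R (G.image (fun (a : I → ℤ) (i : F) => a i)) ?_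
  · rw [Finset.sum_coe_sort F (fun i => (2:ℝ) ^ (-(β i)))] at this
    exact this
  · intro a ha
    obtain ⟨b, hb, rfl⟩ := Finset.mem_image.mp ha
    have := hG b hb
    rw [← Finset.sum_coe_sort] at this
    exact this

theorem cover_of_card {I Λ : Type*} (S : Set I) (B : ℕ) (f : I → Λ) [Nonempty I]
    (h : ∀ G : Finset I, (↑G : Set I) ⊆ S → G.card ≤ B) :
    ∃ c : Fin B → Λ, ∀ a ∈ S, ∃ i, c i = f a := by
  classical
  have hfin : S.Finite := by
    by_contra hinf
    obtain ⟨t, ht, hc⟩ := Set.Infinite.exists_subset_card_eq hinf (B+1)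
    have := h t ht
    omega
  have hc := h hfin.toFinset (by simp)
  set G := hfin.toFinset
  let e := G.equivFin
  let a0 : I := Classical.arbitrary I
  refine ⟨fun i => if hi : i.1 < G.card then f (e.symm ⟨i.1, hi⟩).1 else f a0, fun a ha => ?_⟩
  have haG : a ∈ G := by simpa [G] using ha
  refine ⟨⟨(e ⟨a, haG⟩).1, lt_of_lt_of_le (e ⟨a, haG⟩).2 hc⟩, ?_⟩
  simp

/-- finset of level `j` cubes -/
noncomputable def cubeF (d j : ℕ) : Finset (Fin d → ℤ) := Fintype.piFinset fun _ => Finset.Ico 0 (2 ^ j)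

/-- finset of level `j` cubes inside `Q_{ν,k}` -/
noncomputable def subF (d j ν : ℕ) (k : Fin d → ℤ) : Finset (Fin d → ℤ) :=
  Fintype.piFinset fun i => Finset.Ico (k i * 2 ^ (j - ν)) ((k i + 1) * 2 ^ (j - ν))

theorem cubeF_card (d j : ℕ) : ((cubeF d j).card : ℝ) = 2 ^ ((j:ℝ) * d) := by
  have h : ((2:ℤ) ^ j).toNat = 2 ^ j := by
    rw [show (2:ℤ) ^ j = ((2 ^ j : ℕ) : ℤ) by push_cast; rfl, Int.toNat_natCast]
  rw [cubeF, Fintype.card_piFinset]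
  simp [h]
  rw [Real.rpow_mul (by norm_num)]; simp

theorem subF_card (d j ν : ℕ) (h : ν ≤ j) (k : Fin d → ℤ) :
    ((subF d j ν k).card : ℝ≥0∞) = 2 ^ ((d:ℝ) * ((j:ℝ) - ν)) := by
  rw [subF, Fintype.card_piFinset]
  have h1 : ∀ i, (Finset.Ico (k i * 2 ^ (j - ν)) ((k i + 1) * 2 ^ (j - ν))).card = 2 ^ (j - ν) := by
    intro i
    rw [Int.card_Ico, show (k i + 1) * 2 ^ (j - ν) - k i * 2 ^ (j - ν) = ((2 ^ (j-ν) : ℕ) : ℤ) by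
      push_cast; ring, Int.toNat_natCast]
  simp only [h1, Finset.prod_const, Finset.card_univ, Fintype.card_fin]
  rw [← Nat.cast_sub h, mul_comm, ENNReal.rpow_mul]
  simp

theorem tsum_cubeSub (d j ν : ℕ) (k : Fin d → ℤ) (f : (Fin d → ℤ) → ℝ≥0∞) :
    ∑' m : {m : Fin d → ℤ // cubeSub d j ν m k}, f m.1 = ∑ m ∈ subF d j ν k, f m := by
  rw [← Finset.tsum_subtype']
  have : {m : Fin d → ℤ | cubeSub d j ν m k} = ↑(subF d j ν k) := by
    ext m; simp [cubeSub, subF]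
  exact tsum_congr_set_coe f this

theorem subF_zero (d j : ℕ) : subF d j 0 0 = cubeF d j := by
  simp [subF, cubeF]

theorem subF_subset (d j ν : ℕ) (h : ν ≤ j) (k : Fin d → ℤ) (hk : inUnitCube d ν k) :
    subF d j ν k ⊆ cubeF d j := by
  intro m hm
  simp only [subF, cubeF, Fintype.mem_piFinset, Finset.mem_Ico] at hm ⊢
  intro i
  obtain ⟨h1, h2⟩ := hm i
  obtain ⟨h3, h4⟩ := hk i
  have hp : (0:ℤ) < 2 ^ (j - ν) := by positivity
  have : (2:ℤ) ^ j = 2 ^ ν * 2 ^ (j - ν) := by rw [← pow_add]; congr 1; omega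
  constructor
  · nlinarith
  · rw [this]; nlinarith

theorem ofReal_two_rpow (y : ℝ) : (2:ℝ≥0∞) ^ y = ENNReal.ofReal ((2:ℝ) ^ y) := by
  rw [← ENNReal.ofReal_rpow_of_pos (by norm_num)]; norm_num

theorem nnnorm_rpow_ofReal (z : ℂ) (p : ℝ) (hp : 0 < p) :
    ((‖z‖₊ : ℝ≥0∞)) ^ p = ENNReal.ofReal (‖z‖ ^ p) := by
  rw [← ENNReal.ofReal_rpow_of_nonneg (norm_nonneg _) hp.le, ofReal_norm]; rfl

theorem nNorm_ge_level (d : ℕ) (σ u p : ℝ) (q : ℝ≥0∞) (hq : 0 < q) (x : ℕ → (Fin d → ℤ) → ℂ) (j : ℕ) :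
    (2 : ℝ≥0∞) ^ ((j : ℝ) * (σ - d / u)) * mNorm d u p j (x j) ≤ nNorm d σ u p q x := by
  unfold nNorm
  split_ifs with h
  · exact le_iSup (fun j : ℕ => (2 : ℝ≥0∞) ^ ((j : ℝ) * (σ - d / u)) * mNorm d u p j (x j)) j
  · have hq' : 0 < q.toReal := ENNReal.toReal_pos hq.ne' h
    have := ENNReal.le_tsum (f := fun j : ℕ => ((2 : ℝ≥0∞) ^ ((j : ℝ) * (σ - d / u)) * mNorm d u p j (x j)) ^ q.toReal) j
    have h2 := ENNReal.rpow_le_rpow this (z := 1 / q.toReal) (by positivity)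
    rw [← ENNReal.rpow_mul, mul_one_div_cancel hq'.ne', ENNReal.rpow_one] at h2
    exact h2

theorem lower_bound (d : ℕ) (σ u p : ℝ) (q : ℝ≥0∞) (hq : 0 < q) (hp : 0 < p)
    (x : ℕ → (Fin d → ℤ) → ℂ) (hx : nNorm d σ u p q x ≤ 1) (j : ℕ) :
    ∑ m ∈ cubeF d j, ‖x j m‖ ^ p ≤ ((2:ℝ) ^ (-((j:ℝ) * (σ - d / p)))) ^ p := by
  have h1 := (nNorm_ge_level d σ u p q hq x j).trans hx
  have h0 : (2 : ℝ≥0∞) ^ ((d : ℝ) * ((j : ℝ) - ((0:ℕ) : ℝ)) * (1 / u - 1 / p)) *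
      (∑ m ∈ cubeF d j, ((‖x j m‖₊ : ℝ≥0∞)) ^ p) ^ (1 / p) ≤ mNorm d u p j (x j) := by
    unfold mNorm
    rw [← subF_zero, ← tsum_cubeSub d j 0 0 (fun m => ((‖x j m‖₊ : ℝ≥0∞)) ^ p)]
    exact le_iSup (fun νk : {νk : ℕ × (Fin d → ℤ) // νk.1 ≤ j ∧ inUnitCube d νk.1 νk.2} =>
      (2 : ℝ≥0∞) ^ ((d : ℝ) * ((j : ℝ) - (νk.1.1 : ℝ)) * (1 / u - 1 / p)) *
      (∑' m : {m : Fin d → ℤ // cubeSub d j νk.1.1 m νk.1.2},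
        ((‖x j m.1‖₊ : ℝ≥0∞)) ^ p) ^ (1 / p)) ⟨(0, 0), Nat.zero_le _, fun i => by simp⟩
  have h2 := (mul_le_mul_right h0 ((2 : ℝ≥0∞) ^ ((j : ℝ) * (σ - d / u)))).trans h1
  rw [← mul_assoc, ← ENNReal.rpow_add _ _ (by norm_num) (by norm_num)] at h2
  have he : (j : ℝ) * (σ - d / u) + (d : ℝ) * ((j : ℝ) - ((0:ℕ) : ℝ)) * (1 / u - 1 / p) =
      (j:ℝ) * (σ - d / p) := by push_cast; ring
  rw [he] at h2
  simp only [nnnorm_rpow_ofReal _ p hp] at h2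
  rw [← ENNReal.ofReal_sum_of_nonneg (fun _ _ => by positivity), ofReal_two_rpow,
    ENNReal.ofReal_rpow_of_nonneg (Finset.sum_nonneg (fun _ _ => by positivity)) (by positivity),
    ← ENNReal.ofReal_mul (by positivity), ENNReal.ofReal_le_one] at h2
  set S := ∑ m ∈ cubeF d j, ‖x j m‖ ^ p
  have hS : 0 ≤ S := Finset.sum_nonneg (fun _ _ => by positivity)
  have h3 : S ^ (1/p) ≤ (2:ℝ) ^ (-((j:ℝ) * (σ - d / p))) := by
    rw [Real.rpow_neg (by norm_num), ← one_div, le_div_iff₀ (by positivity), mul_comm]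
    exact h2
  have h4 := Real.rpow_le_rpow (by positivity) h3 hp.le
  rwa [← Real.rpow_mul hS, one_div_mul_cancel hp.ne', Real.rpow_one] at h4

theorem mNorm_le (d : ℕ) (u p : ℝ) (hp : 0 < p) (hpu : p ≤ u) (j : ℕ) (z : (Fin d → ℤ) → ℂ) :
    mNorm d u p j z ≤ ENNReal.ofReal ((∑ m ∈ cubeF d j, ‖z m‖ ^ u) ^ (1 / u)) := by
  have hu : 0 < u := hp.trans_le hpu
  unfold mNorm
  refine iSup_le ?_
  rintro ⟨⟨ν, k⟩, hν, hk⟩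
  simp only at hν hk ⊢
  rw [tsum_cubeSub d j ν k (fun m => ((‖z m‖₊ : ℝ≥0∞)) ^ p)]
  have h1 := ENNReal.rpow_sum_le_const_mul_sum_rpow (subF d j ν k) (fun m => ((‖z m‖₊ : ℝ≥0∞)) ^ p)
    (p := u / p) (by rwa [le_div_iff₀ hp, one_mul])
  rw [subF_card d j ν hν k] at h1
  have h2 := ENNReal.rpow_le_rpow h1 (z := 1 / u) (by positivity)
  rw [← ENNReal.rpow_mul, ENNReal.mul_rpow_of_nonneg _ _ (by positivity), ← ENNReal.rpow_mul,
    ← ENNReal.rpow_mul] at h2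
  simp only [← ENNReal.rpow_mul] at h2
  rw [show u / p * (1 / u) = 1 / p by field_simp, show p * (u / p) = u by field_simp] at h2
  have h3 := mul_le_mul_right h2 ((2 : ℝ≥0∞) ^ ((d : ℝ) * ((j : ℝ) - ν) * (1 / u - 1 / p)))
  refine h3.trans ?_
  rw [← mul_assoc, ← ENNReal.rpow_add _ _ (by norm_num) (by norm_num)]
  rw [show (d : ℝ) * ((j : ℝ) - ν) * (1 / u - 1 / p) + (d : ℝ) * ((j : ℝ) - ν) * ((u / p - 1) * (1 / u)) = 0 by
    field_simp; ring]
  rw [ENNReal.rpow_zero, one_mul, ← ENNReal.ofReal_rpow_of_nonneg (Finset.sum_nonneg (fun _ _ => by positivity)) (by positivity),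
    ENNReal.ofReal_sum_of_nonneg (fun _ _ => by positivity)]
  simp only [← nnnorm_rpow_ofReal _ u hu]
  exact ENNReal.rpow_le_rpow (Finset.sum_le_sum_of_subset (subF_subset d j ν hν k hk)) (by positivity)

theorem upper_bound (d : ℕ) (σ u p : ℝ) (q : ℝ≥0∞) (hq : 0 < q) (hp : 0 < p) (hpu : p ≤ u)
    (κ : ℝ) (hκ : 0 < κ) : ∃ C : ℝ, 0 < C ∧ ∀ (n E : ℝ), 0 < E → ∀ z : ℕ → (Fin d → ℤ) → ℂ,
    (∀ j : ℕ, (2:ℝ) ^ ((j:ℝ) * (σ - d / u)) * (∑ m ∈ cubeF d j, ‖z j m‖ ^ u) ^ (1 / u) ≤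
      E * 2 ^ (-(κ * |(j:ℝ) - n|))) → nNorm d σ u p q z ≤ ENNReal.ofReal (C * E) := by
  have hlev : ∀ (n E : ℝ), 0 < E → ∀ z : ℕ → (Fin d → ℤ) → ℂ,
    (∀ j : ℕ, (2:ℝ) ^ ((j:ℝ) * (σ - d / u)) * (∑ m ∈ cubeF d j, ‖z j m‖ ^ u) ^ (1 / u) ≤
      E * 2 ^ (-(κ * |(j:ℝ) - n|))) → ∀ j : ℕ, (2 : ℝ≥0∞) ^ ((j : ℝ) * (σ - d / u)) * mNorm d u p j (z j)
        ≤ ENNReal.ofReal (E * 2 ^ (-(κ * |(j:ℝ) - n|))) := by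
    intro n E hE z hz j
    refine (mul_le_mul_right (mNorm_le d u p hp hpu j (z j)) _).trans ?_
    rw [ofReal_two_rpow, ← ENNReal.ofReal_mul (by positivity)]
    exact ENNReal.ofReal_le_ofReal (hz j)
  by_cases h : q = ∞
  · refine ⟨1, one_pos, fun n E hE z hz => ?_⟩
    unfold nNorm
    rw [if_pos h]
    refine iSup_le fun j => (hlev n E hE z hz j).trans (ENNReal.ofReal_le_ofReal ?_)
    rw [one_mul]
    have : (2:ℝ) ^ (-(κ * |(j:ℝ) - n|)) ≤ 1 :=
      Real.rpow_le_one_of_one_le_of_nonpos (by norm_num) (by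
        have := mul_nonneg hκ.le (abs_nonneg ((j:ℝ) - n)); linarith)
    nlinarith
  · have hq' : 0 < q.toReal := ENNReal.toReal_pos hq.ne' h
    set r := q.toReal
    obtain ⟨C, hC, hCs⟩ := sum_geom_abs (κ * r) (by positivity)
    refine ⟨C ^ (1 / r), by positivity, fun n E hE z hz => ?_⟩
    unfold nNorm
    rw [if_neg h]
    have h1 : ∑' j : ℕ, ((2 : ℝ≥0∞) ^ ((j : ℝ) * (σ - d / u)) * mNorm d u p j (z j)) ^ r ≤
        ENNReal.ofReal (E ^ r * C) := by
      refine ENNReal.summable.tsum_le_of_sum_le fun s => ?_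
      have : ∀ j ∈ s, ((2 : ℝ≥0∞) ^ ((j : ℝ) * (σ - d / u)) * mNorm d u p j (z j)) ^ r ≤
          ENNReal.ofReal (E ^ r * 2 ^ (-(κ * r * |(j:ℝ) - n|))) := by
        intro j _
        refine (ENNReal.rpow_le_rpow (hlev n E hE z hz j) hq'.le).trans ?_
        rw [ENNReal.ofReal_rpow_of_nonneg (by positivity) hq'.le, Real.mul_rpow hE.le (by positivity),
          ← Real.rpow_mul (by norm_num)]
        apply le_of_eq; congr 3; ring
      refine (Finset.sum_le_sum this).trans ?_
      rw [← ENNReal.ofReal_sum_of_nonneg (fun _ _ => by positivity), ← Finset.mul_sum]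
      exact ENNReal.ofReal_le_ofReal (mul_le_mul_of_nonneg_left (hCs n s) (by positivity))
    refine (ENNReal.rpow_le_rpow h1 (by positivity)).trans ?_
    rw [ENNReal.ofReal_rpow_of_nonneg (by positivity) (by positivity), Real.mul_rpow (by positivity) hC.le,
      ← Real.rpow_mul hE.le, mul_one_div_cancel hq'.ne', Real.rpow_one, mul_comm]

theorem log_int1 (p : ℝ) (hp : 0 < p) (a : ℤ) :
    Real.log (1 + |(a:ℝ)|) ≤ (1 + 1 / p) * |(a:ℝ)| ^ p := by
  rcases eq_or_ne a 0 with rfl | ha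
  · simp [Real.zero_rpow hp.ne']
  · have h1 : (1:ℝ) ≤ |(a:ℝ)| := by
      have := Int.one_le_abs ha
      exact_mod_cast this
    have h2 : Real.log (1 + |(a:ℝ)|) ≤ Real.log (2 * |(a:ℝ)|) :=
      Real.log_le_log (by positivity) (by linarith)
    rw [Real.log_mul (by norm_num) (by positivity)] at h2
    have h3 := Real.log_le_rpow_div (x := |(a:ℝ)|) (by positivity) hp
    have h4 : (1:ℝ) ≤ |(a:ℝ)| ^ p := Real.one_le_rpow h1 hp.le
    have h5 : Real.log 2 ≤ 1 := by linarith [Real.log_two_lt_d9]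
    calc _ ≤ _ := h2
      _ ≤ |(a:ℝ)| ^ p + |(a:ℝ)| ^ p / p := by linarith
      _ = _ := by ring

theorem log_int2 (p T : ℝ) (hp : 0 < p) (hT : 1 ≤ T) (a : ℤ) :
    Real.log (1 + |(a:ℝ)|) ≤ 1 + Real.log T + 1 / p * T ^ (-p) * |(a:ℝ)| ^ p := by
  have hlT := Real.log_nonneg hT
  have hT0 : 0 < T := by linarith
  rcases eq_or_ne a 0 with rfl | ha
  · simp [Real.zero_rpow hp.ne']; linarith
  · have h1 : (1:ℝ) ≤ |(a:ℝ)| := by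
      have := Int.one_le_abs ha
      exact_mod_cast this
    have h2 : Real.log (1 + |(a:ℝ)|) ≤ Real.log (2 * (T * (|(a:ℝ)| / T))) :=
      Real.log_le_log (by positivity) (by rw [mul_div_cancel₀ _ hT0.ne']; linarith)
    rw [Real.log_mul (by norm_num) (by positivity), Real.log_mul (by positivity) (by positivity)] at h2
    have h3 := Real.log_le_rpow_div (x := |(a:ℝ)| / T) (by positivity) hp
    rw [Real.div_rpow (by positivity) hT0.le] at h3
    have h5 : Real.log 2 ≤ 1 := by linarith [Real.log_two_lt_d9]
    have h6 : |(a:ℝ)| ^ p / T ^ p / p = 1 / p * T ^ (-p) * |(a:ℝ)| ^ p := by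
      rw [Real.rpow_neg hT0.le]; field_simp
    linarith

/-- exponent of the rounding step at level `j` -/
noncomputable def theta (D p γ η n j : ℝ) : ℝ :=
  if j ≤ n then -(j * D / p) - (n - j) * γ else (-(n * D) + (j - n) * η) / p

/-- counting weight at level `j` -/
noncomputable def bet (D η n j : ℝ) : ℝ := 2 + max (j - n) 0 * (D + η)

theorem level_count (d : ℕ) (p γ η κ : ℝ) (hp : 0 < p) (hγ : 0 ≤ γ) (hη : 0 < η)
    (hηd : η ≤ d) (hκ : 0 < κ) (hκη : κ ≤ η / 2) : ∃ C : ℝ, 0 < C ∧ ∀ (n : ℝ) (j : ℕ) (a : (Fin d → ℤ) → ℤ),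
    ∑ m ∈ cubeF d j, |(a m : ℝ)| ^ p ≤ ((2:ℝ) ^ (theta d p γ η n j)) ^ (-p) →
    bet d η n j * ∑ m ∈ cubeF d j, Real.log (1 + |(a m : ℝ)|) ≤
      C * 2 ^ (n * d) * 2 ^ (-(κ * |(j:ℝ) - n|)) := by
  have hl2 : 0 < Real.log 2 := Real.log_pos (by norm_num)
  obtain ⟨C1, hC1, h1⟩ := lin_le_exp κ (2 * (1 + 1 / p)) (2 * (γ * Real.log 2)) hκ (by positivity) (by positivity)
  obtain ⟨C2, hC2, h2⟩ := lin_le_exp κ (2 * (1 + 1 / p)) ((d + η) * (1 + 1 / p)) hκ (by positivity) (by positivity)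
  refine ⟨C1 + C2, by positivity, fun n j a ha => ?_⟩
  rw [← Real.rpow_mul (by norm_num)] at ha
  rcases le_or_gt (j:ℝ) n with hj | hj
  · have hh : 0 ≤ n - j := by linarith
    have hβ : bet d η n j = 2 := by unfold bet; rw [max_eq_right (by linarith)]; ring
    have hθ : theta d p γ η n j = -((j:ℝ) * d / p) - (n - j) * γ := by unfold theta; rw [if_pos hj]
    have habs : |(j:ℝ) - n| = n - j := by rw [abs_of_nonpos (by linarith)]; ring
    rw [hβ, habs]
    rw [hθ] at ha
    set T : ℝ := 2 ^ ((n - j) * γ) with hT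
    have hT1 : 1 ≤ T := Real.one_le_rpow (by norm_num) (by positivity)
    have hlog : Real.log T = (n - j) * γ * Real.log 2 := Real.log_rpow (by norm_num) _
    have hsum : ∑ m ∈ cubeF d j, Real.log (1 + |(a m : ℝ)|) ≤
        2 ^ ((j:ℝ) * d) * (1 + (n - j) * γ * Real.log 2 + 1 / p) := by
      calc ∑ m ∈ cubeF d j, Real.log (1 + |(a m : ℝ)|)
          ≤ ∑ m ∈ cubeF d j, (1 + Real.log T + 1 / p * T ^ (-p) * |(a m:ℝ)| ^ p) :=
            Finset.sum_le_sum (fun m _ => log_int2 p T hp hT1 (a m))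
        _ = 2 ^ ((j:ℝ) * d) * (1 + Real.log T) + 1 / p * T ^ (-p) * ∑ m ∈ cubeF d j, |(a m:ℝ)| ^ p := by
            rw [Finset.sum_add_distrib, Finset.sum_const, nsmul_eq_mul, cubeF_card, Finset.mul_sum]
        _ ≤ 2 ^ ((j:ℝ) * d) * (1 + Real.log T) + 1 / p * T ^ (-p) * 2 ^ ((-((j:ℝ) * d / p) - (n - j) * γ) * -p) := by
            gcongr
        _ = _ := by
            rw [hT, ← Real.rpow_mul (by norm_num), mul_assoc (1/p), ← Real.rpow_add (by norm_num),
              show (n - j) * γ * -p + (-((j:ℝ) * d / p) - (n - j) * γ) * -p = (j:ℝ) * d by field_simp; ring,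
              ← hT, hlog]
            ring
    have h3 := h1 (n - j) hh
    have e1 : (2:ℝ) ^ ((j:ℝ) * d) * 2 ^ (κ * (n - j)) ≤ 2 ^ (n * d) * 2 ^ (-(κ * (n - j))) := by
      rw [← Real.rpow_add (by norm_num), ← Real.rpow_add (by norm_num)]
      apply Real.rpow_le_rpow_of_exponent_le (by norm_num)
      nlinarith
    calc 2 * ∑ m ∈ cubeF d j, Real.log (1 + |(a m : ℝ)|)
        ≤ 2 * (2 ^ ((j:ℝ) * d) * (1 + (n - j) * γ * Real.log 2 + 1 / p)) := by gcongr
      _ = 2 ^ ((j:ℝ) * d) * (2 * (1 + 1 / p) + 2 * (γ * Real.log 2) * (n - j)) := by ring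
      _ ≤ 2 ^ ((j:ℝ) * d) * (C1 * 2 ^ (κ * (n - j))) := by gcongr
      _ = C1 * (2 ^ ((j:ℝ) * d) * 2 ^ (κ * (n - j))) := by ring
      _ ≤ C1 * (2 ^ (n * d) * 2 ^ (-(κ * (n - j)))) := by gcongr
      _ ≤ (C1 + C2) * (2 ^ (n * d) * 2 ^ (-(κ * (n - j)))) := by gcongr; linarith
      _ = _ := by ring
  · have hh : 0 ≤ j - n := by linarith
    have hβ : bet d η n j = 2 + (j - n) * (d + η) := by unfold bet; rw [max_eq_left (by linarith)]
    have hθ : theta d p γ η n j = (-(n * d) + (j - n) * η) / p := by unfold theta; rw [if_neg (by linarith)]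
    have habs : |(j:ℝ) - n| = j - n := by rw [abs_of_nonneg (by linarith)]
    rw [hβ, habs]
    rw [hθ, show (-(n * d) + (j - n) * η) / p * -p = n * d - (j - n) * η by field_simp; ring] at ha
    have hsum : ∑ m ∈ cubeF d j, Real.log (1 + |(a m : ℝ)|) ≤ (1 + 1 / p) * 2 ^ (n * d - (j - n) * η) := by
      calc ∑ m ∈ cubeF d j, Real.log (1 + |(a m : ℝ)|)
          ≤ ∑ m ∈ cubeF d j, (1 + 1 / p) * |(a m:ℝ)| ^ p :=
            Finset.sum_le_sum (fun m _ => log_int1 p hp (a m))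
        _ = (1 + 1 / p) * ∑ m ∈ cubeF d j, |(a m:ℝ)| ^ p := by rw [Finset.mul_sum]
        _ ≤ _ := by gcongr
    have h3 := h2 (j - n) hh
    have e1 : (2:ℝ) ^ (n * d - (j - n) * η) * 2 ^ (κ * (j - n)) ≤ 2 ^ (n * d) * 2 ^ (-(κ * (j - n))) := by
      rw [← Real.rpow_add (by norm_num), ← Real.rpow_add (by norm_num)]
      apply Real.rpow_le_rpow_of_exponent_le (by norm_num)
      nlinarith
    calc (2 + (j - n) * (d + η)) * ∑ m ∈ cubeF d j, Real.log (1 + |(a m : ℝ)|)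
        ≤ (2 + (j - n) * (d + η)) * ((1 + 1 / p) * 2 ^ (n * d - (j - n) * η)) := by gcongr
      _ = 2 ^ (n * d - (j - n) * η) * (2 * (1 + 1 / p) + (d + η) * (1 + 1 / p) * (j - n)) := by ring
      _ ≤ 2 ^ (n * d - (j - n) * η) * (C2 * 2 ^ (κ * (j - n))) := by gcongr
      _ = C2 * (2 ^ (n * d - (j - n) * η) * 2 ^ (κ * (j - n))) := by ring
      _ ≤ C2 * (2 ^ (n * d) * 2 ^ (-(κ * (j - n)))) := by gcongr
      _ ≤ (C1 + C2) * (2 ^ (n * d) * 2 ^ (-(κ * (j - n)))) := by gcongr; linarith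
      _ = _ := by ring

theorem bet_ge (D η n j : ℝ) (hD : 0 ≤ D) (hη : 0 ≤ η) : 2 ≤ bet D η n j := by
  unfold bet
  have : 0 ≤ max (j - n) 0 * (D + η) := mul_nonneg (le_max_right _ _) (by positivity)
  linarith

theorem level_weight (d : ℕ) (η κ : ℝ) (hη : 0 < η)
    (hηd : η ≤ d) (hκ : 0 < κ) (hκη : κ ≤ η / 2) (n : ℝ) (j : ℕ) :
    (2:ℝ) ^ ((j:ℝ) * d) * 2 ^ (-(bet d η n j)) ≤ 2 ^ (n * d) * 2 ^ (-(κ * |(j:ℝ) - n|)) := by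
  rw [← Real.rpow_add (by norm_num), ← Real.rpow_add (by norm_num)]
  apply Real.rpow_le_rpow_of_exponent_le (by norm_num)
  unfold bet
  rcases le_or_gt (j:ℝ) n with hj | hj
  · rw [max_eq_right (by linarith), abs_of_nonpos (by linarith)]
    nlinarith
  · rw [max_eq_left (by linarith), abs_of_nonneg (by linarith)]
    nlinarith

theorem level_error {M : Type*} (A : Finset M) (x z : M → ℂ) (p r w t : ℝ) (hp : 0 < p) (hpr : p ≤ r)
    (hw : 0 < w) (ht : 0 < t) (hx : ∑ m ∈ A, ‖x m‖ ^ p ≤ w ^ p)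
    (hz1 : ∀ m ∈ A, ‖z m‖ ≤ 2 * (w * t)) (hz2 : ∀ m ∈ A, ‖z m‖ ≤ 2 * ‖x m‖) :
    (∑ m ∈ A, ‖z m‖ ^ r) ^ (1 / r) ≤ 2 * w * t * (A.card : ℝ) ^ (1 / r) ∧
    (∑ m ∈ A, ‖z m‖ ^ r) ^ (1 / r) ≤ 2 * w * t ^ (1 - p / r) := by
  have hr : 0 < r := hp.trans_le hpr
  constructor
  · have h1 : ∑ m ∈ A, ‖z m‖ ^ r ≤ A.card * (2 * (w * t)) ^ r := by
      rw [← nsmul_eq_mul]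
      exact Finset.sum_le_card_nsmul _ _ _ (fun m hm => Real.rpow_le_rpow (norm_nonneg _) (hz1 m hm) hr.le)
    refine (Real.rpow_le_rpow (Finset.sum_nonneg fun _ _ => by positivity) h1 (by positivity)).trans ?_
    rw [Real.mul_rpow (by positivity) (by positivity), ← Real.rpow_mul (by positivity),
      mul_one_div_cancel hr.ne', Real.rpow_one]
    apply le_of_eq; ring
  · have h1 : ∑ m ∈ A, ‖z m‖ ^ r ≤ (2 * (w * t)) ^ (r - p) * (2 ^ p * w ^ p) := by
      calc ∑ m ∈ A, ‖z m‖ ^ r ≤ ∑ m ∈ A, (2 * (w * t)) ^ (r - p) * (2 ^ p * ‖x m‖ ^ p) := by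
            refine Finset.sum_le_sum fun m hm => ?_
            rw [← Real.mul_rpow (by norm_num) (norm_nonneg _)]
            have : ‖z m‖ ^ r = ‖z m‖ ^ (r - p) * ‖z m‖ ^ p := by
              rw [← Real.rpow_add_of_nonneg (norm_nonneg _) (by linarith) hp.le]; congr 1; ring
            rw [this]
            exact mul_le_mul (Real.rpow_le_rpow (norm_nonneg _) (hz1 m hm) (by linarith))
              (Real.rpow_le_rpow (norm_nonneg _) (hz2 m hm) hp.le) (by positivity) (by positivity)
        _ = (2 * (w * t)) ^ (r - p) * (2 ^ p * ∑ m ∈ A, ‖x m‖ ^ p) := by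
            rw [Finset.mul_sum, Finset.mul_sum]
        _ ≤ _ := by gcongr
    refine (Real.rpow_le_rpow (Finset.sum_nonneg fun _ _ => by positivity) h1 (by positivity)).trans ?_
    apply le_of_eq
    have e : (2 * (w * t)) ^ (r - p) * (2 ^ p * w ^ p) = (2 * w) ^ r * t ^ (r - p) := by
      rw [← Real.mul_rpow (by norm_num) hw.le, ← mul_assoc, Real.mul_rpow (by positivity) ht.le,
        mul_right_comm, ← Real.rpow_add (by positivity)]
      congr 2; ring
    rw [e, Real.mul_rpow (by positivity) (by positivity), ← Real.rpow_mul (by positivity),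
      ← Real.rpow_mul (by positivity), mul_one_div_cancel hr.ne', Real.rpow_one]
    congr 2; field_simp

theorem exponent_error (D p r s σ1 σ2 κ η n j : ℝ) (hp : 0 < p) (hr : 0 < r) (hs : s = σ1 - σ2)
    (α : ℝ) (hα : α = 1 / p - 1 / r) (hκ : κ ≤ (s - D * α) / 2) (hη : η * α ≤ (s - D * α) / 2) (e : ℝ)
    (he1 : e ≤ 2 * 2 ^ (-(j * (σ1 - D / p))) * 2 ^ (theta D p (s + κ) η n j) * (2 ^ (j * D)) ^ (1 / r))
    (he2 : e ≤ 2 * 2 ^ (-(j * (σ1 - D / p))) * (2 ^ (theta D p (s + κ) η n j)) ^ (1 - p / r)) :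
    2 ^ (j * (σ2 - D / r)) * e ≤ 2 * 2 ^ (-(n * s)) * (2:ℝ) ^ (-(κ * |j - n|)) := by
  rcases le_or_gt j n with hj | hj
  · refine (mul_le_mul_of_nonneg_left he1 (by positivity)).trans ?_
    rw [← Real.rpow_mul (by norm_num), mul_assoc 2, mul_assoc 2, mul_left_comm, mul_assoc 2,
      ← Real.rpow_add (by norm_num), ← Real.rpow_add (by norm_num), ← Real.rpow_add (by norm_num),
      ← Real.rpow_add (by norm_num)]
    refine mul_le_mul_of_nonneg_left (Real.rpow_le_rpow_of_exponent_le (by norm_num) ?_) (by norm_num)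
    unfold theta
    rw [if_pos hj, abs_of_nonpos (by linarith), hs]
    apply le_of_eq
    field_simp
    ring
  · refine (mul_le_mul_of_nonneg_left he2 (by positivity)).trans ?_
    rw [← Real.rpow_mul (by norm_num), mul_assoc 2, mul_left_comm, mul_assoc 2,
      ← Real.rpow_add (by norm_num), ← Real.rpow_add (by norm_num), ← Real.rpow_add (by norm_num)]
    refine mul_le_mul_of_nonneg_left (Real.rpow_le_rpow_of_exponent_le (by norm_num) ?_) (by norm_num)
    unfold theta
    rw [if_neg (by linarith), abs_of_nonneg (by linarith)]
    have e1 : (-(n * D) + (j - n) * η) / p * (1 - p / r) = (-(n * D) + (j - n) * η) * α := by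
      rw [hα]; field_simp
    have e2 : j * (σ2 - D / r) + -(j * (σ1 - D / p)) = - j * (s - D * α) := by
      rw [hα, hs]; field_simp; ring
    rw [e1, ← add_assoc, e2]
    nlinarith

theorem round_complex (tr : ℝ → ℤ) (htr : ∀ x, |(tr x : ℝ)| ≤ |x| ∧ |x - tr x| ≤ |x| ∧ |x - tr x| ≤ 1)
    (τ : ℝ) (hτ : 0 < τ) (x : ℂ) :
    ‖x - τ * ((tr (x.re / τ) : ℂ) + (tr (x.im / τ) : ℂ) * Complex.I)‖ ≤ 2 * τ ∧
    ‖x - τ * ((tr (x.re / τ) : ℂ) + (tr (x.im / τ) : ℂ) * Complex.I)‖ ≤ 2 * ‖x‖ := by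
  set z := x - τ * ((tr (x.re / τ) : ℂ) + (tr (x.im / τ) : ℂ) * Complex.I) with hz
  have hre : z.re = τ * (x.re / τ - tr (x.re / τ)) := by
    simp [hz]; field_simp
  have him : z.im = τ * (x.im / τ - tr (x.im / τ)) := by
    simp [hz]; field_simp
  have h0 := Complex.norm_le_abs_re_add_abs_im z
  rw [hre, him, abs_mul, abs_mul, abs_of_pos hτ] at h0
  obtain ⟨-, h1, h2⟩ := htr (x.re / τ)
  obtain ⟨-, h3, h4⟩ := htr (x.im / τ)
  rw [abs_div, abs_of_pos hτ, le_div_iff₀ hτ] at h1 h3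
  have h5 := Complex.abs_re_le_norm x
  have h6 := Complex.abs_im_le_norm x
  constructor <;> nlinarith

theorem round_sum {M : Type*} (A : Finset M) (tr : ℝ → ℤ) (htr : ∀ x, |(tr x : ℝ)| ≤ |x|)
    (x : M → ℂ) (y : M → ℝ) (hy : ∀ m, |y m| ≤ ‖x m‖) (p w t : ℝ) (hp : 0 < p) (hw : 0 < w) (ht : 0 < t)
    (hx : ∑ m ∈ A, ‖x m‖ ^ p ≤ w ^ p) :
    ∑ m ∈ A, |(tr (y m / (w * t)) : ℝ)| ^ p ≤ t ^ (-p) := by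
  calc ∑ m ∈ A, |(tr (y m / (w * t)) : ℝ)| ^ p ≤ ∑ m ∈ A, ‖x m‖ ^ p * (w * t) ^ (-p) := by
        refine Finset.sum_le_sum fun m _ => ?_
        rw [Real.rpow_neg (by positivity), ← div_eq_mul_inv, ← Real.div_rpow (by positivity) (by positivity)]
        refine Real.rpow_le_rpow (abs_nonneg _) ?_ hp.le
        refine (htr _).trans ?_
        rw [abs_div, abs_of_pos (by positivity : 0 < w * t)]
        gcongr
        exact hy m
    _ = (∑ m ∈ A, ‖x m‖ ^ p) * (w * t) ^ (-p) := by rw [Finset.sum_mul]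
    _ ≤ w ^ p * (w * t) ^ (-p) := by gcongr
    _ = _ := by
        rw [Real.mul_rpow hw.le ht.le, ← mul_assoc, ← Real.rpow_add hw]; simp

theorem card_le_of_exp (k : ℕ) (hk : 0 < k) (c : ℕ)
    (h : (c:ℝ) ≤ Real.exp (k * Real.log 2 / 2)) : c ≤ 2 ^ (k - 1) := by
  have hl := Real.log_pos (by norm_num : (1:ℝ) < 2)
  rcases eq_or_lt_of_le (Nat.succ_le_of_lt hk) with h1 | h1
  · subst h1
    have : (c:ℝ) < 2 := by
      refine h.trans_lt ?_
      conv_rhs => rw [← Real.exp_log (by norm_num : (0:ℝ) < 2)]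
      apply Real.exp_lt_exp.mpr; push_cast; linarith
    have : c < 2 := by exact_mod_cast this
    simp; omega
  · have h2 : (c:ℝ) ≤ ((2 ^ (k-1) : ℕ) : ℝ) := by
      refine h.trans ?_
      have : (((2 ^ (k-1) : ℕ)) : ℝ) = Real.exp ((k-1:ℕ) * Real.log 2) := by
        rw [Real.exp_nat_mul, Real.exp_log (by norm_num)]; push_cast; rfl
      rw [this]
      apply Real.exp_le_exp.mpr
      rw [Nat.cast_sub (by omega)]
      have : (2:ℝ) ≤ k := by exact_mod_cast h1
      push_cast
      nlinarith
    exact_mod_cast h2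

theorem stmt4 (d : ℕ) (hd : 1 ≤ d) (σ1 σ2 u1 p1 u2 p2 : ℝ) (q1 q2 : ℝ≥0∞)
    (hq1 : 0 < q1) (hq2 : 0 < q2)
    (hp1 : 0 < p1) (hp1u1 : p1 ≤ u1) (hp2 : 0 < p2) (hp2u2 : p2 ≤ u2)
    (h1 : p1 ≤ u2)
    (h2 : (σ1 - σ2) / d > 1 / p1 - 1 / u2) :
    ∃ c : ℝ, 0 < c ∧ ∀ k : ℕ, 0 < k →
      entropyNumber (nNorm d σ1 u1 p1 q1) (nNorm d σ2 u2 p2 q2) k ≤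
        ENNReal.ofReal (c * (k : ℝ) ^ (-(σ1 - σ2) / d)) := by
  have hu2 : 0 < u2 := hp1.trans_le h1
  have hD : (1:ℝ) ≤ d := by exact_mod_cast hd
  have hD0 : (0:ℝ) < d := by linarith
  have hl2 : 0 < Real.log 2 := Real.log_pos (by norm_num)
  obtain ⟨s, hs⟩ : ∃ s, s = σ1 - σ2 := ⟨_, rfl⟩
  obtain ⟨α, hα⟩ : ∃ α, α = 1 / p1 - 1 / u2 := ⟨_, rfl⟩
  rw [← hs, ← hα] at h2
  rw [← hs]
  have hα0 : 0 ≤ α := by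
    rw [hα, sub_nonneg]; exact one_div_le_one_div_of_le hp1 h1
  have hδ : 0 < s - d * α := by
    rw [gt_iff_lt, lt_div_iff₀ hD0] at h2; linarith
  have hs0 : 0 < s := by have := mul_nonneg hD0.le hα0; linarith
  obtain ⟨η, hη, hηd, hηα⟩ : ∃ η : ℝ, 0 < η ∧ η ≤ d ∧ η * α ≤ (s - d * α) / 2 := by
    refine ⟨min d ((s - d * α) / (2 * (α + 1))), lt_min hD0 (by positivity), min_le_left _ _, ?_⟩
    calc _ ≤ ((s - d * α) / (2 * (α + 1))) * (α + 1) := by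
          gcongr
          · exact min_le_right _ _
          · linarith
      _ = _ := by field_simp
  obtain ⟨κ, hκ, hκδ, hκη⟩ : ∃ κ : ℝ, 0 < κ ∧ κ ≤ (s - d * α) / 2 ∧ κ ≤ η / 2 :=
    ⟨min ((s - d * α) / 2) (η / 2), lt_min (by positivity) (by positivity), min_le_left _ _, min_le_right _ _⟩
  obtain ⟨Cu, hCu, hupper⟩ := upper_bound d σ2 u2 p2 q2 hq2 hp2 hp2u2 κ hκ
  obtain ⟨C1, hC1, hcount⟩ := level_count d p1 (s + κ) η κ hp1 (by positivity) hη hηd hκ hκη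
  obtain ⟨Cs, hCs, hgeom⟩ := sum_geom_abs κ hκ
  obtain ⟨tr, htr⟩ := exists_round
  obtain ⟨C2, hC2⟩ : ∃ C2, C2 = (2 * C1 + 16) * Cs := ⟨_, rfl⟩
  have hC20 : 0 < C2 := by rw [hC2]; positivity
  refine ⟨Cu * 2 * (Real.log 2 / (2 * C2)) ^ (-s / d), by positivity, fun k hk => ?_⟩
  have hk0 : (0:ℝ) < k := by exact_mod_cast hk
  -- choice of the real level `n`
  obtain ⟨n, hn⟩ : ∃ n : ℝ, (2:ℝ) ^ (n * d) = k * (Real.log 2 / (2 * C2)) := by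
    refine ⟨Real.logb 2 (k * (Real.log 2 / (2 * C2))) / d, ?_⟩
    rw [div_mul_cancel₀ _ hD0.ne', Real.rpow_logb (by norm_num) (by norm_num) (by positivity)]
  have hfin : Cu * (2 * 2 ^ (-(n * s))) = Cu * 2 * (Real.log 2 / (2 * C2)) ^ (-s / d) * (k : ℝ) ^ (-s / d) := by
    rw [mul_assoc (Cu * 2), ← Real.mul_rpow (by positivity) (by positivity), mul_comm (Real.log 2 / (2 * C2)),
      ← hn, ← Real.rpow_mul (by norm_num), mul_assoc]
    congr 3; field_simp
  rw [← hfin]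
  have hE : 0 < Cu * (2 * (2:ℝ) ^ (-(n * s))) := by positivity
  -- coding
  let w : ℕ → ℝ := fun j => 2 ^ (-((j:ℝ) * (σ1 - d / p1)))
  let t : ℕ → ℝ := fun j => 2 ^ (theta d p1 (s + κ) η n j)
  have hw : ∀ j, 0 < w j := fun j => by positivity
  have ht : ∀ j, 0 < t j := fun j => by positivity
  classical
  let part : Bool → ℂ → ℝ := fun b z => if b then z.re else z.im
  have hpart : ∀ b z, |part b z| ≤ ‖z‖ := by
    intro b z
    cases b
    · exact Complex.abs_im_le_norm z
    · exact Complex.abs_re_le_norm z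
  let enc : (ℕ → (Fin d → ℤ) → ℂ) → ((Σ _ : ℕ, (Fin d → ℤ)) × Bool → ℤ) := fun x i =>
    if i.1.2 ∈ cubeF d i.1.1 then tr (part i.2 (x i.1.1 i.1.2) / (w i.1.1 * t i.1.1)) else 0
  let dec : ((Σ _ : ℕ, (Fin d → ℤ)) × Bool → ℤ) → (ℕ → (Fin d → ℤ) → ℂ) := fun a j m =>
    ((w j * t j : ℝ) : ℂ) * ((a (⟨j, m⟩, true) : ℂ) + (a (⟨j, m⟩, false) : ℂ) * Complex.I)
  let S : Set ((Σ _ : ℕ, (Fin d → ℤ)) × Bool → ℤ) := {a | ∃ x, nNorm d σ1 u1 p1 q1 x ≤ 1 ∧ enc x = a}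
  -- per-level bound for codes
  have hlev : ∀ a ∈ S, ∀ (j : ℕ) (b : Bool), bet d η n j * ∑ m ∈ cubeF d j, Real.log (1 + |(a (⟨j, m⟩, b) : ℝ)|) ≤
      C1 * 2 ^ (n * d) * 2 ^ (-(κ * |(j:ℝ) - n|)) := by
    rintro a ⟨x, hx, rfl⟩ j b
    refine hcount n j (fun m => enc x (⟨j, m⟩, b)) ?_
    have := round_sum (cubeF d j) tr (fun x => (htr x).1) (x j) (fun m => part b (x j m))
      (fun m => hpart b _) p1 (w j) (t j) hp1 (hw j) (ht j) (lower_bound d σ1 u1 p1 q1 hq1 hp1 x hx j)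
    refine le_trans (le_of_eq ?_) this
    refine Finset.sum_congr rfl fun m hm => ?_
    simp only [enc, if_pos hm]
  -- cut-off level
  obtain ⟨J, hJ⟩ : ∃ J : ℕ, ∀ j ≥ J, C1 * 2 ^ (n * d) * 2 ^ (-(κ * |(j:ℝ) - n|)) < Real.log 2 := by
    have hsm : Summable (fun j : ℕ => (2:ℝ) ^ (-(κ * |(j:ℝ) - n|))) :=
      summable_of_sum_le (fun j => by positivity) (hgeom n)
    have := (hsm.tendsto_atTop_zero.const_mul (C1 * 2 ^ (n * d)))
    rw [mul_zero] at this
    exact Filter.eventually_atTop.mp (this.eventually (gt_mem_nhds hl2))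
  let F : Finset ((Σ _ : ℕ, (Fin d → ℤ)) × Bool) := ((Finset.range J).sigma (fun j => cubeF d j)) ×ˢ Finset.univ
  have hvan : ∀ a ∈ S, ∀ i, i ∉ F → a i = 0 := by
    rintro a haS ⟨⟨j, m⟩, b⟩ hi
    by_cases hm : m ∈ cubeF d j
    · have hjJ : J ≤ j := by
        by_contra hcon
        exact hi (by simp [F, hm]; omega)
      by_contra hne
      have hb := (hlev a haS j b).trans_lt (hJ j hjJ)
      have hsing : Real.log (1 + |(a (⟨j, m⟩, b) : ℝ)|) ≤ ∑ m ∈ cubeF d j, Real.log (1 + |(a (⟨j, m⟩, b) : ℝ)|) :=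
        Finset.single_le_sum (f := fun m => Real.log (1 + |(a (⟨j, m⟩, b) : ℝ)|))
          (fun m _ => Real.log_nonneg (by linarith [abs_nonneg (a (⟨j, m⟩, b) : ℝ)])) hm
      have h1a : (1:ℝ) ≤ |(a (⟨j, m⟩, b) : ℝ)| := by
        have := Int.one_le_abs hne
        exact_mod_cast this
      have hlog : Real.log 2 ≤ Real.log (1 + |(a (⟨j, m⟩, b) : ℝ)|) :=
        Real.log_le_log (by norm_num) (by linarith)
      have hbet := bet_ge d η n j hD0.le hη.le
      nlinarith
    · obtain ⟨x, hx, rfl⟩ := haS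
      simp only [enc, if_neg hm]
  have hsumF : ∀ f : (Σ _ : ℕ, (Fin d → ℤ)) × Bool → ℝ, ∑ i ∈ F, f i =
      ∑ j ∈ Finset.range J, (∑ m ∈ cubeF d j, f (⟨j, m⟩, true) + ∑ m ∈ cubeF d j, f (⟨j, m⟩, false)) := by
    intro f
    simp only [F, Finset.sum_product, Finset.sum_sigma, Fintype.sum_bool, Finset.sum_add_distrib]
  have hcard : ∀ G : Finset ((Σ _ : ℕ, (Fin d → ℤ)) × Bool → ℤ), (↑G : Set _) ⊆ S → G.card ≤ 2 ^ (k - 1) := by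
    intro G hG
    apply card_le_of_exp k hk
    have hc := count_supp F (fun i => bet d η n i.1.1) (fun i => bet_ge _ _ _ _ hD0.le hη.le)
      (2 * C1 * 2 ^ (n * d) * Cs) G (fun a ha => hvan a (hG ha)) ?_
    · refine hc.trans (Real.exp_le_exp.mpr ?_)
      have hW : ∑ i ∈ F, (2:ℝ) ^ (-(bet d η n i.1.1)) ≤ 2 * 2 ^ (n * d) * Cs := by
        rw [hsumF]
        calc _ ≤ ∑ j ∈ Finset.range J, 2 * 2 ^ (n * d) * (2:ℝ) ^ (-(κ * |(j:ℝ) - n|)) := by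
              refine Finset.sum_le_sum fun j _ => ?_
              have := level_weight d η κ hη hηd hκ hκη n j
              simp only [Finset.sum_const, nsmul_eq_mul, cubeF_card]
              linarith
          _ = 2 * 2 ^ (n * d) * ∑ j ∈ Finset.range J, (2:ℝ) ^ (-(κ * |(j:ℝ) - n|)) := by rw [Finset.mul_sum]
          _ ≤ _ := mul_le_mul_of_nonneg_left (hgeom n _) (by positivity)
      have hfinal : (2 * C1 * 2 ^ (n * d) * Cs) + 8 * (2 * 2 ^ (n * d) * Cs) = k * Real.log 2 / 2 := by
        rw [show (2 * C1 * 2 ^ (n * d) * Cs) + 8 * (2 * 2 ^ (n * d) * Cs) = C2 * 2 ^ (n * d) by rw [hC2]; ring, hn]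
        field_simp
      linarith
    · intro a ha
      rw [hsumF]
      calc _ ≤ ∑ j ∈ Finset.range J, 2 * C1 * 2 ^ (n * d) * (2:ℝ) ^ (-(κ * |(j:ℝ) - n|)) := by
            refine Finset.sum_le_sum fun j _ => ?_
            have e1 := hlev a (hG ha) j true
            have e2 := hlev a (hG ha) j false
            simp only [← Finset.mul_sum]
            linarith
        _ = 2 * C1 * 2 ^ (n * d) * ∑ j ∈ Finset.range J, (2:ℝ) ^ (-(κ * |(j:ℝ) - n|)) := by rw [Finset.mul_sum]
        _ ≤ _ := mul_le_mul_of_nonneg_left (hgeom n _) (by positivity)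
  obtain ⟨c, hc⟩ := cover_of_card S (2 ^ (k - 1)) dec hcard
  refine sInf_le ⟨ENNReal.ofReal_pos.mpr hE, c, fun x hx => ?_⟩
  obtain ⟨i, hi⟩ := hc (enc x) ⟨x, hx, rfl⟩
  refine ⟨i, ?_⟩
  rw [hi]
  refine hupper n _ (by positivity) _ fun j => ?_
  have hrc : ∀ m ∈ cubeF d j, ‖(x - dec (enc x)) j m‖ ≤ 2 * (w j * t j) ∧ ‖(x - dec (enc x)) j m‖ ≤ 2 * ‖x j m‖ := by
    intro m hm
    have := round_complex tr htr (w j * t j) (mul_pos (hw j) (ht j)) (x j m)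
    have e : (x - dec (enc x)) j m = x j m - ((w j * t j : ℝ) : ℂ) * ((tr ((x j m).re / (w j * t j)) : ℂ) + (tr ((x j m).im / (w j * t j)) : ℂ) * Complex.I) := by
      simp [dec, enc, hm, part]
    rw [e]; exact this
  have herr := level_error (cubeF d j) (x j) ((x - dec (enc x)) j) p1 u2 (w j) (t j) hp1 h1 (hw j) (ht j)
    (lower_bound d σ1 u1 p1 q1 hq1 hp1 x hx j) (fun m hm => (hrc m hm).1) (fun m hm => (hrc m hm).2)
  rw [cubeF_card] at herr
  exact exponent_error d p1 u2 s σ1 σ2 κ η n j hp1 hu2 hs α hα hκδ hηα _ herr.1 herr.2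
end

section
/- Let d ≥ 1 be an integer, σ1, σ2 ∈ ℝ, 0 < q_i ≤ ∞ and 0 < p_i ≤ u_i < ∞ for i = 1, 2. Assume p1 < p2, p1/u1 < p2/u2 and (σ1 − σ2)/d > 1/p1 − 1/p2. Then there exists c > 0 such that for all k ∈ ℕ, e_k(id : ñ^{σ1}_{u1,p1,q1}(Q) → ñ^{σ2}_{u2,p2,q2}(Q)) ≤ c · k^{−(σ1−σ2)/d}. -/
open scoped ENNReal NNReal

open Finset in
lemma aux_theta (p : ℝ) (hp : 0 < p) : ∃ C : ℝ, ∃ n : ℕ, 0 < C ∧ ∀ A : ℝ, 0 < A → ∀ R : ℤ,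
    ∑ z ∈ Finset.Icc (-R) R, Real.exp (-A * |(z:ℝ)| ^ p) ≤ 1 + C * (A ^ n)⁻¹ * Real.exp (-A/2) := by
  obtain ⟨n, hn⟩ := exists_nat_gt (2 / p)
  have hpn : 2 ≤ p * n := by
    rw [div_lt_iff₀ hp] at hn; linarith
  have hs : Summable (fun z : ℤ => 1 / (z:ℝ)^2) := Real.summable_one_div_int_pow.2 (by norm_num)
  set S := ∑' z : ℤ, 1 / (z:ℝ)^2
  have hS0 : 0 ≤ S := tsum_nonneg (fun z => by positivity)
  refine ⟨(n.factorial : ℝ) * 2 ^ n * (S + 1), n, by positivity, fun A hA R => ?_⟩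
  set K := (n.factorial : ℝ) * 2 ^ n * (A ^ n)⁻¹ * Real.exp (-A/2) with hK
  have hK0 : 0 ≤ K := by positivity
  have hterm : ∀ z : ℤ, Real.exp (-A * |(z:ℝ)| ^ p) ≤ (if z = 0 then 1 else 0) + K * (1 / (z:ℝ)^2) := by
    intro z
    by_cases hz : z = 0
    · subst hz
      simp [Real.zero_rpow hp.ne']
    · simp only [hz, if_false, zero_add]
      have hz1 : (1:ℝ) ≤ |(z:ℝ)| := by exact_mod_cast Int.one_le_abs hz
      have hx1 : (1:ℝ) ≤ |(z:ℝ)| ^ p := Real.one_le_rpow hz1 hp.le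
      set x := |(z:ℝ)| ^ p with hx
      have e1 : Real.exp (-A * x) ≤ Real.exp (-A/2) * Real.exp (-(A/2*x)) := by
        rw [← Real.exp_add]
        apply Real.exp_le_exp.2
        nlinarith
      have e2 : Real.exp (-(A/2*x)) ≤ n.factorial * ((A/2*x)^n)⁻¹ := by
        have := Real.pow_div_factorial_le_exp (A/2*x) (by positivity) n
        rw [Real.exp_neg]
        have h3 : ((n.factorial:ℝ) * ((A/2*x)^n)⁻¹) = ((A/2*x)^n / n.factorial)⁻¹ := by
          rw [inv_div]; rfl
        rw [h3]
        apply inv_anti₀ (by positivity) this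
      have e3 : (z:ℝ)^2 ≤ x ^ n := by
        rw [hx, ← Real.rpow_natCast (|(z:ℝ)| ^ p), ← Real.rpow_mul (abs_nonneg _), ← sq_abs, ← Real.rpow_natCast]
        exact Real.rpow_le_rpow_of_exponent_le hz1 (by simpa using hpn)
      have hz2 : 0 < (z:ℝ)^2 := by positivity
      calc _ ≤ _ := e1
        _ ≤ Real.exp (-A/2) * (n.factorial * ((A/2*x)^n)⁻¹) := by gcongr
        _ = K * (1 / x ^ n) := by
          rw [hK, mul_pow, div_pow]; field_simp
        _ ≤ K * (1 / (z:ℝ)^2) := by gcongr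
  calc _ ≤ ∑ z ∈ Finset.Icc (-R) R, ((if z = 0 then 1 else 0) + K * (1 / (z:ℝ)^2)) :=
        Finset.sum_le_sum (fun z _ => hterm z)
    _ ≤ 1 + K * S := by
        rw [Finset.sum_add_distrib, ← Finset.mul_sum]
        gcongr
        · rw [Finset.sum_ite_eq']; split_ifs <;> norm_num
        · exact hs.sum_le_tsum _ (fun z _ => by positivity)
    _ ≤ _ := by
        rw [hK]
        have : 0 ≤ (n.factorial : ℝ) * 2 ^ n * (A ^ n)⁻¹ * Real.exp (-A/2) := by positivity
        nlinarith

lemma aux_count {ι : Type*} [Fintype ι] [DecidableEq ι] (p : ℝ) (hp : 0 < p) (n A : ℝ)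
    (θ : ℝ) (hA : 0 < A) (hθ : ∀ R : ℤ, ∑ z ∈ Finset.Icc (-R) R, Real.exp (-A * |(z:ℝ)| ^ p) ≤ θ) :
    ∃ S : Finset (ι → ℤ), (∀ z : ι → ℤ, ∑ i, |(z i : ℝ)| ^ p ≤ n → z ∈ S) ∧
      (S.card : ℝ) ≤ Real.exp (A * n) * θ ^ (Fintype.card ι) := by
  classical
  set R : ℤ := ⌈n ^ (1/p)⌉
  refine ⟨(Fintype.piFinset (fun _ : ι => Finset.Icc (-R) R)).filter
    (fun z => ∑ i, |(z i : ℝ)| ^ p ≤ n), ?_, ?_⟩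
  · intro z hz
    rw [Finset.mem_filter]
    refine ⟨?_, hz⟩
    rw [Fintype.mem_piFinset]
    intro i
    rw [Finset.mem_Icc, ← abs_le]
    have h1 : |(z i : ℝ)| ^ p ≤ n :=
      (Finset.single_le_sum (f := fun i => |(z i : ℝ)| ^ p) (fun i _ => by positivity) (Finset.mem_univ i)).trans hz
    have h2 : |(z i : ℝ)| ≤ n ^ (1/p) := by
      have := Real.rpow_le_rpow (by positivity) h1 (by positivity : 0 ≤ 1/p)
      rwa [← Real.rpow_mul (abs_nonneg _), mul_one_div_cancel hp.ne', Real.rpow_one] at this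
    have h3 : |(z i : ℝ)| ≤ (R:ℝ) := h2.trans (Int.le_ceil _)
    exact_mod_cast h3
  · set P := Fintype.piFinset (fun _ : ι => Finset.Icc (-R) R)
    have h1 : ∀ z ∈ P.filter (fun z => ∑ i, |(z i : ℝ)| ^ p ≤ n),
        (1:ℝ) ≤ Real.exp (A * n) * ∏ i, Real.exp (-A * |(z i:ℝ)| ^ p) := by
      intro z hz
      have := (Finset.mem_filter.1 hz).2
      rw [← Real.exp_sum, ← Real.exp_add, ← Finset.mul_sum]
      apply Real.one_le_exp
      nlinarith
    calc ((P.filter (fun z => ∑ i, |(z i : ℝ)| ^ p ≤ n)).card : ℝ)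
        = ∑ z ∈ P.filter (fun z => ∑ i, |(z i : ℝ)| ^ p ≤ n), (1:ℝ) := by simp
      _ ≤ ∑ z ∈ P.filter (fun z => ∑ i, |(z i : ℝ)| ^ p ≤ n),
            Real.exp (A * n) * ∏ i, Real.exp (-A * |(z i:ℝ)| ^ p) := Finset.sum_le_sum h1
      _ ≤ ∑ z ∈ P, Real.exp (A * n) * ∏ i, Real.exp (-A * |(z i:ℝ)| ^ p) :=
          Finset.sum_le_sum_of_subset_of_nonneg (Finset.filter_subset _ _)
            (fun _ _ _ => by positivity)
      _ = Real.exp (A * n) * ∏ i : ι, ∑ z ∈ Finset.Icc (-R) R, Real.exp (-A * |(z:ℝ)| ^ p) := by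
          rw [← Finset.mul_sum, Finset.prod_univ_sum]
      _ ≤ _ := by
          gcongr
          rw [← Finset.card_univ]
          rw [← Finset.prod_const]
          exact Finset.prod_le_prod (fun i _ => Finset.sum_nonneg (fun _ _ => by positivity))
            (fun i _ => hθ R)

/-- log of counting bound, in terms of `T = 2^τ`. -/
lemma aux_phi (p : ℝ) (hp : 0 < p) (ε : ℝ) (hε : 0 < ε) : ∃ C : ℝ, 0 < C ∧
    ∀ (ι : Type) [Fintype ι] [DecidableEq ι] (M τ : ℝ), (Fintype.card ι : ℝ) ≤ M →
    ∃ S : Finset (ι → ℤ), (∀ z : ι → ℤ, ∑ i, |(z i : ℝ)| ^ p ≤ M * (2:ℝ) ^ (-(τ * p)) → z ∈ S) ∧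
      (S.card : ℝ) ≤ Real.exp (C * M * (if 0 ≤ τ then (2:ℝ) ^ (-(τ * (p - ε))) else 2 ^ (-(τ * ε)))) := by
  obtain ⟨C, n, hC, hθ⟩ := aux_theta p hp
  have hlin : ∀ t : ℝ, 0 ≤ t → t ≤ 2 ^ (t * ε) / (ε * Real.log 2) := by
    intro t ht
    have hl : 0 < Real.log 2 := Real.log_pos (by norm_num)
    rw [le_div_iff₀ (by positivity), Real.rpow_def_of_pos (by norm_num)]
    have := Real.add_one_le_exp (Real.log 2 * (t * ε))
    nlinarith
  have hl : 0 < Real.log 2 := Real.log_pos (by norm_num)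
  have hl1 : Real.log 2 ≤ 1 := by have := Real.log_two_lt_d9; linarith
  refine ⟨2 + 2 * p / (ε * Real.log 2) + C + (p * n) / (ε * Real.log 2), by positivity, ?_⟩
  intro ι _ _ M τ hM
  have hM0 : 0 ≤ M := le_trans (by positivity) hM
  have hfin : ∀ A > 0, ∃ S : Finset (ι → ℤ), (∀ z : ι → ℤ, ∑ i, |(z i : ℝ)| ^ p ≤ M * (2:ℝ) ^ (-(τ * p)) → z ∈ S) ∧
      (S.card : ℝ) ≤ Real.exp (M * (A * (2:ℝ) ^ (-(τ * p)) + Real.log (1 + C * (A ^ n)⁻¹ * Real.exp (-A/2)))) := by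
    intro A hA
    obtain ⟨S, h1, h2⟩ := aux_count (ι := ι) p hp (M * (2:ℝ) ^ (-(τ * p))) A _ hA (hθ A hA)
    refine ⟨S, h1, h2.trans ?_⟩
    have h1 : 1 ≤ 1 + C * (A ^ n)⁻¹ * Real.exp (-A/2) := by
      have : 0 ≤ C * (A ^ n)⁻¹ * Real.exp (-A/2) := by positivity
      linarith
    rw [mul_add, Real.exp_add]
    refine mul_le_mul ?_ ?_ (by positivity) (by positivity)
    · apply Real.exp_le_exp.2; apply le_of_eq; ring
    · rw [← Real.rpow_natCast, Real.rpow_def_of_pos (by linarith), mul_comm]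
      gcongr
      exact Real.log_nonneg h1
  split_ifs with h0
  · have hA1 : 1 ≤ 2 * (1 + p * τ * Real.log 2) := by
      have : 0 ≤ p * τ * Real.log 2 := by positivity
      linarith
    obtain ⟨S, h1, h2⟩ := hfin (2 * (1 + p * τ * Real.log 2)) (by linarith)
    refine ⟨S, h1, h2.trans ?_⟩
    set A := 2 * (1 + p * τ * Real.log 2) with hA
    apply Real.exp_le_exp.2
    have hb1 : (2:ℝ) ^ (-(τ * p)) * 2 ^ (τ * ε) = (2:ℝ) ^ (-(τ * (p - ε))) := by
      rw [← Real.rpow_add (by norm_num)]; ring_nf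
    have hb2 : (1:ℝ) ≤ 2 ^ (τ * ε) := Real.one_le_rpow (by norm_num) (by positivity)
    have hpos : (0:ℝ) < (2:ℝ) ^ (-(τ * p)) := by positivity
    have hlog : Real.log (1 + C * (A ^ n)⁻¹ * Real.exp (-A/2)) ≤ C * (2:ℝ) ^ (-(τ * p)) := by
      have hx : 0 ≤ C * (A ^ n)⁻¹ * Real.exp (-A/2) := by positivity
      have := Real.log_le_sub_one_of_pos (x := 1 + C * (A ^ n)⁻¹ * Real.exp (-A/2)) (by linarith)
      have e1 : (A^n)⁻¹ ≤ 1 := inv_le_one_of_one_le₀ (one_le_pow₀ hA1)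
      have e2 : Real.exp (-A/2) ≤ 2 ^ (-(τ * p)) := by
        rw [Real.rpow_def_of_pos (by norm_num)]
        apply Real.exp_le_exp.2
        rw [hA]; nlinarith
      calc _ ≤ C * (A ^ n)⁻¹ * Real.exp (-A/2) := by linarith
        _ ≤ C * 1 * 2 ^ (-(τ * p)) := by gcongr
        _ = _ := by ring
    have hAb : A ≤ (2 + 2 * p / (ε * Real.log 2)) * 2 ^ (τ * ε) := by
      have := hlin τ h0
      have h5 : p * τ * Real.log 2 ≤ p * (2 ^ (τ * ε) / (ε * Real.log 2)) := by
        calc p * τ * Real.log 2 ≤ p * τ * 1 := by gcongr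
          _ ≤ _ := by rw [mul_one]; gcongr
      calc A ≤ 2 * 2 ^ (τ * ε) + 2 * (p * (2 ^ (τ * ε) / (ε * Real.log 2))) := by rw [hA]; linarith
        _ = _ := by ring
    calc M * (A * (2:ℝ) ^ (-(τ * p)) + Real.log (1 + C * (A ^ n)⁻¹ * Real.exp (-A/2)))
        ≤ M * ((2 + 2 * p / (ε * Real.log 2)) * 2 ^ (τ * ε) * (2:ℝ) ^ (-(τ * p)) + C * (2:ℝ) ^ (-(τ * p))) := by
          gcongr
      _ ≤ M * ((2 + 2 * p / (ε * Real.log 2)) * 2 ^ (τ * ε) * (2:ℝ) ^ (-(τ * p)) + C * ((2:ℝ) ^ (-(τ * p)) * 2 ^ (τ * ε))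
            + (p * n) / (ε * Real.log 2) * ((2:ℝ) ^ (-(τ * p)) * 2 ^ (τ * ε))) := by
          refine mul_le_mul_of_nonneg_left ?_ hM0
          have : C * (2:ℝ) ^ (-(τ * p)) ≤ C * ((2:ℝ) ^ (-(τ * p)) * 2 ^ (τ * ε)) := by
            gcongr; nlinarith
          have h6 : 0 ≤ (p * n) / (ε * Real.log 2) * ((2:ℝ) ^ (-(τ * p)) * 2 ^ (τ * ε)) := by positivity
          linarith
      _ = _ := by rw [← hb1]; ring
  · push Not at h0
    obtain ⟨S, h1, h2⟩ := hfin (2 ^ (τ * p)) (by positivity)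
    refine ⟨S, h1, h2.trans ?_⟩
    apply Real.exp_le_exp.2
    have ht : (2:ℝ) ^ (τ * p) ≤ 1 := Real.rpow_le_one_of_one_le_of_nonpos (by norm_num) (by nlinarith)
    set A := (2:ℝ) ^ (τ * p) with hA
    have hA0 : 0 < A := by positivity
    have e1 : A * (2:ℝ) ^ (-(τ * p)) = 1 := by
      rw [hA, ← Real.rpow_add (by norm_num)]; simp
    have e2 : 1 ≤ (A ^ n)⁻¹ := (one_le_inv₀ (by positivity)).2 (pow_le_one₀ hA0.le ht)
    have hb2 : (1:ℝ) ≤ 2 ^ (-(τ * ε)) := Real.one_le_rpow (by norm_num) (by nlinarith)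
    have e3 : Real.log (1 + C * (A ^ n)⁻¹ * Real.exp (-A/2)) ≤ C + n * p * (-τ) := by
      have : 1 + C * (A ^ n)⁻¹ * Real.exp (-A/2) ≤ (1 + C) * (A ^ n)⁻¹ := by
        have : Real.exp (-A/2) ≤ 1 := Real.exp_le_one_iff.2 (by linarith)
        calc _ ≤ (A ^ n)⁻¹ + C * (A ^ n)⁻¹ * 1 := by gcongr
          _ = _ := by ring
      calc _ ≤ Real.log ((1 + C) * (A ^ n)⁻¹) := Real.log_le_log (by positivity) this
        _ = Real.log (1 + C) + n * (p * (-τ) * Real.log 2) := by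
          rw [Real.log_mul (by positivity) (by positivity), Real.log_inv, Real.log_pow, hA, Real.log_rpow (by norm_num)]
          ring
        _ ≤ C + n * (p * (-τ) * 1) := by
          have h5 := Real.log_le_sub_one_of_pos (x := 1 + C) (by linarith)
          have h7 : 0 ≤ p * (-τ) := by nlinarith
          gcongr
          linarith
        _ = _ := by ring
    have h8 := hlin (-τ) (by linarith)
    have h9 : (2:ℝ) ^ (-τ * ε) = 2 ^ (-(τ * ε)) := by ring_nf
    rw [h9] at h8
    rw [e1]
    calc _ ≤ M * (1 + (C + n * p * (2 ^ (-(τ * ε)) / (ε * Real.log 2)))) := by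
          gcongr
          refine e3.trans ?_
          gcongr
      _ ≤ M * ((2 + 2 * p / (ε * Real.log 2) + C) * 2 ^ (-(τ * ε)) + n * p * (2 ^ (-(τ * ε)) / (ε * Real.log 2))) := by
          rw [← add_assoc]
          gcongr
          have : 0 ≤ 2 * p / (ε * Real.log 2) := by positivity
          nlinarith
      _ = _ := by ring

/-- truncation towards zero -/
lemma aux_trunc (x : ℝ) : ∃ z : ℤ, |(z:ℝ)| ≤ |x| ∧ |x - z| ≤ |x| ∧ |x - z| ≤ 1 := by
  rcases le_total 0 x with h | h
  · refine ⟨⌊x⌋, ?_⟩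
    have h1 := Int.floor_le x
    have h2 := Int.lt_floor_add_one x
    have h3 : (0:ℝ) ≤ (⌊x⌋:ℝ) := by exact_mod_cast Int.floor_nonneg.2 h
    rw [abs_of_nonneg h3, abs_of_nonneg h, abs_of_nonneg (by linarith)]
    refine ⟨?_, ?_, ?_⟩ <;> linarith
  · refine ⟨⌈x⌉, ?_⟩
    have h1 := Int.le_ceil x
    have h2 := Int.ceil_lt_add_one x
    have h3 : (⌈x⌉:ℝ) ≤ 0 := by exact_mod_cast Int.ceil_le.2 (by simpa using h)
    rw [abs_of_nonpos h3, abs_of_nonpos h, abs_of_nonpos (by linarith)]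
    refine ⟨?_, ?_, ?_⟩ <;> linarith

lemma aux_ctrunc (w : ℂ) : ∃ z : Bool → ℤ, (∀ b, |(z b:ℝ)| ≤ ‖w‖) ∧
    ‖w - ((z true : ℂ) + (z false : ℂ) * Complex.I)‖ ≤ 2 * min ‖w‖ 1 := by
  obtain ⟨a, a1, a2, a3⟩ := aux_trunc w.re
  obtain ⟨b, b1, b2, b3⟩ := aux_trunc w.im
  have hr := Complex.abs_re_le_norm w
  have hi := Complex.abs_im_le_norm w
  refine ⟨fun t => if t then a else b, ?_, ?_⟩
  · intro t; cases t <;> simp <;> linarith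
  · refine (Complex.norm_le_abs_re_add_abs_im _).trans ?_
    simp
    rcases min_cases ‖w‖ 1 with ⟨h, _⟩ | ⟨h, _⟩ <;> rw [h] <;> linarith

lemma aux_pt (w e : ℝ) (p1 p2 t : ℝ) (hp1 : 0 < p1) (h : p1 < p2) (hw : 0 ≤ w) (he : 0 ≤ e)
    (hle : e ≤ 2 * min w 1) :
    ((2:ℝ)^t * e) ^ p2 ≤ 2 ^ (p2 + t * (p2 - p1)) * ((2:ℝ)^t * w) ^ p1 := by
  have hm : 0 ≤ min w 1 := le_min hw zero_le_one
  have h1 : e ^ p2 ≤ 2 ^ p2 * w ^ p1 := by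
    calc e ^ p2 ≤ (2 * min w 1) ^ p2 := Real.rpow_le_rpow he hle (by linarith)
      _ = 2 ^ p2 * (min w 1) ^ p2 := Real.mul_rpow (by norm_num) hm
      _ ≤ 2 ^ p2 * (min w 1) ^ p1 := by
          gcongr 2 ^ p2 * ?_
          exact Real.rpow_le_rpow_of_exponent_ge' hm (min_le_right _ _) hp1.le h.le
      _ ≤ _ := by
          gcongr 2 ^ p2 * ?_
          exact Real.rpow_le_rpow hm (min_le_left _ _) hp1.le
  rw [Real.mul_rpow (by positivity) he, Real.mul_rpow (by positivity) hw, ← Real.rpow_mul (by norm_num),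
    ← Real.rpow_mul (by norm_num)]
  calc _ ≤ 2 ^ (t * p2) * (2 ^ p2 * w ^ p1) := by gcongr
    _ = (2 ^ (t * p2) * 2 ^ p2) * w ^ p1 := by ring
    _ = (2 ^ (p2 + t * (p2 - p1)) * 2 ^ (t * p1)) * w ^ p1 := by
        rw [← Real.rpow_add (by norm_num), ← Real.rpow_add (by norm_num)]; ring_nf
    _ = _ := by ring

lemma aux_two_rpow (t : ℝ) : (2 : ℝ≥0∞) ^ t = ENNReal.ofReal ((2:ℝ) ^ t) := by
  rw [← ENNReal.ofReal_rpow_of_pos (by norm_num)]; simp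

lemma aux_X (a p : ℝ) (hp : 0 < p) (X : ℝ≥0∞) (h : (2:ℝ≥0∞) ^ a * X ^ (1/p) ≤ 1) :
    X ≤ (2:ℝ≥0∞) ^ (-(a * p)) := by
  have h1 : X ^ (1/p) ≤ (2:ℝ≥0∞) ^ (-a) := by
    calc X ^ (1/p) = (2:ℝ≥0∞) ^ (-a) * ((2:ℝ≥0∞) ^ a * X ^ (1/p)) := by
          rw [← mul_assoc, ← ENNReal.rpow_add _ _ (by norm_num) (by norm_num)]; simp
      _ ≤ (2:ℝ≥0∞) ^ (-a) * 1 := by gcongr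
      _ = _ := mul_one _
  have := ENNReal.rpow_le_rpow h1 hp.le
  rw [← ENNReal.rpow_mul, ← ENNReal.rpow_mul, one_div, inv_mul_cancel₀ hp.ne', ENNReal.rpow_one] at this
  convert this using 2; ring

lemma aux_cubes (d j : ℕ) (u p : ℝ) (lam : (Fin d → ℤ) → ℂ) (a : ℝ) (hp : 0 < p)
    (h : (2 : ℝ≥0∞) ^ a * mNorm d u p j lam ≤ 1) (ν : ℕ) (k : Fin d → ℤ) (hν : ν ≤ j)
    (hk : inUnitCube d ν k) :
    (∑' m : {m : Fin d → ℤ // cubeSub d j ν m k}, ((‖lam m.1‖₊ : ℝ≥0∞)) ^ p) ≤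
      (2:ℝ≥0∞) ^ (-((a + (d : ℝ) * ((j : ℝ) - (ν : ℝ)) * (1 / u - 1 / p)) * p)) := by
  apply aux_X _ _ hp
  rw [ENNReal.rpow_add _ _ (by norm_num) (by norm_num), mul_assoc]
  refine le_trans ?_ h
  gcongr
  exact le_iSup (fun νk : {νk : ℕ × (Fin d → ℤ) // νk.1 ≤ j ∧ inUnitCube d νk.1 νk.2} => 
    (2 : ℝ≥0∞) ^ ((d : ℝ) * ((j : ℝ) - (νk.1.1 : ℝ)) * (1 / u - 1 / p)) *
      (∑' m : {m : Fin d → ℤ // cubeSub d j νk.1.1 m νk.1.2},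
        ((‖lam m.1‖₊ : ℝ≥0∞)) ^ p) ^ (1 / p)) ⟨(ν, k), hν, hk⟩

lemma aux_sub (d j ν : ℕ) (m k : Fin d → ℤ) (hν : ν ≤ j) (hk : inUnitCube d ν k)
    (h : cubeSub d j ν m k) : inUnitCube d j m := by
  intro i
  obtain ⟨h1, h2⟩ := h i
  obtain ⟨h3, h4⟩ := hk i
  constructor
  · exact le_trans (by positivity) h1
  · refine lt_of_lt_of_le h2 ?_
    calc (k i + 1) * 2 ^ (j - ν) ≤ 2 ^ ν * 2 ^ (j - ν) := by gcongr; omega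
      _ = 2 ^ j := by rw [← pow_add]; congr 1; omega

/-- index set at level j -/
noncomputable def lvlIdx (d j : ℕ) : Finset (Fin d → ℤ) := Fintype.piFinset (fun _ => Finset.Ico (0:ℤ) (2^j))

lemma mem_lvlIdx (d j : ℕ) (m : Fin d → ℤ) : m ∈ lvlIdx d j ↔ inUnitCube d j m := by
  simp [lvlIdx, inUnitCube, Fintype.mem_piFinset]

lemma card_lvlIdx (d j : ℕ) : ((lvlIdx d j).card : ℝ) = 2 ^ ((j:ℝ) * d) := by
  have : (lvlIdx d j).card = 2 ^ (j * d) := by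
    have h : ((2:ℤ)^j).toNat = 2^j := by
      have : ((2:ℤ)^j) = ((2^j : ℕ) : ℤ) := by push_cast; rfl
      rw [this, Int.toNat_natCast]
    simp [lvlIdx, pow_mul, h]
  rw [this]; push_cast; rw [← Real.rpow_natCast]; push_cast; rfl

open Classical in
/-- decoding -/
noncomputable def lvlDec (d j : ℕ) (t : ℝ) (z : ({m // m ∈ lvlIdx d j} × Bool) → ℤ) : (Fin d → ℤ) → ℂ :=
  fun m => if h : m ∈ lvlIdx d j then
    ((2:ℝ) ^ t : ℝ) * ((z (⟨m, h⟩, true) : ℂ) + (z (⟨m, h⟩, false) : ℂ) * Complex.I) else 0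

lemma aux_level (d : ℕ) (σ1 σ2 u1 p1 u2 p2 : ℝ) 
    (hp1 : 0 < p1) (hp1u1 : p1 ≤ u1) (hp2 : 0 < p2) (hp2u2 : p2 ≤ u2)
    (h1 : p1 < p2) (h2 : p1 / u1 < p2 / u2) (j : ℕ) (τ : ℝ) (f : (Fin d → ℤ) → ℂ) 
    (hf : (2 : ℝ≥0∞) ^ ((j : ℝ) * (σ1 - d / u1)) * mNorm d u1 p1 j f ≤ 1) :
    ∃ z : ({m // m ∈ lvlIdx d j} × Bool) → ℤ, 
      (∑ i, |(z i : ℝ)| ^ p1 ≤ (2 * 2 ^ ((j:ℝ) * d)) * (2:ℝ) ^ (-(τ * p1))) ∧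
      (2 : ℝ≥0∞) ^ ((j : ℝ) * (σ2 - d / u2)) * mNorm d u2 p2 j (f - lvlDec d j (τ - j * σ1) z) ≤
        (2 : ℝ≥0∞) ^ (1 + τ * (1 - p1 / p2) - j * (σ1 - σ2)) := by
  set t := τ - j * σ1 with ht
  have hu1 : 0 < u1 := by linarith
  have hu2 : 0 < u2 := by linarith
  choose z hz1 hz2 using fun m => aux_ctrunc (f m / ((2:ℝ) ^ t : ℝ))
  have h2t : (0:ℝ) < 2 ^ t := by positivity
  have hw : ∀ m, ‖f m / (((2:ℝ) ^ t : ℝ) : ℂ)‖ = ‖f m‖ / 2 ^ t := by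
    intro m
    rw [norm_div, Complex.norm_real, Real.norm_of_nonneg h2t.le]
  have hfin : ∀ m, m ∈ lvlIdx d j ↔ cubeSub d j 0 m 0 := by
    intro m; rw [mem_lvlIdx]; simp [inUnitCube, cubeSub]
  have hcub := aux_cubes d j u1 p1 f _ hp1 hf
  refine ⟨fun x => z x.1.1 x.2, ?_, ?_⟩
  · have e0 := hcub 0 0 (Nat.zero_le _) (by intro i; simp)
    have e1 : (∑' m : {m : Fin d → ℤ // cubeSub d j 0 m 0}, ((‖f m.1‖₊ : ℝ≥0∞)) ^ p1) =
        ENNReal.ofReal (∑ m ∈ lvlIdx d j, ‖f m‖ ^ p1) := by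
      rw [ENNReal.ofReal_sum_of_nonneg (fun _ _ => by positivity)]
      rw [← Finset.tsum_subtype (lvlIdx d j) (fun m => ENNReal.ofReal (‖f m‖ ^ p1))]
      rw [← Equiv.tsum_eq (Equiv.subtypeEquivRight hfin)]
      apply tsum_congr
      intro m
      simp only [Equiv.subtypeEquivRight_apply_coe]
      rw [← ENNReal.ofReal_rpow_of_nonneg (norm_nonneg _) hp1.le, ofReal_norm]; rfl
    rw [e1, aux_two_rpow, ENNReal.ofReal_le_ofReal_iff (by positivity)] at e0
    have e2 : ∀ m b, |(z m b : ℝ)| ^ p1 ≤ ‖f m‖ ^ p1 * 2 ^ (-(t * p1)) := by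
      intro m b
      calc _ ≤ (‖f m‖ / 2 ^ t) ^ p1 := by
            apply Real.rpow_le_rpow (abs_nonneg _) _ hp1.le
            rw [← hw]; exact hz1 m b
        _ = _ := by
            rw [Real.div_rpow (norm_nonneg _) h2t.le, ← Real.rpow_mul (by norm_num), Real.rpow_neg (by norm_num)]
            rfl
    rw [Fintype.sum_prod_type]
    calc ∑ x : {m // m ∈ lvlIdx d j}, ∑ b : Bool, |(z x.1 b : ℝ)| ^ p1 
        ≤ ∑ x : {m // m ∈ lvlIdx d j}, 2 * (‖f x.1‖ ^ p1 * 2 ^ (-(t * p1))) := by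
          apply Finset.sum_le_sum
          intro x _
          rw [Fintype.sum_bool]
          linarith [e2 x.1 true, e2 x.1 false]
      _ = 2 * 2 ^ (-(t * p1)) * ∑ m ∈ lvlIdx d j, ‖f m‖ ^ p1 := by
          rw [Finset.sum_coe_sort (lvlIdx d j) (fun m => 2 * (‖f m‖ ^ p1 * 2 ^ (-(t * p1)))), Finset.mul_sum]
          apply Finset.sum_congr rfl; intros; ring
      _ ≤ 2 * 2 ^ (-(t * p1)) * 2 ^ (-((↑j * (σ1 - ↑d / u1) + ↑d * (↑j - ((0:ℕ):ℝ)) * (1 / u1 - 1 / p1)) * p1)) := by gcongr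
      _ = _ := by
          rw [mul_assoc, mul_assoc 2 ((2:ℝ) ^ ((j:ℝ) * d)), ← Real.rpow_add (by norm_num), ← Real.rpow_add (by norm_num)]
          congr 2
          rw [ht]; push_cast; field_simp; ring
  · rw [mNorm, ENNReal.mul_iSup]
    apply iSup_le
    rintro ⟨⟨ν, k⟩, hν, hk⟩
    simp only at hν hk ⊢
    have hc := hcub ν k hν hk
    have hY : (∑' m : {m : Fin d → ℤ // cubeSub d j ν m k},
        ((‖(f - lvlDec d j t (fun x => z x.1.1 x.2)) m.1‖₊ : ℝ≥0∞)) ^ p2) ≤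
        (2:ℝ≥0∞) ^ (p2 + t * (p2 - p1)) * 
          ∑' m : {m : Fin d → ℤ // cubeSub d j ν m k}, ((‖f m.1‖₊ : ℝ≥0∞)) ^ p1 := by
      rw [← ENNReal.tsum_mul_left]
      apply ENNReal.tsum_le_tsum
      rintro ⟨m, hm⟩
      have hmI : m ∈ lvlIdx d j := (mem_lvlIdx d j m).2 (aux_sub d j ν m k hν hk hm)
      set e := f m / (((2:ℝ) ^ t : ℝ) : ℂ) - ((z m true : ℂ) + (z m false : ℂ) * Complex.I) with he
      have hE : (f - lvlDec d j t (fun x => z x.1.1 x.2)) m = (((2:ℝ) ^ t : ℝ) : ℂ) * e := by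
        simp only [Pi.sub_apply, lvlDec, hmI, dif_pos, he]
        have : (((2:ℝ) ^ t : ℝ) : ℂ) ≠ 0 := by exact_mod_cast h2t.ne'
        field_simp
      have hF : f m = (((2:ℝ) ^ t : ℝ) : ℂ) * (f m / (((2:ℝ) ^ t : ℝ) : ℂ)) := by
        have : (((2:ℝ) ^ t : ℝ) : ℂ) ≠ 0 := by exact_mod_cast h2t.ne'
        field_simp
      have key := aux_pt _ _ p1 p2 t hp1 h1 (norm_nonneg _) (norm_nonneg _) (hz2 m)
      have n1 : ‖(f - lvlDec d j t (fun x => z x.1.1 x.2)) m‖ = 2 ^ t * ‖e‖ := by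
        rw [hE, norm_mul, Complex.norm_real, Real.norm_of_nonneg h2t.le]
      have n2 : ‖f m‖ = 2 ^ t * ‖f m / (((2:ℝ) ^ t : ℝ) : ℂ)‖ := by
        rw [hw]; field_simp
      rw [← he, ← n1, ← n2] at key
      have := ENNReal.ofReal_le_ofReal key
      rw [ENNReal.ofReal_mul (by positivity), ← ENNReal.ofReal_rpow_of_nonneg (norm_nonneg _) hp1.le,
        ← ENNReal.ofReal_rpow_of_nonneg (norm_nonneg _) hp2.le, ofReal_norm, ofReal_norm, ← aux_two_rpow] at this
      exact this
    calc _ ≤ (2 : ℝ≥0∞) ^ ((j : ℝ) * (σ2 - d / u2)) * ((2 : ℝ≥0∞) ^ ((d : ℝ) * ((j : ℝ) - (ν : ℝ)) * (1 / u2 - 1 / p2)) *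
          ((2:ℝ≥0∞) ^ (p2 + t * (p2 - p1)) * (2:ℝ≥0∞) ^ (-((j * (σ1 - d / u1) + (d : ℝ) * ((j : ℝ) - (ν : ℝ)) * (1 / u1 - 1 / p1)) * p1))) ^ (1/p2)) := by
          gcongr
          exact hY.trans (by gcongr)
      _ = (2:ℝ≥0∞) ^ (1 + τ * (1 - p1 / p2) - j * (σ1 - σ2) + d * ν * ((p1/u1 - p2/u2) / p2)) := by
          rw [← ENNReal.rpow_add _ _ (by norm_num) (by norm_num), ← ENNReal.rpow_mul,
            ← ENNReal.rpow_add _ _ (by norm_num) (by norm_num), ← ENNReal.rpow_add _ _ (by norm_num) (by norm_num)]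
          congr 1
          rw [ht]; field_simp; ring
      _ ≤ _ := by
          apply ENNReal.rpow_le_rpow_of_exponent_le (by norm_num)
          have : (p1/u1 - p2/u2) / p2 ≤ 0 := div_nonpos_of_nonpos_of_nonneg (by linarith) hp2.le
          have h3 : (0:ℝ) ≤ d * ν := by positivity
          nlinarith

lemma aux_sum (η : ℝ) (hη : 0 < η) : ∃ C : ℝ, 0 < C ∧ ∀ J : ℝ,
    Summable (fun j : ℕ => (2:ℝ) ^ (-(η * |(j:ℝ) - J|))) ∧
    ∑' j : ℕ, (2:ℝ) ^ (-(η * |(j:ℝ) - J|)) ≤ C := by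
  set g : ℤ → ℝ := fun i => (2:ℝ) ^ η * (2:ℝ) ^ (-(η * |(i:ℝ)|)) with hg
  have hr : Summable (fun n : ℕ => (2:ℝ) ^ (-(η * (n:ℝ)))) := by
    have : ∀ n : ℕ, (2:ℝ) ^ (-(η * (n:ℝ))) = ((2:ℝ) ^ (-η)) ^ n := by
      intro n
      rw [← Real.rpow_natCast, ← Real.rpow_mul (by norm_num)]; ring_nf
    simp_rw [this]
    apply summable_geometric_of_lt_one (by positivity)
    exact Real.rpow_lt_one_of_one_lt_of_neg (by norm_num) (by linarith)
  have hgs : Summable g := by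
    apply Summable.mul_left
    apply Summable.of_nat_of_neg
    · simpa using hr
    · simpa using hr
  have hg0 : ∀ i, 0 ≤ g i := fun i => by positivity
  refine ⟨∑' i, g i + 1, by have : 0 ≤ ∑' i, g i := tsum_nonneg hg0; linarith, fun J => ?_⟩
  have hinj : Function.Injective (fun j : ℕ => (j:ℤ) - ⌊J⌋) := by
    intro a b h; simpa using h
  have hle : ∀ j : ℕ, (2:ℝ) ^ (-(η * |(j:ℝ) - J|)) ≤ g ((j:ℤ) - ⌊J⌋) := by
    intro j
    rw [hg]
    simp only
    rw [← Real.rpow_add (by norm_num)]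
    apply Real.rpow_le_rpow_of_exponent_le (by norm_num)
    push_cast
    have h1 : |(j:ℝ) - ⌊J⌋| ≤ |(j:ℝ) - J| + 1 := by
      have e : (j:ℝ) - ⌊J⌋ = ((j:ℝ) - J) + (J - ⌊J⌋) := by ring
      rw [e]
      refine (abs_add_le _ _).trans ?_
      have h2 := Int.floor_le J
      have h3 := Int.lt_floor_add_one J
      rw [abs_of_nonneg (a := J - ⌊J⌋) (by linarith)]
      linarith
    nlinarith
  have hs2 : Summable (fun j : ℕ => g ((j:ℤ) - ⌊J⌋)) := hgs.comp_injective hinj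
  have hs1 := Summable.of_nonneg_of_le (fun j : ℕ => by positivity) hle hs2
  refine ⟨hs1, ?_⟩
  have h1 := hs1.tsum_le_tsum hle hs2
  have h2 := tsum_comp_le_tsum_of_inj hgs hg0 hinj
  have h3 : ∑' j : ℕ, g ((j:ℤ) - ⌊J⌋) ≤ ∑' i, g i := h2
  linarith

lemma aux_cover {X : Type*} [AddCommGroup X] (G : ℕ → Finset X) (B : ℕ → ℝ) (b : ℝ)
    (hcard : ∀ j, ((G j).card : ℝ) ≤ Real.exp (B j)) (h0 : ∀ j, (0:X) ∈ G j)
    (J1 : ℕ) (hJ1 : ∀ j, J1 ≤ j → B j < Real.log 2) (hsum : ∑ j ∈ Finset.range J1, B j ≤ b) :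
    ∃ S : Finset (ℕ → X), (S.card : ℝ) ≤ Real.exp b ∧ ∀ g : ℕ → X, (∀ j, g j ∈ G j) → g ∈ S := by
  classical
  refine ⟨(Fintype.piFinset (fun j : Fin J1 => G j)).image
    (fun w j => if h : j < J1 then w ⟨j, h⟩ else 0), ?_, ?_⟩
  · calc _ ≤ ((Fintype.piFinset (fun j : Fin J1 => G j)).card : ℝ) := by
          exact_mod_cast Finset.card_image_le
      _ = ∏ j : Fin J1, ((G j).card : ℝ) := by
          rw [Fintype.card_piFinset]; push_cast; rfl
      _ ≤ ∏ j : Fin J1, Real.exp (B j) := 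
          Finset.prod_le_prod (fun _ _ => by positivity) (fun j _ => hcard j)
      _ = Real.exp (∑ j ∈ Finset.range J1, B j) := by
          rw [Real.exp_sum, Finset.prod_range]
      _ ≤ _ := Real.exp_le_exp.2 hsum
  · intro g hg
    rw [Finset.mem_image]
    refine ⟨fun j => g j, Fintype.mem_piFinset.2 (fun j => hg j), ?_⟩
    funext j
    split_ifs with h
    · rfl
    · push Not at h
      have h1 : ((G j).card : ℝ) < 2 := by
        refine (hcard j).trans_lt ?_
        have := Real.exp_lt_exp.2 (hJ1 j h)
        rwa [Real.exp_log (by norm_num)] at this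
      have h2 : (G j).card ≤ 1 := by
        have : (G j).card < 2 := by exact_mod_cast h1
        omega
      exact Finset.card_le_one.1 h2 _ (h0 j) _ (hg j)

lemma aux_source (d : ℕ) (σ u p : ℝ) (q : ℝ≥0∞) (hq : 0 < q) (x : ℕ → (Fin d → ℤ) → ℂ)
    (h : nNorm d σ u p q x ≤ 1) (j : ℕ) :
    (2 : ℝ≥0∞) ^ ((j : ℝ) * (σ - d / u)) * mNorm d u p j (x j) ≤ 1 := by
  unfold nNorm at h
  split_ifs at h with hqi
  · exact (le_iSup (fun j : ℕ => (2 : ℝ≥0∞) ^ ((j : ℝ) * (σ - d / u)) * mNorm d u p j (x j)) j).trans h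
  · have hq' : 0 < q.toReal := ENNReal.toReal_pos hq.ne' hqi
    have h1 := ENNReal.rpow_le_rpow h hq'.le
    rw [← ENNReal.rpow_mul, one_div, inv_mul_cancel₀ hq'.ne', ENNReal.rpow_one, ENNReal.one_rpow] at h1
    have h2 := (ENNReal.le_tsum (f := fun j : ℕ => ((2 : ℝ≥0∞) ^ ((j : ℝ) * (σ - d / u)) * mNorm d u p j (x j)) ^ q.toReal) j).trans h1
    have h3 := ENNReal.rpow_le_rpow h2 (by positivity : 0 ≤ q.toReal⁻¹)
    rwa [← ENNReal.rpow_mul, mul_inv_cancel₀ hq'.ne', ENNReal.rpow_one, ENNReal.one_rpow] at h3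

lemma aux_target (q : ℝ≥0∞) (hq : 0 < q) (η : ℝ) (hη : 0 < η) : ∃ D : ℝ, 0 < D ∧
    ∀ (d : ℕ) (σ u p J a : ℝ) (x : ℕ → (Fin d → ℤ) → ℂ),
    (∀ j : ℕ, (2 : ℝ≥0∞) ^ ((j : ℝ) * (σ - d / u)) * mNorm d u p j (x j) ≤
      (2 : ℝ≥0∞) ^ (a - η * |(j:ℝ) - J|)) →
    nNorm d σ u p q x ≤ ENNReal.ofReal (D * 2 ^ a) := by
  by_cases hqi : q = ∞
  · refine ⟨1, one_pos, fun d σ u p J a x h => ?_⟩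
    rw [nNorm, if_pos hqi]
    apply iSup_le
    intro j
    rw [one_mul, ← aux_two_rpow]
    refine (h j).trans (ENNReal.rpow_le_rpow_of_exponent_le (by norm_num) ?_)
    have : 0 ≤ η * |(j:ℝ) - J| := by positivity
    linarith
  · have hq' : 0 < q.toReal := ENNReal.toReal_pos hq.ne' hqi
    obtain ⟨C, hC, hs⟩ := aux_sum (η * q.toReal) (by positivity)
    refine ⟨C ^ (1 / q.toReal), by positivity, fun d σ u p J a x h => ?_⟩
    rw [nNorm, if_neg hqi]
    have h1 : ∀ j : ℕ, ((2 : ℝ≥0∞) ^ ((j : ℝ) * (σ - d / u)) * mNorm d u p j (x j)) ^ q.toReal ≤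
        (2 : ℝ≥0∞) ^ (a * q.toReal) * ENNReal.ofReal ((2:ℝ) ^ (-(η * q.toReal * |(j:ℝ) - J|))) := by
      intro j
      refine (ENNReal.rpow_le_rpow (h j) hq'.le).trans (le_of_eq ?_)
      rw [← aux_two_rpow, ← ENNReal.rpow_mul, ← ENNReal.rpow_add _ _ (by norm_num) (by norm_num)]
      ring_nf
    have h2 : ∑' j : ℕ, ((2 : ℝ≥0∞) ^ ((j : ℝ) * (σ - d / u)) * mNorm d u p j (x j)) ^ q.toReal ≤
        (2 : ℝ≥0∞) ^ (a * q.toReal) * ENNReal.ofReal C := by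
      refine (ENNReal.tsum_le_tsum h1).trans ?_
      rw [ENNReal.tsum_mul_left, ← ENNReal.ofReal_tsum_of_nonneg (fun _ => by positivity) (hs J).1]
      gcongr
      exact (hs J).2
    refine (ENNReal.rpow_le_rpow h2 (by positivity : 0 ≤ 1 / q.toReal)).trans (le_of_eq ?_)
    rw [ENNReal.mul_rpow_of_nonneg _ _ (by positivity), ← ENNReal.rpow_mul, ENNReal.ofReal_rpow_of_pos hC,
      ENNReal.ofReal_mul (by positivity), mul_comm, mul_assoc, mul_one_div_cancel hq'.ne', mul_one, aux_two_rpow]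

lemma aux_entropy {Λ : Type*} [AddCommGroup Λ] (N₁ N₂ : Λ → ℝ≥0∞) (k : ℕ) (hk : 0 < k) (ε : ℝ≥0∞)
    (hε : 0 < ε) (S : Finset Λ) (hS : (S.card : ℝ) ≤ Real.exp (k / 4))
    (h : ∀ x, N₁ x ≤ 1 → ∃ c ∈ S, N₂ (x - c) ≤ ε) : entropyNumber N₁ N₂ k ≤ ε := by
  apply sInf_le
  refine ⟨hε, ?_⟩
  have hcard : S.card ≤ 2 ^ (k - 1) := by
    obtain ⟨n, rfl⟩ : ∃ n, k = n + 1 := ⟨k - 1, by omega⟩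
    simp only [Nat.add_sub_cancel]
    rcases Nat.eq_zero_or_pos n with rfl | hn
    · have : (S.card : ℝ) < 2 := by
        refine hS.trans_lt ?_
        rw [← Real.lt_log_iff_exp_lt (by norm_num)]
        have := Real.log_two_gt_d9
        norm_num; linarith
      have : S.card < 2 := by exact_mod_cast this
      simpa using (by omega : S.card ≤ 1)
    · have : (S.card : ℝ) ≤ 2 ^ n := by
        refine hS.trans ?_
        rw [← Real.le_log_iff_exp_le (by positivity), Real.log_pow]
        have := Real.log_two_gt_d9
        have h1 : (1:ℝ) ≤ n := by exact_mod_cast hn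
        push_cast
        nlinarith
      exact_mod_cast this
  refine ⟨fun i => if h : (i:ℕ) < S.card then (S.equivFin.symm ⟨i, h⟩ : Λ) else 0, ?_⟩
  intro x hx
  obtain ⟨c, hc, hcx⟩ := h x hx
  refine ⟨⟨S.equivFin ⟨c, hc⟩, lt_of_lt_of_le (Fin.is_lt _) hcard⟩, ?_⟩
  simpa using hcx

set_option maxHeartbeats 1000000 in
theorem stmt5 (d : ℕ) (hd : 1 ≤ d) (σ1 σ2 u1 p1 u2 p2 : ℝ) (q1 q2 : ℝ≥0∞)
    (hq1 : 0 < q1) (hq2 : 0 < q2)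
    (hp1 : 0 < p1) (hp1u1 : p1 ≤ u1) (hp2 : 0 < p2) (hp2u2 : p2 ≤ u2)
    (h1 : p1 < p2) (h2 : p1 / u1 < p2 / u2)
    (h3 : (σ1 - σ2) / d > 1 / p1 - 1 / p2) :
    ∃ c : ℝ, 0 < c ∧ ∀ k : ℕ, 0 < k →
      entropyNumber (nNorm d σ1 u1 p1 q1) (nNorm d σ2 u2 p2 q2) k ≤
        ENNReal.ofReal (c * (k : ℝ) ^ (-(σ1 - σ2) / d)) := by
  classical
  set s := σ1 - σ2 with hs
  have hd0 : (0:ℝ) < d := by exact_mod_cast hd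
  set κ := 1 - p1 / p2 with hκ
  have hκ0 : 0 < κ := by
    have : p1 / p2 < 1 := (div_lt_one hp2).2 h1
    linarith
  have hsκ : d / p1 * κ < s := by
    have e : 1 / p1 - 1 / p2 = κ / p1 := by rw [hκ]; field_simp
    rw [e, gt_iff_lt, lt_div_iff₀ hd0] at h3
    calc d / p1 * κ = κ / p1 * d := by ring
      _ < s := h3
  obtain ⟨α, hα1, hα2⟩ : ∃ α, d / p1 < α ∧ α < s / κ :=
    exists_between (by rwa [lt_div_iff₀ hκ0])
  obtain ⟨β, hβ⟩ := exists_gt (s / κ)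
  have hα0 : 0 < α := lt_trans (by positivity) hα1
  have hβ0 : 0 < β := by linarith
  have hα3 : d < α * p1 := by rwa [div_lt_iff₀ hp1] at hα1
  have hα4 : α * κ < s := by rwa [lt_div_iff₀ hκ0] at hα2
  have hβ4 : s < β * κ := by rwa [div_lt_iff₀ hκ0] at hβ
  obtain ⟨ε, hε0, hε⟩ : ∃ ε, 0 < ε ∧ ε < min (p1 - d / α) (d / β) := by
    apply exists_between
    apply lt_min
    · rw [sub_pos, div_lt_iff₀ hα0]; linarith
    · positivity
  have hε1 : d < α * (p1 - ε) := by
    have := hε.trans_le (min_le_left _ _)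
    have : d / α < p1 - ε := by linarith
    rw [div_lt_iff₀ hα0] at this; linarith
  have hε2 : β * ε < d := by
    have := hε.trans_le (min_le_right _ _)
    rw [lt_div_iff₀ hβ0] at this; linarith
  obtain ⟨η, hη0, hη⟩ : ∃ η, 0 < η ∧ η < min (min (α * (p1 - ε) - d) (d - β * ε)) (min (s - α * κ) (β * κ - s)) := by
    apply exists_between
    simp only [lt_min_iff]
    refine ⟨⟨?_, ?_⟩, ?_, ?_⟩ <;> linarith
  simp only [lt_min_iff] at hη
  obtain ⟨⟨hη1, hη2⟩, hη3, hη4⟩ := hη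
  obtain ⟨C, hC, hphi⟩ := aux_phi p1 hp1 ε hε0
  obtain ⟨Cs, hCs, hsum⟩ := aux_sum η hη0
  obtain ⟨D, hD, htar⟩ := aux_target q2 hq2 η hη0
  set C0 := 2 * C * Cs with hC0
  have hC00 : 0 < C0 := by positivity
  refine ⟨D * 2 * (4 * C0) ^ (s / d), by positivity, fun k hk => ?_⟩
  have hk0 : (0:ℝ) < k := by exact_mod_cast hk
  set J := Real.logb 2 (k / (4 * C0)) / d with hJ
  have hJd : (2:ℝ) ^ (J * d) = k / (4 * C0) := by
    rw [hJ, div_mul_cancel₀ _ hd0.ne', Real.rpow_logb (by norm_num) (by norm_num) (by positivity)]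
  have hJs : (2:ℝ) ^ (-(J * s)) = (4 * C0) ^ (s / d) * (k:ℝ) ^ (-s / d) := by
    have : -(J * s) = (J * d) * (-s / d) := by field_simp
    rw [this, Real.rpow_mul (by norm_num), hJd, Real.div_rpow (by positivity) (by positivity), neg_div,
      Real.rpow_neg (x := 4 * C0) (by positivity)]
    rw [div_inv_eq_mul]; ring
  set τ : ℕ → ℝ := fun j => if J ≤ j then α * (j - J) else β * (j - J) with hτ
  choose S hS1 hS2 using fun j : ℕ => hphi ({m // m ∈ lvlIdx d j} × Bool) (2 * 2 ^ ((j:ℝ) * d)) (τ j)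
    (by rw [Fintype.card_prod, Fintype.card_coe, Fintype.card_bool]; push_cast; rw [card_lvlIdx]; linarith)
  set B : ℕ → ℝ := fun j => 2 * C * 2 ^ (J * d) * 2 ^ (-(η * |(j:ℝ) - J|)) with hB
  set G : ℕ → Finset ((Fin d → ℤ) → ℂ) := fun j => (S j).image (lvlDec d j (τ j - j * σ1)) with hG
  have hGc : ∀ j, ((G j).card : ℝ) ≤ Real.exp (B j) := by
    intro j
    have e1 : ((G j).card : ℝ) ≤ ((S j).card : ℝ) := by exact_mod_cast Finset.card_image_le
    refine (e1.trans (hS2 j)).trans (Real.exp_le_exp.2 ?_)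
    have e2 : (2:ℝ) ^ ((j:ℝ) * d) * (if 0 ≤ τ j then (2:ℝ) ^ (-(τ j * (p1 - ε))) else 2 ^ (-(τ j * ε))) ≤
        2 ^ (J * d) * 2 ^ (-(η * |(j:ℝ) - J|)) := by
      by_cases hj : J ≤ j
      · have ht : τ j = α * (j - J) := by simp [hτ, hj]
        have hj0 : 0 ≤ (j:ℝ) - J := by linarith
        rw [if_pos (by rw [ht]; positivity), ht, abs_of_nonneg hj0, ← Real.rpow_add (by norm_num), ← Real.rpow_add (by norm_num)]
        apply Real.rpow_le_rpow_of_exponent_le (by norm_num)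
        linarith [mul_nonneg hj0 (by linarith : 0 ≤ α * (p1 - ε) - d - η)]
      · have ht : τ j = β * (j - J) := by simp [hτ, hj]
        push Not at hj
        have hj0 : (j:ℝ) - J < 0 := by linarith
        rw [if_neg (by rw [ht]; exact not_le.2 (mul_neg_of_pos_of_neg hβ0 hj0)), ht, abs_of_neg hj0, ← Real.rpow_add (by norm_num), ← Real.rpow_add (by norm_num)]
        apply Real.rpow_le_rpow_of_exponent_le (by norm_num)
        linarith [mul_nonneg (neg_nonneg.2 hj0.le) (by linarith : 0 ≤ d - β * ε - η)]
    calc _ = 2 * C * ((2:ℝ) ^ ((j:ℝ) * d) * (if 0 ≤ τ j then (2:ℝ) ^ (-(τ j * (p1 - ε))) else 2 ^ (-(τ j * ε)))) := by ring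
      _ ≤ 2 * C * (2 ^ (J * d) * 2 ^ (-(η * |(j:ℝ) - J|))) := by gcongr
      _ = B j := by rw [hB]; ring
  have hG0 : ∀ j, (0 : (Fin d → ℤ) → ℂ) ∈ G j := by
    intro j
    rw [hG]
    refine Finset.mem_image.2 ⟨0, hS1 j 0 ?_, ?_⟩
    · simp only [Pi.zero_apply, Int.cast_zero, abs_zero, Real.zero_rpow hp1.ne', Finset.sum_const_zero]
      positivity
    · funext m; simp [lvlDec]
  have hBs : Summable B := (hsum J).1.mul_left _
  have hB0 : ∀ j, 0 ≤ B j := fun j => by positivity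
  have hBt : ∑' j, B j ≤ k / 4 := by
    rw [hB, tsum_mul_left]
    calc _ ≤ 2 * C * 2 ^ (J * d) * Cs := by gcongr; exact (hsum J).2
      _ = k / 4 := by rw [hJd, hC0]; field_simp
  obtain ⟨J1, hJ1⟩ : ∃ J1 : ℕ, ∀ j, J1 ≤ j → B j < Real.log 2 := by
    have := hBs.tendsto_atTop_zero.eventually_lt_const (Real.log_pos (by norm_num : (1:ℝ) < 2))
    exact Filter.eventually_atTop.1 this
  obtain ⟨F, hF1, hF2⟩ := aux_cover G B (k/4) hGc hG0 J1 hJ1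
    ((hBs.sum_le_tsum _ (fun j _ => hB0 j)).trans hBt)
  have hfinal : D * 2 * (4 * C0) ^ (s / d) * (k:ℝ) ^ (-s / d) = D * 2 ^ (1 - J * s) := by
    rw [sub_eq_add_neg, Real.rpow_add (by norm_num), hJs, Real.rpow_one]; ring
  rw [hfinal]
  apply aux_entropy _ _ k hk _ (by rw [ENNReal.ofReal_pos]; positivity) F hF1
  intro x hx
  choose z hz1 hz2 using fun j => aux_level d σ1 σ2 u1 p1 u2 p2 hp1 hp1u1 hp2 hp2u2 h1 h2 j (τ j) (x j)
    (aux_source d σ1 u1 p1 q1 hq1 x hx j)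
  refine ⟨fun j => lvlDec d j (τ j - j * σ1) (z j), hF2 _ (fun j => Finset.mem_image_of_mem _ (hS1 j _ (hz1 j))), ?_⟩
  apply htar d σ2 u2 p2 J
  intro j
  refine (hz2 j).trans (ENNReal.rpow_le_rpow_of_exponent_le (by norm_num) ?_)
  rw [← hκ, ← hs]
  by_cases hj : J ≤ j
  · have ht : τ j = α * (j - J) := by simp [hτ, hj]
    have hj0 : 0 ≤ (j:ℝ) - J := by linarith
    rw [ht, abs_of_nonneg hj0]
    linarith [mul_nonneg hj0 (by linarith : 0 ≤ s - α * κ - η)]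
  · have ht : τ j = β * (j - J) := by simp [hτ, hj]
    push Not at hj
    have hj0 : (j:ℝ) - J < 0 := by linarith
    rw [ht, abs_of_neg hj0]
    linarith [mul_nonneg (neg_nonneg.2 hj0.le) (by linarith : 0 ≤ β * κ - s - η)]
end
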